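/- There exist infinitely many integers n such that there is a family ℬ = {B_1, …, B_n} of n open subsets of ℝ² with: the intersection of every subfamily of ℬ either empty or path-connected; f_3(ℬ) = 0; f_2(ℬ) = C(n−1, 2) + (n²−4n+3)/3; all but one of the sets B_i contractible; and every nonempty intersection of two or of three of the sets contractible. -/

import Mathlib

/-- `fNum A k` is `f_k(𝒜)`: the number of subsets `σ` of the index set with
`|σ| = k+1` such that `⋂ i ∈ σ, A i` is nonempty. -/
noncomputable def fNum {α : Type*} {n : ℕ} (A : Fin n → Set α) (k : ℕ) : ℕ :=
  Nat.card {σ : Finset (Fin n) // σ.card = k + 1 ∧ (⋂ i ∈ σ, A i).Nonempty}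


/-! ### Topological lemmas -/

abbrev Pl := EuclideanSpace ℝ (Fin 2)

theorem contr_of_retr {Y Z : Set Pl} (hYZ : Y ⊆ Z) (hZ : ContractibleSpace Z) (r : Pl → Pl)
    (hr : ContinuousOn r Z) (hrY : ∀ p ∈ Z, r p ∈ Y)
    (hseg : ∀ p ∈ Y, ∀ s : ℝ, 0 ≤ s → s ≤ 1 → p + s • (r p - p) ∈ Y) :
    ContractibleSpace Y := by
  rw [contractible_iff_id_nullhomotopic]
  let f : C(Y, Z) := ⟨fun p => ⟨p.1, hYZ p.2⟩, by fun_prop⟩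
  let g : C(Z, Y) := ⟨fun p => ⟨r p.1, hrY p.1 p.2⟩,
    Continuous.subtype_mk (continuousOn_iff_continuous_domRestrict.1 hr) _⟩
  have h1 : (g.comp f).Nullhomotopic := by
    have h := (id_nullhomotopic Z)
    have h2 := (h.comp_right g).comp_left f
    simpa using h2
  obtain ⟨y, hy⟩ := h1
  refine ⟨y, ContinuousMap.Homotopic.trans ?_ hy⟩
  have hc : Continuous fun p : Y => r p.1 :=
    (continuousOn_iff_continuous_domRestrict.1 (hr.mono hYZ))
  refine ⟨⟨⟨fun x => ⟨x.2.1 + (x.1 : ℝ) • (r x.2.1 - x.2.1),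
    hseg _ x.2.2 _ x.1.2.1 x.1.2.2⟩, ?_⟩, ?_, ?_⟩⟩
  · apply Continuous.subtype_mk
    have : Continuous fun x : unitInterval × Y => r x.2.1 := hc.comp continuous_snd
    have h2 : Continuous fun x : unitInterval × Y => (x.2.1 : Pl) :=
      continuous_subtype_val.comp continuous_snd
    have h3 : Continuous fun x : unitInterval × Y => (x.1 : ℝ) :=
      continuous_subtype_val.comp continuous_fst
    exact h2.add (h3.smul (this.sub h2))
  · intro x; simp
  · intro x; ext; simp [f, g]; rfl

theorem contr_union {S T : Set Pl} (b : Pl) (hS : Convex ℝ S) (hT : Convex ℝ T)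
    (hbS : b ∈ S) (hbT : b ∈ T) : StarConvex ℝ b (S ∪ T) :=
  (hS.starConvex hbS).union (hT.starConvex hbT)

/-! ### Coordinates -/

noncomputable def Y (q a : ℤ) (p : Pl) : ℝ :=
  (if a % 3 = 0 then p 0 else if a % 3 = 1 then p 1 else 3 * q + 1 / 2 - p 0 - p 1) - ((a / 3 : ℤ) : ℝ)

theorem Y_add3 (q a : ℤ) (p : Pl) : Y q (a + 3) p = Y q a p - 1 := by
  unfold Y
  have h1 : (a + 3) % 3 = a % 3 := by omega
  have h2 : (a + 3) / 3 = a / 3 + 1 := by omega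
  rw [h1, h2]; push_cast; ring

theorem Y_add3m (q a m : ℤ) (p : Pl) : Y q (a + 3 * m) p = Y q a p - m := by
  unfold Y
  have h1 : (a + 3 * m) % 3 = a % 3 := by omega
  have h2 : (a + 3 * m) / 3 = a / 3 + m := by omega
  rw [h1, h2]; push_cast; ring

theorem Y_sum (q a : ℤ) (p : Pl) :
    Y q a p + Y q (a + 1) p + Y q (a + 2) p = 3 * q + 1 / 2 - a := by
  unfold Y
  have ha : a = 3 * (a / 3) + a % 3 := by omega
  have h3 : a % 3 = 0 ∨ a % 3 = 1 ∨ a % 3 = 2 := by omega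
  rcases h3 with h | h | h
  · have h1 : (a + 1) % 3 = 1 := by omega
    have h2 : (a + 2) % 3 = 2 := by omega
    have h4 : (a + 1) / 3 = a / 3 := by omega
    have h5 : (a + 2) / 3 = a / 3 := by omega
    rw [h, h1, h2, h4, h5]
    rw [h] at ha
    have : (a : ℝ) = 3 * ((a / 3 : ℤ) : ℝ) := by exact_mod_cast (by omega : a = 3 * (a / 3))
    norm_num; linarith
  · have h1 : (a + 1) % 3 = 2 := by omega
    have h2 : (a + 2) % 3 = 0 := by omega
    have h4 : (a + 1) / 3 = a / 3 := by omega
    have h5 : (a + 2) / 3 = a / 3 + 1 := by omega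
    rw [h, h1, h2, h4, h5]
    rw [h] at ha
    have : (a : ℝ) = 3 * ((a / 3 : ℤ) : ℝ) + 1 := by exact_mod_cast (by omega : a = 3 * (a / 3) + 1)
    norm_num; linarith
  · have h1 : (a + 1) % 3 = 0 := by omega
    have h2 : (a + 2) % 3 = 1 := by omega
    have h4 : (a + 1) / 3 = a / 3 + 1 := by omega
    have h5 : (a + 2) / 3 = a / 3 + 1 := by omega
    rw [h, h1, h2, h4, h5]
    rw [h] at ha
    have : (a : ℝ) = 3 * ((a / 3 : ℤ) : ℝ) + 2 := by exact_mod_cast (by omega : a = 3 * (a / 3) + 2)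
    norm_num; linarith

theorem Y_comb (q a : ℤ) (p p' : Pl) (s t : ℝ) (h : s + t = 1) :
    Y q a (s • p + t • p') = s * Y q a p + t * Y q a p' := by
  unfold Y
  obtain rfl : t = 1 - s := by linarith
  split_ifs <;> simp <;> ring

theorem Y_seg (q a : ℤ) (p p' : Pl) (s : ℝ) :
    Y q a (p + s • (p' - p)) = Y q a p + s * (Y q a p' - Y q a p) := by
  have : p + s • (p' - p) = (1 - s) • p + s • p' := by
    rw [smul_sub, sub_smul, one_smul]; abel
  rw [this, Y_comb _ _ _ _ _ _ (by ring)]; ring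

theorem Y_cont (q a : ℤ) : Continuous (Y q a) := by
  unfold Y
  split_ifs <;> fun_prop

/-- the point with prescribed consecutive coordinates -/
noncomputable def Pt (q a : ℤ) (s t : ℝ) : Pl :=
  if a % 3 = 0 then !₂[s + ((a / 3 : ℤ) : ℝ), t + ((a / 3 : ℤ) : ℝ)]
  else if a % 3 = 1 then !₂[3 * q + 1 / 2 - a - s - t + ((a / 3 : ℤ) : ℝ) + 1, s + ((a / 3 : ℤ) : ℝ)]
  else !₂[t + ((a / 3 : ℤ) : ℝ) + 1, 3 * q + 1 / 2 - a - s - t + ((a / 3 : ℤ) : ℝ) + 1]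

theorem Y_Pt (q a : ℤ) (s t : ℝ) : Y q a (Pt q a s t) = s := by
  unfold Y Pt
  have h3 : a % 3 = 0 ∨ a % 3 = 1 ∨ a % 3 = 2 := by omega
  rcases h3 with h | h | h
  · simp [h]
  · simp [h]
  · simp only [h]
    have : (a : ℝ) = 3 * ((a / 3 : ℤ) : ℝ) + 2 := by exact_mod_cast (by omega : a = 3 * (a / 3) + 2)
    norm_num; linarith

theorem Y_Pt1 (q a : ℤ) (s t : ℝ) : Y q (a + 1) (Pt q a s t) = t := by
  unfold Y Pt
  have h3 : a % 3 = 0 ∨ a % 3 = 1 ∨ a % 3 = 2 := by omega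
  rcases h3 with h | h | h
  · have h1 : (a + 1) % 3 = 1 := by omega
    have h4 : (a + 1) / 3 = a / 3 := by omega
    simp [h, h1, h4]
  · have h1 : (a + 1) % 3 = 2 := by omega
    have h4 : (a + 1) / 3 = a / 3 := by omega
    simp only [h, h1, h4]
    have : (a : ℝ) = 3 * ((a / 3 : ℤ) : ℝ) + 1 := by exact_mod_cast (by omega : a = 3 * (a / 3) + 1)
    norm_num; linarith
  · have h1 : (a + 1) % 3 = 0 := by omega
    have h4 : (a + 1) / 3 = a / 3 + 1 := by omega
    simp only [h, h1, h4]
    norm_num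

theorem Pt_cont (q a : ℤ) : Continuous fun x : ℝ × ℝ => Pt q a x.1 x.2 := by
  unfold Pt
  split_ifs <;>
  · refine (PiLp.continuous_toLp 2 _).comp ?_
    refine continuous_pi fun i => ?_
    fin_cases i <;> simp <;> fun_prop

theorem Pt_Y (q a : ℤ) (p : Pl) : Pt q a (Y q a p) (Y q (a + 1) p) = p := by
  unfold Y Pt
  have h3 : a % 3 = 0 ∨ a % 3 = 1 ∨ a % 3 = 2 := by omega
  rcases h3 with h | h | h
  · have h1 : (a + 1) % 3 = 1 := by omega
    have h4 : (a + 1) / 3 = a / 3 := by omega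
    ext i; fin_cases i <;> simp [h, h1, h4]
  · have h1 : (a + 1) % 3 = 2 := by omega
    have h4 : (a + 1) / 3 = a / 3 := by omega
    have : (a : ℝ) = 3 * ((a / 3 : ℤ) : ℝ) + 1 := by exact_mod_cast (by omega : a = 3 * (a / 3) + 1)
    ext i; fin_cases i <;> simp [h, h1, h4]; linarith
  · have h1 : (a + 1) % 3 = 0 := by omega
    have h4 : (a + 1) / 3 = a / 3 + 1 := by omega
    have : (a : ℝ) = 3 * ((a / 3 : ℤ) : ℝ) + 2 := by exact_mod_cast (by omega : a = 3 * (a / 3) + 2)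
    ext i; fin_cases i
    · simp [h, h1, h4]; ring
    · simp [h, h1, h4]; linarith

/-- gaps -/
noncomputable def gp (q a : ℤ) (p : Pl) : ℝ := Y q a p - Y q (a + 1) p + q

theorem gp_add3 (q a : ℤ) (p : Pl) : gp q (a + 3) p = gp q a p := by
  unfold gp
  rw [show a + 3 + 1 = (a + 1) + 3 by ring, Y_add3, Y_add3]; ring

theorem gp_add3m (q a m : ℤ) (p : Pl) : gp q (a + 3 * m) p = gp q a p := by
  unfold gp
  rw [show a + 3 * m + 1 = (a + 1) + 3 * m by ring, Y_add3m, Y_add3m]; ring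

theorem gp_sum (q a : ℤ) (p : Pl) : gp q a p + gp q (a + 1) p + gp q (a + 2) p = 3 * q + 1 := by
  unfold gp
  rw [show a + 2 + 1 = a + 3 by ring, show a + 1 + 1 = a + 2 by ring, Y_add3]; ring

theorem gp_cont (q a : ℤ) : Continuous (gp q a) := by
  unfold gp
  have := Y_cont q a
  have := Y_cont q (a + 1)
  fun_prop

theorem gp_comb (q a : ℤ) (p p' : Pl) (s t : ℝ) (h : s + t = 1) :
    gp q a (s • p + t • p') = s * gp q a p + t * gp q a p' := by
  unfold gp
  rw [Y_comb _ _ _ _ _ _ h, Y_comb _ _ _ _ _ _ h]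
  obtain rfl : t = 1 - s := by linarith
  ring

theorem gp_mod (q a : ℤ) (p : Pl) : gp q a p = gp q (a % 3) p := by
  conv_lhs => rw [show a = a % 3 + 3 * (a / 3) by omega]
  exact gp_add3m _ _ _ _

/-! ### Convexity helpers -/

/-- affine functionals -/
def Aff (f : Pl → ℝ) : Prop := ∀ p p' : Pl, ∀ s t : ℝ, s + t = 1 →
  f (s • p + t • p') = s * f p + t * f p'

theorem Aff.lt {f g : Pl → ℝ} (hf : Aff f) (hg : Aff g) : Convex ℝ {p | f p < g p} := by
  intro p hp p' hp' s t hs ht hst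
  simp only [Set.mem_ofPred_eq] at *
  rw [hf _ _ _ _ hst, hg _ _ _ _ hst]
  rcases hs.eq_or_lt with rfl | hs
  · have : t = 1 := by linarith
    subst this; linarith
  · have := mul_lt_mul_of_pos_left hp hs
    have := mul_le_mul_of_nonneg_left hp'.le ht
    linarith

theorem Aff.const (c : ℝ) : Aff fun _ => c := by
  intro p p' s t h
  rw [← add_mul, h, one_mul]

theorem Aff.add {f g : Pl → ℝ} (hf : Aff f) (hg : Aff g) : Aff fun p => f p + g p := by
  intro p p' s t h
  simp only [hf _ _ _ _ h, hg _ _ _ _ h]; ring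

theorem Aff.sub {f g : Pl → ℝ} (hf : Aff f) (hg : Aff g) : Aff fun p => f p - g p := by
  intro p p' s t h
  simp only [hf _ _ _ _ h, hg _ _ _ _ h]; ring

theorem Aff.mul {f : Pl → ℝ} (hf : Aff f) (c : ℝ) : Aff fun p => c * f p := by
  intro p p' s t h
  simp only [hf _ _ _ _ h]; ring

theorem Aff.abs {f : Pl → ℝ} (hf : Aff f) (c : ℝ) : Convex ℝ {p | |f p| < c} := by
  have : {p | |f p| < c} = {p | (fun _ => -c) p < f p} ∩ {p | f p < (fun _ => c) p} := by
    ext p; simp [abs_lt]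
  rw [this]
  exact ((Aff.const _).lt hf).inter (hf.lt (Aff.const _))

theorem Y_aff (q a : ℤ) : Aff (Y q a) := fun p p' s t h => Y_comb q a p p' s t h
theorem gp_aff (q a : ℤ) : Aff (gp q a) := fun p p' s t h => gp_comb q a p p' s t h


/-! ### The sets -/

theorem per3_aux {P : ℤ → Prop} (h : ∀ a, P (a + 3) ↔ P a) (a m : ℤ) : P (a + 3 * m) ↔ P a := by
  induction m using Int.induction_on with
  | zero => simp
  | succ i ih => rw [show a + 3 * ((i : ℤ) + 1) = (a + 3 * i) + 3 by ring, h, ih]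
  | pred i ih => rw [← h, show a + 3 * (-(i : ℤ) - 1) + 3 = a + 3 * -i by ring, ih]

theorem forall3 {P : ℤ → Prop} (h : ∀ a, P (a + 3) ↔ P a) (k : ℤ) :
    (∀ a, P a) ↔ P k ∧ P (k + 1) ∧ P (k + 2) := by
  constructor
  · intro H; exact ⟨H _, H _, H _⟩
  · rintro ⟨h0, h1, h2⟩ a
    have h3 : (a - k) % 3 = 0 ∨ (a - k) % 3 = 1 ∨ (a - k) % 3 = 2 := by omega
    rcases h3 with h3 | h3 | h3
    · rw [show a = k + 3 * ((a - k) / 3) by omega, per3_aux h]; exact h0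
    · rw [show a = (k + 1) + 3 * ((a - k) / 3) by omega, per3_aux h]; exact h1
    · rw [show a = (k + 2) + 3 * ((a - k) / 3) by omega, per3_aux h]; exact h2

theorem exists3 {P : ℤ → Prop} (h : ∀ a, P (a + 3) ↔ P a) (k : ℤ) :
    (∃ a, P a) ↔ P k ∨ P (k + 1) ∨ P (k + 2) := by
  constructor
  · rintro ⟨a, ha⟩
    have h3 : (a - k) % 3 = 0 ∨ (a - k) % 3 = 1 ∨ (a - k) % 3 = 2 := by omega
    rcases h3 with h3 | h3 | h3
    · rw [show a = k + 3 * ((a - k) / 3) by omega, per3_aux h] at ha; exact Or.inl ha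
    · rw [show a = (k + 1) + 3 * ((a - k) / 3) by omega, per3_aux h] at ha; exact Or.inr (Or.inl ha)
    · rw [show a = (k + 2) + 3 * ((a - k) / 3) by omega, per3_aux h] at ha; exact Or.inr (Or.inr ha)
  · rintro (h | h | h) <;> exact ⟨_, h⟩

def near (z : ℝ) : Prop := ∃ i : ℤ, |z - i| ≤ 11 / 50

theorem near_add (z : ℝ) (m : ℤ) : near (z - m) ↔ near z := by
  constructor
  · rintro ⟨i, hi⟩
    exact ⟨i + m, by push_cast; rwa [show z - (i + m : ℝ) = z - m - i by ring]⟩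
  · rintro ⟨i, hi⟩
    exact ⟨i - m, by push_cast; rwa [show z - m - (i - m : ℝ) = z - i by ring]⟩

theorem near_int {z : ℝ} (h : near z) (j : ℤ) (hj : |z - j| < 39 / 50) : |z - j| ≤ 11 / 50 := by
  obtain ⟨i, hi⟩ := h
  rcases lt_trichotomy i j with h | h | h
  · exfalso
    have h1 : (i : ℝ) + 1 ≤ j := by exact_mod_cast h
    rw [abs_lt] at hj; rw [abs_le] at hi; linarith
  · subst h; exact hi
  · exfalso
    have h1 : (j : ℝ) + 1 ≤ i := by exact_mod_cast h
    rw [abs_lt] at hj; rw [abs_le] at hi; linarith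

theorem near_half {z : ℝ} (h : near z) (c : ℤ) : z - c - 1 / 2 ≤ - (7 / 25) ∨ 7 / 25 ≤ z - c - 1 / 2 := by
  obtain ⟨i, hi⟩ := h
  rw [abs_le] at hi
  rcases le_or_gt i c with h | h
  · left
    have h1 : (i : ℝ) ≤ c := by exact_mod_cast h
    linarith
  · right
    have h1 : (c : ℝ) + 1 ≤ i := by exact_mod_cast h
    linarith

theorem near_of {z : ℝ} (j : ℤ) (h1 : (j : ℝ) - 11 / 50 ≤ z) (h2 : z ≤ j + 11 / 50) : near z :=
  ⟨j, by rw [abs_le]; constructor <;> linarith⟩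

theorem near_iff (z : ℝ) : near z ↔ ‖(z : UnitAddCircle)‖ ≤ 11 / 50 := by
  rw [UnitAddCircle.norm_eq]
  constructor
  · rintro ⟨i, hi⟩
    exact (round_le z i).trans hi
  · intro h; exact ⟨_, h⟩

theorem near_closed : IsClosed {z : ℝ | near z} := by
  simp only [near_iff]
  exact isClosed_le (continuous_norm.comp (AddCircle.continuous_mk' 1)) continuous_const

def SA (q : ℤ) : Set Pl := {p | ∀ a, 0 < gp q a p}

noncomputable def cut (q a : ℤ) : ℝ := if a = 2 ∨ a = 6 * q + 1 then 0 else 3 / 5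

def arm (q a : ℤ) : Set Pl := {p | p ∈ SA q ∧ |Y q a p| < 11 / 50 ∧ cut q a < gp q (a + 1) p}

def SB (q k : ℤ) : Set Pl := arm q k ∪ arm q (k + (3 * q + 1))

def notcone (q : ℤ) (p : Pl) : Prop :=
  13 / 10 * (3 * gp q 1 p - (3 * q + 1)) < 2 * (3 * q + 1) * |gp q 0 p - gp q 2 p|

def SX (q : ℤ) : Set Pl := {p | p ∈ SA q ∧ (∃ a, gp q a p < 3 / 5) ∧ notcone q p}

def SK (q : ℤ) : Set Pl :=
  {p | (∀ a, near (Y q a p) ∧ 1 / 2 ≤ gp q a p) ∨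
    ∃ a, near (Y q a p) ∧ near (Y q (a + 1) p) ∧ 1 / 2 ≤ gp q a p ∧ gp q a p ≤ 3 / 5}

theorem near_Y3 (q a : ℤ) (p : Pl) : near (Y q (a + 3) p) ↔ near (Y q a p) := by
  rw [Y_add3]; exact_mod_cast near_add (Y q a p) 1

theorem SA_iff (q k : ℤ) (p : Pl) :
    p ∈ SA q ↔ 0 < gp q k p ∧ 0 < gp q (k + 1) p ∧ 0 < gp q (k + 2) p :=
  forall3 (P := fun a => 0 < gp q a p) (fun a => by simp only [gp_add3]) k

theorem ex_gp_iff (q k : ℤ) (p : Pl) :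
    (∃ a, gp q a p < 3 / 5) ↔ gp q k p < 3 / 5 ∨ gp q (k + 1) p < 3 / 5 ∨ gp q (k + 2) p < 3 / 5 :=
  exists3 (P := fun a => gp q a p < 3 / 5) (fun a => by simp only [gp_add3]) k

theorem SK_iff (q k : ℤ) (p : Pl) :
    p ∈ SK q ↔ ((near (Y q k p) ∧ near (Y q (k + 1) p) ∧ near (Y q (k + 2) p) ∧
      1 / 2 ≤ gp q k p ∧ 1 / 2 ≤ gp q (k + 1) p ∧ 1 / 2 ≤ gp q (k + 2) p) ∨
      (near (Y q k p) ∧ near (Y q (k + 1) p) ∧ 1 / 2 ≤ gp q k p ∧ gp q k p ≤ 3 / 5) ∨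
      (near (Y q (k + 1) p) ∧ near (Y q (k + 2) p) ∧ 1 / 2 ≤ gp q (k + 1) p ∧ gp q (k + 1) p ≤ 3 / 5) ∨
      (near (Y q (k + 2) p) ∧ near (Y q k p) ∧ 1 / 2 ≤ gp q (k + 2) p ∧ gp q (k + 2) p ≤ 3 / 5)) := by
  have h1 := forall3 (P := fun a => near (Y q a p) ∧ 1 / 2 ≤ gp q a p)
    (fun a => by simp only [gp_add3, near_Y3]) k
  have h2 := exists3 (P := fun a => near (Y q a p) ∧ near (Y q (a + 1) p) ∧ 1 / 2 ≤ gp q a p ∧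
    gp q a p ≤ 3 / 5)
    (fun a => by rw [show a + 3 + 1 = a + 1 + 3 by ring]; simp only [gp_add3, near_Y3]) k
  have h3 : near (Y q (k + 2 + 1) p) ↔ near (Y q k p) := by
    rw [show k + 2 + 1 = k + 3 by ring, near_Y3]
  have h4 : k + 1 + 1 = k + 2 := by ring
  simp only [h4, h3] at h2
  show (_ ∨ _) ↔ _
  rw [h1, h2]
  constructor
  · rintro (⟨⟨a1, a2⟩, ⟨b1, b2⟩, ⟨c1, c2⟩⟩ | h)
    · exact Or.inl ⟨a1, b1, c1, a2, b2, c2⟩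
    · exact Or.inr h
  · rintro (⟨a1, b1, c1, a2, b2, c2⟩ | h)
    · exact Or.inl ⟨⟨a1, a2⟩, ⟨b1, b2⟩, ⟨c1, c2⟩⟩
    · exact Or.inr h

/-- the coordinates in terms of two of them -/
theorem chart (q a m : ℤ) (p : Pl) :
    Y q (a + 1) p = Y q (a + 1 + 3 * m) p + m ∧
    Y q (a + 2) p = 3 * q + 1 / 2 - a - m - Y q a p - Y q (a + 1 + 3 * m) p ∧
    gp q a p = q - m + Y q a p - Y q (a + 1 + 3 * m) p ∧
    gp q (a + 1) p = a + 2 * m - 2 * q - 1 / 2 + Y q a p + 2 * Y q (a + 1 + 3 * m) p ∧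
    gp q (a + 2) p = 4 * q + 3 / 2 - a - m - 2 * Y q a p - Y q (a + 1 + 3 * m) p := by
  have h1 := Y_add3m q (a + 1) m p
  have h2 := Y_sum q a p
  have h3 := Y_add3 q a p
  unfold gp
  rw [show a + 2 + 1 = a + 3 by ring, show a + 1 + 1 = a + 2 by ring, h3, h1]
  refine ⟨?_, ?_, ?_, ?_, ?_⟩ <;> linarith

theorem cut_cases (q a : ℤ) : ((a = 2 ∨ a = 6 * q + 1) ∧ cut q a = 0) ∨
    (a ≠ 2 ∧ a ≠ 6 * q + 1 ∧ cut q a = 3 / 5) := by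
  unfold cut
  by_cases h : a = 2 ∨ a = 6 * q + 1
  · left; exact ⟨h, if_pos h⟩
  · right; rw [if_neg h]; push Not at h; exact ⟨h.1, h.2, rfl⟩

/-! openness -/

theorem SA_open (q : ℤ) : IsOpen (SA q) := by
  have : SA q = {p | 0 < gp q 0 p} ∩ ({p | 0 < gp q (0 + 1) p} ∩ {p | 0 < gp q (0 + 2) p}) := by
    ext p; exact SA_iff q 0 p
  rw [this]
  exact (isOpen_lt continuous_const (gp_cont _ _)).inter
    ((isOpen_lt continuous_const (gp_cont _ _)).inter (isOpen_lt continuous_const (gp_cont _ _)))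

theorem arm_open (q a : ℤ) : IsOpen (arm q a) :=
  (SA_open q).inter ((isOpen_lt (Y_cont q a).abs continuous_const).inter
    (isOpen_lt continuous_const (gp_cont _ _)))

theorem SB_open (q k : ℤ) : IsOpen (SB q k) := (arm_open _ _).union (arm_open _ _)

theorem SX_open (q : ℤ) : IsOpen (SX q) := by
  refine (SA_open q).inter (IsOpen.inter ?_ ?_)
  · have : {p | ∃ a, gp q a p < 3 / 5} = ⋃ a, {p | gp q a p < 3 / 5} := by ext; simp
    change IsOpen {p | ∃ a, gp q a p < 3 / 5}
    rw [this]
    exact isOpen_iUnion fun a => isOpen_lt (gp_cont _ _) continuous_const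
  · exact isOpen_lt (continuous_const.mul ((continuous_const.mul (gp_cont q 1)).sub continuous_const))
      (continuous_const.mul ((gp_cont q 0).sub (gp_cont q 2)).abs)

theorem SK_closed (q : ℤ) : IsClosed (SK q) := by
  have hn : ∀ a, IsClosed {p | near (Y q a p)} := fun a => near_closed.preimage (Y_cont q a)
  have hl : ∀ a, IsClosed {p | 1 / 2 ≤ gp q a p} := fun a => isClosed_le continuous_const (gp_cont q a)
  have hu : ∀ a, IsClosed {p | gp q a p ≤ 3 / 5} := fun a => isClosed_le (gp_cont q a) continuous_const
  have : SK q = {p | _} := Set.ext fun p => SK_iff q 0 p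
  rw [this]
  refine IsClosed.union ((hn _).inter ((hn _).inter ((hn _).inter ((hl _).inter ((hl _).inter (hl _))))))
    (IsClosed.union ?_ (IsClosed.union ?_ ?_)) <;>
  exact (hn _).inter ((hn _).inter ((hl _).inter (hu _)))

/-! convexity -/

theorem SA_convex (q : ℤ) : Convex ℝ (SA q) := by
  have : SA q = {p | 0 < gp q 0 p} ∩ ({p | 0 < gp q (0 + 1) p} ∩ {p | 0 < gp q (0 + 2) p}) := by
    ext p; exact SA_iff q 0 p
  rw [this]
  exact ((Aff.const 0).lt (gp_aff _ _)).inter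
    (((Aff.const 0).lt (gp_aff _ _)).inter ((Aff.const 0).lt (gp_aff _ _)))

theorem arm_convex (q a : ℤ) : Convex ℝ (arm q a) :=
  (SA_convex q).inter (((Y_aff q a).abs _).inter ((Aff.const _).lt (gp_aff _ _)))

set_option linter.unusedVariables false

/-! ### Pairs -/

def Valid (q a m : ℤ) : Prop := m ≤ q - 1 ∧ 2 * q + 1 ≤ a + 2 * m ∧ a + m ≤ 4 * q + 1

def lab (q a j : ℤ) : Prop := a = j ∨ a = j + (3 * q + 1)

structure PRep (q j k a m : ℤ) : Prop where
  val : Valid q a m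
  a1 : 1 ≤ a
  a2 : a ≤ 6 * q + 2
  b1 : 1 ≤ a + 1 + 3 * m
  b2 : a + 1 + 3 * m ≤ 6 * q + 2
  lb : (lab q a j ∧ lab q (a + 1 + 3 * m) k) ∨ (lab q a k ∧ lab q (a + 1 + 3 * m) j)

theorem same_class {q a m : ℤ} {p : Pl} (h1 : p ∈ arm q a) (h2 : p ∈ arm q (a + 3 * m)) : m = 0 := by
  have h3 := h1.2.1
  have h4 := h2.2.1
  rw [Y_add3m, abs_lt] at h4
  rw [abs_lt] at h3
  by_contra hm
  rcases lt_or_gt_of_ne hm with h | h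
  · have : (m : ℝ) ≤ -1 := by exact_mod_cast (by omega : m ≤ -1)
    linarith
  · have : (1 : ℝ) ≤ m := by exact_mod_cast (by omega : 1 ≤ m)
    linarith

theorem pair_val {q a m : ℤ} {p : Pl} (hq : 40 ≤ q) (h1 : p ∈ arm q a) (h2 : p ∈ arm q (a + 1 + 3 * m))
    (a1 : 1 ≤ a) (a2 : a ≤ 6 * q + 2) (b1 : 1 ≤ a + 1 + 3 * m) (b2 : a + 1 + 3 * m ≤ 6 * q + 2)
    (hm : m ≠ q) : Valid q a m ∨ (a = 2 ∧ m = q - 1) ∨ (a = 3 * q + 3 ∧ m = q - 1) := by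
  obtain ⟨hA, hY, hc⟩ := h1
  obtain ⟨-, hY', hc'⟩ := h2
  obtain ⟨g0, -, -⟩ := (SA_iff q a p).1 hA
  obtain ⟨e1, e2, e3, e4, e5⟩ := chart q a m p
  rw [show a + 1 + 3 * m + 1 = a + 2 + 3 * m by ring, gp_add3m, e5] at hc'
  rw [e4] at hc
  rw [e3] at g0
  rw [abs_lt] at hY hY'
  have i1 : m ≤ q - 1 := by
    by_contra h
    have : (q : ℝ) + 1 ≤ m := by exact_mod_cast (by omega : q + 1 ≤ m)
    linarith
  have i2 : 2 * q ≤ a + 2 * m := by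
    by_contra h
    have : (a : ℝ) + 2 * m + 1 ≤ 2 * q := by exact_mod_cast (by omega : a + 2 * m + 1 ≤ 2 * q)
    rcases cut_cases q a with ⟨-, h⟩ | ⟨-, -, h⟩ <;> rw [h] at hc <;> linarith
  have i3 : a + m ≤ 4 * q + 2 := by
    by_contra h
    have : 4 * (q : ℝ) + 3 ≤ a + m := by exact_mod_cast (by omega : 4 * q + 3 ≤ a + m)
    rcases cut_cases q (a + 1 + 3 * m) with ⟨-, h⟩ | ⟨-, -, h⟩ <;> rw [h] at hc' <;> linarith
  have i4 : a ≠ 2 → a ≠ 6 * q + 1 → 2 * q + 1 ≤ a + 2 * m := by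
    intro n1 n2
    by_contra h
    have : (a : ℝ) + 2 * m ≤ 2 * q := by exact_mod_cast (by omega : a + 2 * m ≤ 2 * q)
    rcases cut_cases q a with ⟨h, -⟩ | ⟨-, -, h⟩
    · omega
    · rw [h] at hc; linarith
  have i5 : a + 1 + 3 * m ≠ 2 → a + 1 + 3 * m ≠ 6 * q + 1 → a + m ≤ 4 * q + 1 := by
    intro n1 n2
    by_contra h
    have : 4 * (q : ℝ) + 2 ≤ a + m := by exact_mod_cast (by omega : 4 * q + 2 ≤ a + m)
    rcases cut_cases q (a + 1 + 3 * m) with ⟨h, -⟩ | ⟨-, -, h⟩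
    · omega
    · rw [h] at hc'; linarith
  unfold Valid
  omega

theorem rep_exists {q j k : ℤ} (hq : 40 ≤ q) (j1 : 1 ≤ j) (j2 : j ≤ 3 * q + 1) (k1 : 1 ≤ k)
    (k2 : k ≤ 3 * q + 1) (hjk : j < k) : ∃ a m, PRep q j k a m := by
  have h3 : (k - j) % 3 = 0 ∨ (k - j) % 3 = 1 ∨ (k - j) % 3 = 2 := by omega
  rcases h3 with h | h | h
  · obtain ⟨r, hr⟩ : ∃ r, k = j + 3 * r := ⟨(k - j) / 3, by omega⟩
    refine ⟨k, q - r, ⟨?_, ?_, ?_, ?_, ?_, ?_⟩⟩ <;> (try unfold Valid) <;> (try unfold lab) <;> omega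
  · obtain ⟨r, hr⟩ : ∃ r, k = j + 1 + 3 * r := ⟨(k - j) / 3, by omega⟩
    by_cases c1 : 6 * q + 5 ≤ j + 2 * k
    · refine ⟨j, r, ⟨?_, ?_, ?_, ?_, ?_, ?_⟩⟩ <;> (try unfold Valid) <;> (try unfold lab) <;> omega
    by_cases c2 : 2 * j + k ≤ 3 * q + 1
    · refine ⟨j + (3 * q + 1), r, ⟨?_, ?_, ?_, ?_, ?_, ?_⟩⟩ <;> (try unfold Valid) <;> (try unfold lab) <;> omega
    · refine ⟨k + (3 * q + 1), -r - q - 1, ⟨?_, ?_, ?_, ?_, ?_, ?_⟩⟩ <;> (try unfold Valid) <;>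
        (try unfold lab) <;> omega
  · obtain ⟨r, hr⟩ : ∃ r, k = j + 2 + 3 * r := ⟨(k - j) / 3, by omega⟩
    by_cases c1 : 6 * q + 5 ≤ k + 2 * j
    · refine ⟨k, -r - 1, ⟨?_, ?_, ?_, ?_, ?_, ?_⟩⟩ <;> (try unfold Valid) <;> (try unfold lab) <;> omega
    by_cases c2 : 2 * k + j ≤ 3 * q + 1
    · refine ⟨k + (3 * q + 1), -r - 1, ⟨?_, ?_, ?_, ?_, ?_, ?_⟩⟩ <;> (try unfold Valid) <;>
        (try unfold lab) <;> omega
    · refine ⟨j + (3 * q + 1), r - q, ⟨?_, ?_, ?_, ?_, ?_, ?_⟩⟩ <;> (try unfold Valid) <;>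
        (try unfold lab) <;> omega

theorem PRep.symm {q j k a m : ℤ} (h : PRep q j k a m) : PRep q k j a m :=
  ⟨h.val, h.a1, h.a2, h.b1, h.b2, h.lb.symm⟩

theorem rep_exists' {q j k : ℤ} (hq : 40 ≤ q) (j1 : 1 ≤ j) (j2 : j ≤ 3 * q + 1) (k1 : 1 ≤ k)
    (k2 : k ≤ 3 * q + 1) (hjk : j ≠ k) : ∃ a m, PRep q j k a m := by
  rcases lt_or_gt_of_ne hjk with h | h
  · exact rep_exists hq j1 j2 k1 k2 h
  · obtain ⟨a, m, h⟩ := rep_exists hq k1 k2 j1 j2 h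
    exact ⟨a, m, h.symm⟩

theorem void1 {q : ℤ} {p : Pl} (hq : 40 ≤ q) (h1 : p ∈ arm q 2) (h2 : p ∈ arm q (2 + 1 + 3 * (q - 1))) :
    p ∈ arm q (6 * q + 1) := by
  obtain ⟨hA, hY, hc⟩ := h1
  obtain ⟨-, hY', hc'⟩ := h2
  obtain ⟨e1, e2, e3, e4, e5⟩ := chart q 2 (q - 1) p
  have hA' := hA (2 + 1)
  push_cast at *
  rw [abs_lt] at hY hY'
  have h6 : Y q (6 * q + 1) p = Y q (2 + 2) p - (2 * q - 1) := by
    have := Y_add3m q (2 + 2) (2 * q - 1) p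
    rw [show (2 : ℤ) + 2 + 3 * (2 * q - 1) = 6 * q + 1 by ring] at this
    rw [this]; push_cast; ring
  refine ⟨hA, ?_, ?_⟩
  · rw [h6, abs_lt]; constructor <;> linarith
  · rw [show cut q (6 * q + 1) = 0 by simp [cut]]; exact hA _

theorem void2 {q : ℤ} {p : Pl} (hq : 40 ≤ q) (h1 : p ∈ arm q (3 * q + 3))
    (h2 : p ∈ arm q (3 * q + 3 + 1 + 3 * (q - 1))) : p ∈ arm q 2 := by
  obtain ⟨hA, hY, hc⟩ := h1
  obtain ⟨-, hY', hc'⟩ := h2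
  obtain ⟨e1, e2, e3, e4, e5⟩ := chart q (3 * q + 3) (q - 1) p
  have hA' := hA (3 * q + 3 + 2)
  push_cast at *
  rw [abs_lt] at hY hY'
  have h6 : Y q 2 p = Y q (3 * q + 3 + 2) p + (q + 1) := by
    have := Y_add3m q 2 (q + 1) p
    rw [show (2 : ℤ) + 3 * (q + 1) = 3 * q + 3 + 2 by ring] at this
    rw [this]; push_cast; ring
  refine ⟨hA, ?_, ?_⟩
  · rw [h6, abs_lt]; constructor <;> linarith
  · rw [show cut q 2 = 0 by simp [cut]]; exact hA _

theorem pair_aux {q j k a m a' m' : ℤ} {p : Pl} (hq : 40 ≤ q) (j1 : 1 ≤ j) (j2 : j ≤ 3 * q + 1) (k1 : 1 ≤ k)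
    (k2 : k ≤ 3 * q + 1) (hjk : j ≠ k) (hr : PRep q j k a m)
    (h1 : p ∈ arm q a') (h2 : p ∈ arm q (a' + 1 + 3 * m'))
    (hl : (lab q a' j ∧ lab q (a' + 1 + 3 * m') k) ∨ (lab q a' k ∧ lab q (a' + 1 + 3 * m') j)) :
    p ∈ arm q a ∩ arm q (a + 1 + 3 * m) := by
  obtain ⟨⟨v1, v2, v3⟩, a1, a2, b1, b2, lb⟩ := hr
  have := pair_val (m := m') hq h1 h2
  unfold lab at *
  rcases this (by omega) (by omega) (by omega) (by omega) (by omega) with ⟨w1, w2, w3⟩ | ⟨w1, w2⟩ | ⟨w1, w2⟩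
  · have e1 : a = a' := by omega
    have e2 : m = m' := by omega
    rw [e1, e2]; exact ⟨h1, h2⟩
  · have e1 : a = 6 * q + 1 := by omega
    have e2 : m = - 2 * q := by omega
    subst w1 w2
    refine ⟨?_, ?_⟩
    · rw [e1]; exact void1 hq h1 h2
    · rw [show a + 1 + 3 * m = 2 by omega]; exact h1
  · have e1 : a = 6 * q + 1 := by omega
    have e2 : m = - 2 * q := by omega
    subst w1 w2
    refine ⟨?_, ?_⟩
    · rw [e1]; rwa [show 3 * q + 3 + 1 + 3 * (q - 1) = 6 * q + 1 by ring] at h2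
    · rw [show a + 1 + 3 * m = 2 by omega]; exact void2 hq h1 h2

theorem pair_eq {q j k a m : ℤ} (hq : 40 ≤ q) (j1 : 1 ≤ j) (j2 : j ≤ 3 * q + 1) (k1 : 1 ≤ k)
    (k2 : k ≤ 3 * q + 1) (hjk : j ≠ k) (hr : PRep q j k a m) :
    SB q j ∩ SB q k = arm q a ∩ arm q (a + 1 + 3 * m) := by
  apply Set.Subset.antisymm
  · rintro p ⟨hj, hk⟩
    obtain ⟨a', ha', hp1⟩ : ∃ a', lab q a' j ∧ p ∈ arm q a' := by
      rcases hj with h | h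
      · exact ⟨_, Or.inl rfl, h⟩
      · exact ⟨_, Or.inr rfl, h⟩
    obtain ⟨b', hb', hp2⟩ : ∃ a', lab q a' k ∧ p ∈ arm q a' := by
      rcases hk with h | h
      · exact ⟨_, Or.inl rfl, h⟩
      · exact ⟨_, Or.inr rfl, h⟩
    have h3 : (b' - a') % 3 = 0 ∨ (b' - a') % 3 = 1 ∨ (b' - a') % 3 = 2 := by omega
    rcases h3 with h | h | h
    · obtain ⟨r, rfl⟩ : ∃ r, b' = a' + 3 * r := ⟨(b' - a') / 3, by omega⟩
      have := same_class hp1 hp2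
      unfold lab at *; omega
    · obtain ⟨r, rfl⟩ : ∃ r, b' = a' + 1 + 3 * r := ⟨(b' - a') / 3, by omega⟩
      exact pair_aux hq j1 j2 k1 k2 hjk hr hp1 hp2 (Or.inl ⟨ha', hb'⟩)
    · obtain ⟨r, rfl⟩ : ∃ r, a' = b' + 1 + 3 * r := ⟨(a' - b') / 3, by omega⟩
      exact pair_aux hq j1 j2 k1 k2 hjk hr hp2 hp1 (Or.inr ⟨hb', ha'⟩)
  · rintro p ⟨h1, h2⟩
    have : ∀ a j, lab q a j → p ∈ arm q a → p ∈ SB q j := by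
      rintro a j (h | h) hp
      · left; rwa [← h]
      · right; rwa [← h]
    rcases hr.lb with ⟨l1, l2⟩ | ⟨l1, l2⟩
    · exact ⟨this _ _ l1 h1, this _ _ l2 h2⟩
    · exact ⟨this _ _ l2 h2, this _ _ l1 h1⟩

theorem pair_convex {q j k : ℤ} (hq : 40 ≤ q) (j1 : 1 ≤ j) (j2 : j ≤ 3 * q + 1) (k1 : 1 ≤ k)
    (k2 : k ≤ 3 * q + 1) (hjk : j ≠ k) : Convex ℝ (SB q j ∩ SB q k) := by
  obtain ⟨a, m, hr⟩ := rep_exists' hq j1 j2 k1 k2 hjk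
  rw [pair_eq hq j1 j2 k1 k2 hjk hr]
  exact (arm_convex _ _).inter (arm_convex _ _)

/-- being void: one of the two arms of a valid pair has cut `0` -/
theorem valid_cut {q a m : ℤ} (hq : 40 ≤ q) (hv : Valid q a m) :
    (a = 6 * q + 1 ∧ m = - 2 * q) ∨ (cut q a = 3 / 5 ∧ cut q (a + 1 + 3 * m) = 3 / 5 ∧
      ¬ (a + 2 * m = 2 * q + 1 ∧ a + m = 4 * q + 1)) := by
  obtain ⟨h1, h2, h3⟩ := hv
  by_cases h : a = 6 * q + 1 ∧ m = - 2 * q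
  · exact Or.inl h
  · right
    unfold cut
    rw [if_neg (by omega), if_neg (by omega)]
    exact ⟨rfl, rfl, by omega⟩

/-- membership in the intersection of a valid pair of arms, in coordinates -/
theorem mem_pair {q a m : ℤ} {p : Pl} : p ∈ arm q a ∩ arm q (a + 1 + 3 * m) ↔
    (0 < gp q a p ∧ 0 < gp q (a + 1) p ∧ 0 < gp q (a + 2) p) ∧ |Y q a p| < 11 / 50 ∧
    |Y q (a + 1 + 3 * m) p| < 11 / 50 ∧
    cut q a < gp q (a + 1) p ∧ cut q (a + 1 + 3 * m) < gp q (a + 2) p := by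
  rw [← SA_iff]
  have : gp q (a + 1 + 3 * m + 1) p = gp q (a + 2) p := by
    rw [show a + 1 + 3 * m + 1 = a + 2 + 3 * m by ring, gp_add3m]
  constructor
  · rintro ⟨⟨h1, h2, h3⟩, ⟨h4, h5, h6⟩⟩
    rw [this] at h6
    exact ⟨h1, h2, h5, h3, h6⟩
  · rintro ⟨h1, h2, h3, h4, h5⟩
    rw [← this] at h5
    exact ⟨⟨h1, h2, h4⟩, ⟨h1, h3, h5⟩⟩

theorem Y_Pt3 (q a m : ℤ) (s t : ℝ) : Y q (a + 1 + 3 * m) (Pt q a s (t + m)) = t := by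
  rw [Y_add3m, Y_Pt1]; ring

set_option linter.unusedVariables false
set_option linter.unusedTactic false

theorem pairK_void {q a m : ℤ} {p : Pl} (hq : 40 ≤ q) (h1 : a = 6 * q + 1) (h2 : m = - 2 * q)
    (hp : p ∈ arm q a ∩ arm q (a + 1 + 3 * m)) : p ∉ SK q := by
  rw [mem_pair] at hp
  obtain ⟨⟨g0, g1, g2⟩, hx, hy, c1, c2⟩ := hp
  obtain ⟨e1, e2, e3, e4, e5⟩ := chart q a m p
  have hqr : (40 : ℝ) ≤ q := by exact_mod_cast hq
  have ha : (a : ℝ) = 6 * q + 1 := by exact_mod_cast h1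
  have hm : (m : ℝ) = - 2 * q := by exact_mod_cast h2
  rw [SK_iff q a]
  rw [abs_lt] at hx hy
  have key : near (Y q (a + 2) p) → Y q a p + Y q (a + 1 + 3 * m) p ≤ - (7 / 25) ∨
      7 / 25 ≤ Y q a p + Y q (a + 1 + 3 * m) p := by
    intro h
    rcases near_half h (3 * q - a - m) with h | h <;> push_cast at h
    · right; linarith
    · left; linarith
  rintro (⟨n0, n1, n2, l0, l1, l2⟩ | ⟨n0, n1, l0, l1⟩ | ⟨n0, n1, l0, l1⟩ | ⟨n0, n1, l0, l1⟩)
  · rcases key n2 with h | h <;> linarith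
  · linarith
  · rcases key n1 with h | h <;> linarith
  · rcases key n0 with h | h <;> linarith

theorem pairK {q a m : ℤ} {p : Pl} (hq : 40 ≤ q) (hv : Valid q a m)
    (h1 : cut q a = 3 / 5) (h2 : cut q (a + 1 + 3 * m) = 3 / 5)
    (hp : p ∈ arm q a ∩ arm q (a + 1 + 3 * m)) : p ∉ SK q ↔
      |Y q a p + Y q (a + 1 + 3 * m) p| < 7 / 25 ∧ 3 / 5 < gp q a p := by
  rw [mem_pair] at hp
  obtain ⟨⟨g0, g1, g2⟩, hx, hy, c1, c2⟩ := hp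
  obtain ⟨e1, e2, e3, e4, e5⟩ := chart q a m p
  have hm : (m : ℝ) ≤ q - 1 := by exact_mod_cast hv.1
  rw [SK_iff q a, abs_lt]
  rw [abs_lt] at hx hy
  rw [h1] at c1
  rw [h2] at c2
  have key : near (Y q (a + 2) p) → Y q a p + Y q (a + 1 + 3 * m) p ≤ - (7 / 25) ∨
      7 / 25 ≤ Y q a p + Y q (a + 1 + 3 * m) p := by
    intro h
    rcases near_half h (3 * q - a - m) with h | h <;> push_cast at h
    · right; linarith
    · left; linarith
  have na : near (Y q a p) := near_of 0 (by push_cast; linarith) (by push_cast; linarith)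
  have nb : near (Y q (a + 1) p) := near_of m (by push_cast; linarith) (by push_cast; linarith)
  constructor
  · intro h
    have hg : 3 / 5 < gp q a p := by
      by_contra h'
      exact h (Or.inr (Or.inl ⟨na, nb, by linarith, by linarith⟩))
    refine ⟨?_, hg⟩
    by_contra h'
    apply h
    refine Or.inl ⟨na, nb, ?_, by linarith, by linarith, by linarith⟩
    by_cases h5 : 7 / 25 ≤ Y q a p + Y q (a + 1 + 3 * m) p
    · exact near_of (3 * q - a - m) (by push_cast; linarith) (by push_cast; linarith)
    · have : Y q a p + Y q (a + 1 + 3 * m) p ≤ - (7 / 25) := by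
        by_contra h6; exact h' ⟨by linarith, by linarith⟩
      exact near_of (3 * q - a - m + 1) (by push_cast; linarith) (by push_cast; linarith)
  · rintro ⟨h5, h6⟩
    rintro (⟨n0, n1, n2, l0, l1, l2⟩ | ⟨n0, n1, l0, l1⟩ | ⟨n0, n1, l0, l1⟩ | ⟨n0, n1, l0, l1⟩)
    · rcases key n2 with h | h <;> linarith
    · linarith
    · linarith
    · linarith

theorem pairK_convex {q j k : ℤ} (hq : 40 ≤ q) (j1 : 1 ≤ j) (j2 : j ≤ 3 * q + 1) (k1 : 1 ≤ k)
    (k2 : k ≤ 3 * q + 1) (hjk : j ≠ k) : Convex ℝ ((SB q j ∩ SB q k) \ SK q) := by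
  obtain ⟨a, m, hr⟩ := rep_exists' hq j1 j2 k1 k2 hjk
  rw [pair_eq hq j1 j2 k1 k2 hjk hr]
  have hc : Convex ℝ (arm q a ∩ arm q (a + 1 + 3 * m)) := (arm_convex _ _).inter (arm_convex _ _)
  rcases valid_cut hq hr.val with ⟨h1, h2⟩ | ⟨h1, h2, -⟩
  · have : (arm q a ∩ arm q (a + 1 + 3 * m)) \ SK q = arm q a ∩ arm q (a + 1 + 3 * m) := by
      ext p; exact ⟨fun h => h.1, fun h => ⟨h, pairK_void hq h1 h2 h⟩⟩
    rw [this]; exact hc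
  · have : (arm q a ∩ arm q (a + 1 + 3 * m)) \ SK q = (arm q a ∩ arm q (a + 1 + 3 * m)) ∩
        ({p | |Y q a p + Y q (a + 1 + 3 * m) p| < 7 / 25} ∩ {p | 3 / 5 < gp q a p}) := by
      ext p
      exact ⟨fun h => ⟨h.1, (pairK hq hr.val h1 h2 h.1).1 h.2⟩,
        fun h => ⟨h.1, (pairK hq hr.val h1 h2 h.1).2 h.2⟩⟩
    rw [this]
    exact hc.inter ((((Y_aff _ _).add (Y_aff _ _)).abs _).inter ((Aff.const _).lt (gp_aff _ _)))

theorem pair_point {q a m : ℤ} (s t : ℝ) (hs : |s| < 11 / 50) (ht : |t| < 11 / 50)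
    (g0 : 0 < (q : ℝ) - m + s - t) (g1 : 0 < (a : ℝ) + 2 * m - 2 * q - 1 / 2 + s + 2 * t)
    (g2 : 0 < (4 : ℝ) * q + 3 / 2 - a - m - 2 * s - t)
    (c1 : cut q a < (a : ℝ) + 2 * m - 2 * q - 1 / 2 + s + 2 * t)
    (c2 : cut q (a + 1 + 3 * m) < (4 : ℝ) * q + 3 / 2 - a - m - 2 * s - t) :
    ∃ p, p ∈ arm q a ∩ arm q (a + 1 + 3 * m) ∧ Y q a p = s ∧ Y q (a + 1 + 3 * m) p = t := by
  refine ⟨Pt q a s (t + m), ?_, Y_Pt _ _ _ _, Y_Pt3 _ _ _ _ _⟩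
  obtain ⟨e1, e2, e3, e4, e5⟩ := chart q a m (Pt q a s (t + m))
  rw [mem_pair, e3, e4, e5, Y_Pt, Y_Pt3]
  exact ⟨⟨g0, g1, g2⟩, hs, ht, c1, c2⟩

theorem pairK_nonempty {q j k : ℤ} (hq : 40 ≤ q) (j1 : 1 ≤ j) (j2 : j ≤ 3 * q + 1) (k1 : 1 ≤ k)
    (k2 : k ≤ 3 * q + 1) (hjk : j ≠ k) : ((SB q j ∩ SB q k) \ SK q).Nonempty := by
  obtain ⟨a, m, hr⟩ := rep_exists' hq j1 j2 k1 k2 hjk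
  rw [pair_eq hq j1 j2 k1 k2 hjk hr]
  have hqr : (40 : ℝ) ≤ q := by exact_mod_cast hq
  have v1 : (m : ℝ) ≤ q - 1 := by exact_mod_cast hr.val.1
  have v2 : (2 : ℝ) * q + 1 ≤ a + 2 * m := by exact_mod_cast hr.val.2.1
  have v3 : (a : ℝ) + m ≤ 4 * q + 1 := by exact_mod_cast hr.val.2.2
  rcases valid_cut hq hr.val with ⟨h1, h2⟩ | ⟨h1, h2, h3⟩
  · obtain ⟨p, hp, -, -⟩ := pair_point (q := q) (a := a) (m := m) 0 0 (by norm_num) (by norm_num)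
      (by linarith) (by linarith) (by linarith)
      (by rw [show cut q a = 0 by simp [cut, h1]]; linarith)
      (by rw [show cut q (a + 1 + 3 * m) = 0 by simp [cut]; omega]; linarith)
    exact ⟨p, hp, pairK_void hq h1 h2 hp⟩
  · have : ∃ s t : ℝ, |s| < 11 / 50 ∧ |t| < 11 / 50 ∧ |s + t| < 7 / 25 ∧ (3 / 5 < (q : ℝ) - m + s - t) ∧
      3 / 5 < (a : ℝ) + 2 * m - 2 * q - 1 / 2 + s + 2 * t ∧
      3 / 5 < (4 : ℝ) * q + 3 / 2 - a - m - 2 * s - t := by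
      by_cases c : a + 2 * m = 2 * q + 1
      · have v4 : (a : ℝ) + m ≤ 4 * q := by exact_mod_cast (by have := hr.val.2.2; omega : a + m ≤ 4 * q)
        exact ⟨0, 1 / 10, by norm_num, by norm_num [abs_of_pos], by norm_num [abs_of_pos], by linarith,
          by linarith, by linarith⟩
      · have v4 : (2 : ℝ) * q + 2 ≤ a + 2 * m := by
          exact_mod_cast (by have := hr.val.2.1; omega : 2 * q + 2 ≤ a + 2 * m)
        exact ⟨- (1 / 10), 0, by norm_num [abs_of_pos], by norm_num, by norm_num [abs_of_pos], by linarith,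
          by linarith, by linarith⟩
    obtain ⟨s, t, hs, ht, he, g0, g1, g2⟩ := this
    obtain ⟨p, hp, es, et⟩ := pair_point (q := q) (a := a) (m := m) s t hs ht
      (by linarith) (by linarith) (by linarith) (by rw [h1]; linarith) (by rw [h2]; linarith)
    refine ⟨p, hp, (pairK hq hr.val h1 h2 hp).2 ⟨by rw [es, et]; exact he, ?_⟩⟩
    rw [(chart q a m p).2.2.1, es, et]; exact g0

/-! ### `X` and pairs -/

theorem incone {q : ℤ} {p : Pl} (hq : 40 ≤ q) (h1 : |gp q 0 p - gp q 2 p| ≤ 6 / 5)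
    (h2 : (3 * q + 1 : ℝ) - 4 ≤ gp q 1 p) : ¬ notcone q p := by
  unfold notcone
  have hqr : (40 : ℝ) ≤ q := by exact_mod_cast hq
  have := mul_le_mul_of_nonneg_left h1 (by linarith : (0 : ℝ) ≤ 2 * (3 * q + 1))
  linarith

theorem notcone_of_far {q : ℤ} {p : Pl} (hq : 40 ≤ q) (h1 : 13 / 10 < |gp q 0 p - gp q 2 p|)
    (h2 : gp q 1 p ≤ (3 * q + 1 : ℝ)) : notcone q p := by
  unfold notcone
  have hqr : (40 : ℝ) ≤ q := by exact_mod_cast hq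
  have := mul_lt_mul_of_pos_left h1 (by linarith : (0 : ℝ) < 2 * (3 * q + 1))
  linarith

theorem notcone_of_small {q : ℤ} {p : Pl} (hq : 40 ≤ q) (h1 : gp q 1 p ≤ 6) : notcone q p := by
  unfold notcone
  have hqr : (40 : ℝ) ≤ q := by exact_mod_cast hq
  have := mul_nonneg (by linarith : (0 : ℝ) ≤ 2 * (3 * q + 1)) (abs_nonneg (gp q 0 p - gp q 2 p))
  linarith

theorem gp_of_mod {q a b : ℤ} (p : Pl) (h : a % 3 = b % 3) : gp q a p = gp q b p := by
  rw [gp_mod q a, h, ← gp_mod]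

theorem Xpair_void {q a m : ℤ} {p : Pl} (hq : 40 ≤ q) (h1 : a = 6 * q + 1) (h2 : m = - 2 * q)
    (hp : p ∈ arm q a ∩ arm q (a + 1 + 3 * m)) : p ∉ SX q := by
  rw [mem_pair] at hp
  obtain ⟨⟨g0, g1, g2⟩, hx, hy, c1, c2⟩ := hp
  obtain ⟨e1, e2, e3, e4, e5⟩ := chart q a m p
  have hqr : (40 : ℝ) ≤ q := by exact_mod_cast hq
  have ha : (a : ℝ) = 6 * q + 1 := by exact_mod_cast h1
  have hm : (m : ℝ) = - 2 * q := by exact_mod_cast h2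
  rintro ⟨-, -, hn⟩
  rw [abs_lt] at hx hy
  refine incone hq ?_ ?_ hn
  · rw [gp_of_mod (a := 0) (b := a + 2) p (by omega), gp_of_mod (a := 2) (b := a + 1) p (by omega), abs_le]
    constructor <;> linarith
  · rw [gp_of_mod (a := 1) (b := a) p (by omega)]
    linarith

theorem Xpair {q a m : ℤ} {p : Pl} (hq : 40 ≤ q) (hv : Valid q a m)
    (h1 : cut q a = 3 / 5) (h2 : cut q (a + 1 + 3 * m) = 3 / 5)
    (hp : p ∈ arm q a ∩ arm q (a + 1 + 3 * m)) : p ∈ SX q ↔ gp q a p < 3 / 5 := by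
  have hA := hp.1.1
  rw [mem_pair] at hp
  obtain ⟨⟨g0, g1, g2⟩, hx, hy, c1, c2⟩ := hp
  obtain ⟨e1, e2, e3, e4, e5⟩ := chart q a m p
  have hqr : (40 : ℝ) ≤ q := by exact_mod_cast hq
  have hm : (m : ℝ) ≤ q - 1 := by exact_mod_cast hv.1
  rw [h1] at c1
  rw [h2] at c2
  rw [abs_lt] at hx hy
  constructor
  · rintro ⟨-, hX, -⟩
    rw [ex_gp_iff q a] at hX
    rcases hX with h | h | h
    · exact h
    · linarith
    · linarith
  · intro h
    refine ⟨hA, ⟨a, h⟩, ?_⟩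
    have hmq : m = q - 1 := by
      by_contra h'
      have : (m : ℝ) ≤ q - 2 := by exact_mod_cast (by have := hv.1; omega : m ≤ q - 2)
      linarith
    have v2 := hv.2.1
    have v3 := hv.2.2
    have hmr : (m : ℝ) = q - 1 := by exact_mod_cast hmq
    have hs := gp_sum q a p
    have h3 : a % 3 = 0 ∨ a % 3 = 1 ∨ a % 3 = 2 := by omega
    rcases h3 with h3 | h3 | h3
    · have : (a : ℝ) ≤ 3 * q := by exact_mod_cast (by omega : a ≤ 3 * q)
      refine notcone_of_far hq ?_ ?_
      · rw [gp_of_mod (a := 0) (b := a) p (by omega), gp_of_mod (a := 2) (b := a + 2) p (by omega), lt_abs]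
        right; linarith
      · rw [gp_of_mod (a := 1) (b := a + 1) p (by omega)]; linarith
    · refine notcone_of_small hq ?_
      rw [gp_of_mod (a := 1) (b := a) p (by omega)]; linarith
    · have : (5 : ℝ) ≤ a := by exact_mod_cast (by omega : 5 ≤ a)
      refine notcone_of_far hq ?_ ?_
      · rw [gp_of_mod (a := 0) (b := a + 1) p (by omega), gp_of_mod (a := 2) (b := a) p (by omega), lt_abs]
        left; linarith
      · rw [gp_of_mod (a := 1) (b := a + 2) p (by omega)]; linarith

theorem Xpair_convex {q j k : ℤ} (hq : 40 ≤ q) (j1 : 1 ≤ j) (j2 : j ≤ 3 * q + 1) (k1 : 1 ≤ k)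
    (k2 : k ≤ 3 * q + 1) (hjk : j ≠ k) : Convex ℝ ((SB q j ∩ SB q k) ∩ SX q) := by
  obtain ⟨a, m, hr⟩ := rep_exists' hq j1 j2 k1 k2 hjk
  rw [pair_eq hq j1 j2 k1 k2 hjk hr]
  have hc : Convex ℝ (arm q a ∩ arm q (a + 1 + 3 * m)) := (arm_convex _ _).inter (arm_convex _ _)
  rcases valid_cut hq hr.val with ⟨h1, h2⟩ | ⟨h1, h2, -⟩
  · have : (arm q a ∩ arm q (a + 1 + 3 * m)) ∩ SX q = ∅ := by
      ext p; exact ⟨fun h => Xpair_void hq h1 h2 h.1 h.2, fun h => h.elim⟩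
    rw [this]; exact convex_empty
  · have : (arm q a ∩ arm q (a + 1 + 3 * m)) ∩ SX q = (arm q a ∩ arm q (a + 1 + 3 * m)) ∩
        {p | gp q a p < 3 / 5} := by
      ext p
      exact ⟨fun h => ⟨h.1, (Xpair hq hr.val h1 h2 h.1).1 h.2⟩,
        fun h => ⟨h.1, (Xpair hq hr.val h1 h2 h.1).2 h.2⟩⟩
    rw [this]
    exact hc.inter ((gp_aff _ _).lt (Aff.const _))

theorem Xpair_nonempty_iff {q j k a m : ℤ} (hq : 40 ≤ q) (j1 : 1 ≤ j) (j2 : j ≤ 3 * q + 1) (k1 : 1 ≤ k)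
    (k2 : k ≤ 3 * q + 1) (hjk : j ≠ k) (hr : PRep q j k a m) :
    ((SB q j ∩ SB q k) ∩ SX q).Nonempty ↔ m = q - 1 := by
  rw [pair_eq hq j1 j2 k1 k2 hjk hr]
  have hqr : (40 : ℝ) ≤ q := by exact_mod_cast hq
  rcases valid_cut hq hr.val with ⟨h1, h2⟩ | ⟨h1, h2, -⟩
  · constructor
    · rintro ⟨p, hp, hX⟩
      exact absurd hX (Xpair_void hq h1 h2 hp)
    · intro h; omega
  · constructor
    · rintro ⟨p, hp, hX⟩
      have h := (Xpair hq hr.val h1 h2 hp).1 hX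
      rw [(chart q a m p).2.2.1] at h
      rw [mem_pair] at hp
      have hx := abs_lt.1 hp.2.1
      have hy := abs_lt.1 hp.2.2.1
      by_contra h'
      have : (m : ℝ) ≤ q - 2 := by exact_mod_cast (by have := hr.val.1; omega : m ≤ q - 2)
      linarith
    · intro h
      have hmr : (m : ℝ) = q - 1 := by exact_mod_cast h
      have v2 := hr.val.2.1
      have v3 := hr.val.2.2
      have i1 : (3 : ℝ) ≤ a := by exact_mod_cast (by omega : 3 ≤ a)
      have i2 : (a : ℝ) ≤ 3 * q + 2 := by exact_mod_cast (by omega : a ≤ 3 * q + 2)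
      obtain ⟨p, hp, es, et⟩ := pair_point (q := q) (a := a) (m := m) (-(21 / 100)) (21 / 100)
        (by norm_num [abs_of_pos]) (by norm_num [abs_of_pos])
        (by linarith) (by linarith) (by linarith) (by rw [h1]; linarith) (by rw [h2]; linarith)
      refine ⟨p, hp, (Xpair hq hr.val h1 h2 hp).2 ?_⟩
      rw [(chart q a m p).2.2.1, es, et]; linarith

theorem Xpair_sub_K {q j k : ℤ} (hq : 40 ≤ q) (j1 : 1 ≤ j) (j2 : j ≤ 3 * q + 1) (k1 : 1 ≤ k)
    (k2 : k ≤ 3 * q + 1) (hjk : j ≠ k) {p : Pl} (hp : p ∈ SB q j ∩ SB q k) (hX : p ∈ SX q) : p ∈ SK q := by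
  obtain ⟨a, m, hr⟩ := rep_exists' hq j1 j2 k1 k2 hjk
  rw [pair_eq hq j1 j2 k1 k2 hjk hr] at hp
  rcases valid_cut hq hr.val with ⟨h1, h2⟩ | ⟨h1, h2, -⟩
  · exact absurd hX (Xpair_void hq h1 h2 hp)
  · by_contra h
    have h3 := (pairK hq hr.val h1 h2 hp).1 h
    have h4 := (Xpair hq hr.val h1 h2 hp).1 hX
    linarith [h3.2]

set_option linter.unusedVariables false
set_option linter.unusedTactic false

/-! ### Triples -/

theorem triple_core {q a m l : ℤ} {p : Pl} (hq : 40 ≤ q) (ha : p ∈ arm q a)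
    (hb : p ∈ arm q (a + 1 + 3 * m)) (hc : p ∈ arm q (a + 2 + 3 * l))
    (n1 : m ≠ q) (n2 : l ≠ m + q) (n3 : l ≠ - q - 1) :
    (a + m + l = 3 * q ∨ a + m + l = 3 * q + 1) ∧ p ∈ SK q ∧ p ∉ SX q := by
  obtain ⟨hA, hx, -⟩ := ha
  obtain ⟨-, hy, -⟩ := hb
  obtain ⟨-, hz, -⟩ := hc
  obtain ⟨g0, g1, g2⟩ := (SA_iff q a p).1 hA
  obtain ⟨e1, e2, e3, e4, e5⟩ := chart q a m p
  have e6 : Y q (a + 2) p = Y q (a + 2 + 3 * l) p + l := by rw [Y_add3m]; ring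
  rw [abs_lt] at hx hy hz
  have hS : a + m + l = 3 * q ∨ a + m + l = 3 * q + 1 := by
    by_contra h
    push Not at h
    rcases (by omega : a + m + l ≤ 3 * q - 1 ∨ 3 * q + 2 ≤ a + m + l) with h | h
    · have : (a : ℝ) + m + l ≤ 3 * q - 1 := by exact_mod_cast h
      linarith
    · have : (3 : ℝ) * q + 2 ≤ a + m + l := by exact_mod_cast h
      linarith
  have hS' : (a : ℝ) + m + l = 3 * q ∨ (a : ℝ) + m + l = 3 * q + 1 := by exact_mod_cast hS
  have k1 : (m : ℝ) ≤ q - 1 := by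
    have : m ≤ q - 1 := by
      by_contra h
      have : (q : ℝ) + 1 ≤ m := by exact_mod_cast (by omega : q + 1 ≤ m)
      linarith
    exact_mod_cast this
  have k2 : (l : ℝ) ≤ m + q - 1 := by
    have : l ≤ m + q - 1 := by
      by_contra h
      have : (m : ℝ) + q + 1 ≤ l := by exact_mod_cast (by omega : m + q + 1 ≤ l)
      linarith
    exact_mod_cast this
  have k3 : - (q : ℝ) ≤ l := by
    have : - q ≤ l := by
      by_contra h
      have : (l : ℝ) ≤ - q - 2 := by exact_mod_cast (by omega : l ≤ - q - 2)
      linarith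
    exact_mod_cast this
  have G0 : 21 / 25 ≤ gp q a p := by rcases hS' with h | h <;> linarith
  have G1 : 21 / 25 ≤ gp q (a + 1) p := by rcases hS' with h | h <;> linarith
  have G2 : 21 / 25 ≤ gp q (a + 2) p := by rcases hS' with h | h <;> linarith
  refine ⟨hS, ?_, ?_⟩
  · rw [SK_iff q a]
    refine Or.inl ⟨near_of 0 ?_ ?_, near_of m ?_ ?_, near_of l ?_ ?_, ?_, ?_, ?_⟩ <;> push_cast <;> linarith
  · rintro ⟨-, hX, -⟩
    rw [ex_gp_iff q a] at hX
    rcases hX with h | h | h <;> linarith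

theorem mem_SB_iff {q k : ℤ} {p : Pl} : p ∈ SB q k ↔ ∃ a, lab q a k ∧ p ∈ arm q a := by
  constructor
  · rintro (h | h)
    · exact ⟨_, Or.inl rfl, h⟩
    · exact ⟨_, Or.inr rfl, h⟩
  · rintro ⟨a, h | h, hp⟩
    · left; rwa [← h]
    · right; rwa [← h]

theorem class_ne {q j k a b : ℤ} {p : Pl} (hq : 40 ≤ q) (j1 : 1 ≤ j) (j2 : j ≤ 3 * q + 1) (k1 : 1 ≤ k)
    (k2 : k ≤ 3 * q + 1) (hjk : j ≠ k) (ha : lab q a j) (hb : lab q b k) (h1 : p ∈ arm q a)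
    (h2 : p ∈ arm q b) : a % 3 ≠ b % 3 := by
  intro h
  obtain ⟨r, rfl⟩ : ∃ r, b = a + 3 * r := ⟨(b - a) / 3, by omega⟩
  have := same_class h1 h2
  unfold lab at *; omega

theorem dvd_of_lab {q i j k a b c : ℤ} (ha : lab q a i) (hb : lab q b j) (hc : lab q c k)
    (h : a + b + c = 9 * q + 3 ∨ a + b + c = 9 * q + 6) :
    (3 * q + 1) ∣ i + j + k ∨ (3 * q + 1) ∣ i + j + k - 3 := by
  have : ∃ r, a + b + c = i + j + k + r * (3 * q + 1) := by
    rcases ha with rfl | rfl <;> rcases hb with rfl | rfl <;> rcases hc with rfl | rfl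
    · exact ⟨0, by ring⟩
    · exact ⟨1, by ring⟩
    · exact ⟨1, by ring⟩
    · exact ⟨2, by ring⟩
    · exact ⟨1, by ring⟩
    · exact ⟨2, by ring⟩
    · exact ⟨2, by ring⟩
    · exact ⟨3, by ring⟩
  obtain ⟨r, hr⟩ := this
  rcases h with h | h
  · left; exact ⟨3 - r, by linear_combination h - hr⟩
  · right; exact ⟨3 - r, by linear_combination h - hr⟩

structure InR (q j : ℤ) : Prop where
  l : 1 ≤ j
  u : j ≤ 3 * q + 1

theorem triple_mem {q i j k : ℤ} {p : Pl} (hq : 40 ≤ q) (hi : InR q i) (hj : InR q j) (hk : InR q k)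
    (hij : i ≠ j) (hik : i ≠ k) (hjk : j ≠ k) (h1 : p ∈ SB q i) (h2 : p ∈ SB q j) (h3 : p ∈ SB q k) :
    ((3 * q + 1) ∣ i + j + k ∨ (3 * q + 1) ∣ i + j + k - 3) ∧ p ∈ SK q ∧ p ∉ SX q := by
  obtain ⟨a, la, ha⟩ := mem_SB_iff.1 h1
  obtain ⟨b, lb, hb⟩ := mem_SB_iff.1 h2
  obtain ⟨c, lc, hc⟩ := mem_SB_iff.1 h3
  have c1 := class_ne hq hi.l hi.u hj.l hj.u hij la lb ha hb
  have c2 := class_ne hq hi.l hi.u hk.l hk.u hik la lc ha hc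
  have c3 := class_ne hq hj.l hj.u hk.l hk.u hjk lb lc hb hc
  obtain ⟨i1, i2⟩ := hi
  obtain ⟨j1, j2⟩ := hj
  obtain ⟨k1, k2⟩ := hk
  rcases (by omega : (b - a) % 3 = 1 ∧ (c - a) % 3 = 2 ∨ (b - a) % 3 = 2 ∧ (c - a) % 3 = 1) with ⟨d, d'⟩ | ⟨d, d'⟩
  · obtain ⟨m, rfl⟩ : ∃ r, b = a + 1 + 3 * r := ⟨(b - a) / 3, by omega⟩
    obtain ⟨l, rfl⟩ : ∃ r, c = a + 2 + 3 * r := ⟨(c - a) / 3, by omega⟩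
    obtain ⟨h, h'⟩ := triple_core hq ha hb hc (by unfold lab at *; omega) (by unfold lab at *; omega)
      (by unfold lab at *; omega)
    exact ⟨dvd_of_lab la lb lc (by omega), h'⟩
  · obtain ⟨m, rfl⟩ : ∃ r, c = a + 1 + 3 * r := ⟨(c - a) / 3, by omega⟩
    obtain ⟨l, rfl⟩ : ∃ r, b = a + 2 + 3 * r := ⟨(b - a) / 3, by omega⟩
    obtain ⟨h, h'⟩ := triple_core hq ha hc hb (by unfold lab at *; omega) (by unfold lab at *; omega)
      (by unfold lab at *; omega)
    exact ⟨dvd_of_lab la lb lc (by omega), h'⟩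

theorem mult_le_three {q : ℤ} {p : Pl} (hq : 40 ≤ q) (k : Fin 4 → ℤ) (hk : ∀ i, InR q (k i))
    (hinj : Function.Injective k) (hp : ∀ i, p ∈ SB q (k i)) : False := by
  choose a la ha using fun i => mem_SB_iff.1 (hp i)
  have key : ∀ i j, i ≠ j → a i % 3 ≠ a j % 3 := fun i j hij =>
    class_ne hq (hk i).l (hk i).u (hk j).l (hk j).u (fun h => hij (hinj h)) (la i) (la j) (ha i) (ha j)
  have := key 0 1 (by decide)
  have := key 0 2 (by decide)
  have := key 0 3 (by decide)
  have := key 1 2 (by decide)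
  have := key 1 3 (by decide)
  have := key 2 3 (by decide)
  omega

theorem lab_exists {q c : ℤ} (hc : 1 ≤ c) (hc2 : c ≤ 6 * q + 2) : ∃ k, InR q k ∧ lab q c k := by
  by_cases h : c ≤ 3 * q + 1
  · exact ⟨c, ⟨hc, h⟩, Or.inl rfl⟩
  · exact ⟨c - (3 * q + 1), ⟨by omega, by omega⟩, Or.inr (by ring)⟩

theorem eq_of_dvd {q k k' : ℤ} (hq : 40 ≤ q) (hk : InR q k) (hk' : InR q k') (h : (3 * q + 1) ∣ k - k') :
    k = k' := by
  obtain ⟨r, hr⟩ := h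
  obtain ⟨h1, h2⟩ := hk
  obtain ⟨h3, h4⟩ := hk'
  have : r = 0 := by
    by_contra h
    rcases lt_or_gt_of_ne h with h | h
    · have : r ≤ -1 := by omega
      nlinarith
    · have : 1 ≤ r := by omega
      nlinarith
  subst this; omega

theorem triple_ex_aux {q i j k : ℤ} (hq : 40 ≤ q) (hi : InR q i) (hj : InR q j) (hk : InR q k)
    (hij : i ≠ j) (hik : i ≠ k) (hjk : j ≠ k) (d : ℤ) (hd : d = 0 ∨ d = 1)
    (h : (3 * q + 1) ∣ i + j + k - 3 * d) : ((SB q i ∩ SB q j) ∩ SB q k).Nonempty := by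
  obtain ⟨a, m, hr⟩ := rep_exists' hq hi.l hi.u hj.l hj.u hij
  obtain ⟨v1, v2, v3⟩ := hr.val
  obtain ⟨l, hl⟩ : ∃ l, l = 3 * q + d - a - m := ⟨_, rfl⟩
  have c1 : 1 ≤ a + 2 + 3 * l := by omega
  have c2 : a + 2 + 3 * l ≤ 6 * q + 2 := by omega
  obtain ⟨k', hk', lk⟩ := lab_exists c1 c2
  have hkk : k = k' := by
    apply eq_of_dvd hq hk hk'
    have e : ∃ r, i + j + k' - 3 * d = r * (3 * q + 1) := by
      unfold PRep.lb at *
      have h5 : a + (a + 1 + 3 * m) + (a + 2 + 3 * l) = 9 * q + 3 + 3 * d := by omega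
      rcases hr.lb with ⟨l1, l2⟩ | ⟨l1, l2⟩ <;> rcases l1 with l1 | l1 <;> rcases l2 with l2 | l2 <;>
        rcases lk with lk | lk
      · exact ⟨3, by linarith⟩
      · exact ⟨2, by linarith⟩
      · exact ⟨2, by linarith⟩
      · exact ⟨1, by linarith⟩
      · exact ⟨2, by linarith⟩
      · exact ⟨1, by linarith⟩
      · exact ⟨1, by linarith⟩
      · exact ⟨0, by linarith⟩
      · exact ⟨3, by linarith⟩
      · exact ⟨2, by linarith⟩
      · exact ⟨2, by linarith⟩
      · exact ⟨1, by linarith⟩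
      · exact ⟨2, by linarith⟩
      · exact ⟨1, by linarith⟩
      · exact ⟨1, by linarith⟩
      · exact ⟨0, by linarith⟩
    obtain ⟨r, hr'⟩ := e
    obtain ⟨r', hr''⟩ := h
    exact ⟨r' - r, by linear_combination hr'' - hr'⟩
  subst hkk
  obtain ⟨i1, i2⟩ := hi
  obtain ⟨j1, j2⟩ := hj
  obtain ⟨k1, k2⟩ := hk
  have lb := hr.lb
  have a1 := hr.a1
  have a2 := hr.a2
  have b1 := hr.b1
  have b2 := hr.b2
  have w2 : l ≤ m + q - 1 := by unfold lab at *; omega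
  have w3 : - q ≤ l := by unfold lab at *; omega
  have v1' : (m : ℝ) ≤ q - 1 := by exact_mod_cast v1
  have w2' : (l : ℝ) ≤ m + q - 1 := by exact_mod_cast w2
  have w3' : - (q : ℝ) ≤ l := by exact_mod_cast w3
  have hl' : (l : ℝ) = 3 * q + d - a - m := by exact_mod_cast hl
  have hcut : ∀ x, cut q x ≤ 3 / 5 := by
    intro x; rcases cut_cases q x with ⟨-, h⟩ | ⟨-, -, h⟩ <;> rw [h] <;> norm_num
  have hs : ∃ s : ℝ, 3 * s = 1 / 2 - d ∧ |s| < 11 / 50 := by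
    rcases hd with rfl | rfl
    · exact ⟨1 / 6, by norm_num, by norm_num [abs_of_pos]⟩
    · exact ⟨-(1 / 6), by norm_num, by norm_num [abs_of_pos]⟩
  obtain ⟨s, hs1, hs2⟩ := hs
  obtain ⟨p, hp, es, et⟩ := pair_point (q := q) (a := a) (m := m) s s hs2 hs2
    (by linarith) (by linarith) (by linarith) (by linarith [hcut a]) (by linarith [hcut (a + 1 + 3 * m)])
  refine ⟨p, ?_, ?_⟩
  · rw [pair_eq hq i1 i2 j1 j2 hij hr]; exact hp
  · refine mem_SB_iff.2 ⟨_, lk, hp.1.1, ?_, ?_⟩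
    · rw [Y_add3m, (chart q a m p).2.1, es, et]
      convert hs2 using 2
      linarith
    · rw [show a + 2 + 3 * l + 1 = a + 3 * (l + 1) by ring, gp_add3m, (chart q a m p).2.2.1, es, et]
      linarith [hcut (a + 2 + 3 * l)]

theorem triple_nonempty_iff {q i j k : ℤ} (hq : 40 ≤ q) (hi : InR q i) (hj : InR q j) (hk : InR q k)
    (hij : i ≠ j) (hik : i ≠ k) (hjk : j ≠ k) : ((SB q i ∩ SB q j) ∩ SB q k).Nonempty ↔
    ((3 * q + 1) ∣ i + j + k ∨ (3 * q + 1) ∣ i + j + k - 3) := by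
  constructor
  · rintro ⟨p, ⟨h1, h2⟩, h3⟩
    exact (triple_mem hq hi hj hk hij hik hjk h1 h2 h3).1
  · rintro (h | h)
    · exact triple_ex_aux hq hi hj hk hij hik hjk 0 (Or.inl rfl) (by simpa using h)
    · exact triple_ex_aux hq hi hj hk hij hik hjk 1 (Or.inr rfl) (by simpa using h)

theorem triple_convex {q i j k : ℤ} (hq : 40 ≤ q) (hi : InR q i) (hj : InR q j) (hk : InR q k)
    (hij : i ≠ j) (hik : i ≠ k) (hjk : j ≠ k) : Convex ℝ ((SB q i ∩ SB q j) ∩ SB q k) := by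
  have h1 := pair_convex hq hi.l hi.u hj.l hj.u hij
  have h2 := pair_convex hq hi.l hi.u hk.l hk.u hik
  have : (SB q i ∩ SB q j) ∩ SB q k = (SB q i ∩ SB q j) ∩ (SB q i ∩ SB q k) := by
    ext p; simp only [Set.mem_inter_iff]; tauto
  rw [this]; exact h1.inter h2

theorem Xpair_nonempty_iff' {q j k : ℤ} (hq : 40 ≤ q) (hj : InR q j) (hk : InR q k) (hjk : j < k) :
    ((SB q j ∩ SB q k) ∩ SX q).Nonempty ↔ (k = j + 3 ∨ (k = j + 3 * q - 2 ∧ j ≠ 2)) := by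
  obtain ⟨a, m, hr⟩ := rep_exists' hq hj.l hj.u hk.l hk.u hjk.ne
  rw [Xpair_nonempty_iff hq hj.l hj.u hk.l hk.u hjk.ne hr]
  obtain ⟨⟨v1, v2, v3⟩, a1, a2, b1, b2, lb⟩ := hr
  obtain ⟨j1, j2⟩ := hj
  obtain ⟨k1, k2⟩ := hk
  unfold lab at lb
  constructor
  · intro h; omega
  · intro h; omega

set_option linter.unusedVariables false
set_option linter.unusedTactic false
set_option linter.unnecessarySeqFocus false

/-! ### Mirror symmetry -/

noncomputable def Mr (q : ℤ) (p : Pl) : Pl := Pt q 0 (- Y q (6 * q + 3) p) (- Y q (6 * q + 2) p)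

theorem Y_Mr (q a : ℤ) (p : Pl) : Y q a (Mr q p) = - Y q (6 * q + 3 - a) p := by
  have h0 : Y q 0 (Mr q p) = - Y q (6 * q + 3) p := Y_Pt _ _ _ _
  have h1 : Y q (0 + 1) (Mr q p) = - Y q (6 * q + 2) p := Y_Pt1 _ _ _ _
  have h2 : Y q (0 + 2) (Mr q p) = - Y q (6 * q + 1) p := by
    have s1 := Y_sum q 0 (Mr q p)
    have s2 := Y_sum q (6 * q + 1) p
    rw [show 6 * q + 1 + 1 = 6 * q + 2 by ring, show 6 * q + 1 + 2 = 6 * q + 3 by ring] at s2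
    rw [h0, h1] at s1
    push_cast at s1 s2 ⊢
    norm_num at s1 ⊢
    linarith
  have h3 : a % 3 = 0 ∨ a % 3 = 1 ∨ a % 3 = 2 := by omega
  rcases h3 with h | h | h
  · obtain ⟨m, rfl⟩ : ∃ m, a = 0 + 3 * m := ⟨a / 3, by omega⟩
    rw [Y_add3m, h0, show 6 * q + 3 - (0 + 3 * m) = 6 * q + 3 + 3 * (-m) by ring, Y_add3m]
    push_cast; ring
  · obtain ⟨m, rfl⟩ : ∃ m, a = 0 + 1 + 3 * m := ⟨a / 3, by omega⟩
    rw [Y_add3m, h1, show 6 * q + 3 - (0 + 1 + 3 * m) = 6 * q + 2 + 3 * (-m) by ring, Y_add3m]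
    push_cast; ring
  · obtain ⟨m, rfl⟩ : ∃ m, a = 0 + 2 + 3 * m := ⟨a / 3, by omega⟩
    rw [Y_add3m, h2, show 6 * q + 3 - (0 + 2 + 3 * m) = 6 * q + 1 + 3 * (-m) by ring, Y_add3m]
    push_cast; ring

theorem gp_Mr (q a : ℤ) (p : Pl) : gp q a (Mr q p) = gp q (6 * q + 2 - a) p := by
  unfold gp
  rw [Y_Mr, Y_Mr, show 6 * q + 2 - a + 1 = 6 * q + 3 - a by ring,
    show 6 * q + 3 - (a + 1) = 6 * q + 2 - a by ring]; ring

theorem Y_ext (q : ℤ) {p p' : Pl} (h : ∀ a, Y q a p = Y q a p') : p = p' := by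
  rw [← Pt_Y q 0 p, ← Pt_Y q 0 p', h, h]

theorem Mr_Mr (q : ℤ) (p : Pl) : Mr q (Mr q p) = p := by
  apply Y_ext q
  intro a
  rw [Y_Mr, Y_Mr]; simp

theorem Mr_comb (q : ℤ) (p p' : Pl) (s t : ℝ) (h : s + t = 1) :
    Mr q (s • p + t • p') = s • Mr q p + t • Mr q p' := by
  apply Y_ext q
  intro a
  rw [Y_Mr, Y_comb _ _ _ _ _ _ h, Y_comb _ _ _ _ _ _ h, Y_Mr, Y_Mr]; ring

theorem SA_Mr (q : ℤ) (p : Pl) : Mr q p ∈ SA q ↔ p ∈ SA q := by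
  constructor
  · intro h a
    have := h (6 * q + 2 - a)
    rwa [gp_Mr, sub_sub_cancel] at this
  · intro h a
    rw [gp_Mr]; exact h _

theorem arm_Mr (q a : ℤ) (p : Pl) : Mr q p ∈ arm q a ↔ p ∈ arm q (6 * q + 3 - a) := by
  show (_ ∧ _ ∧ _) ↔ (_ ∧ _ ∧ _)
  rw [SA_Mr, Y_Mr, abs_neg, gp_Mr]
  have h1 : cut q (6 * q + 3 - a) = cut q a := by
    unfold cut
    congr 1
    apply propext
    omega
  have h2 : gp q (6 * q + 3 - a + 1) p = gp q (6 * q + 2 - (a + 1)) p := gp_of_mod p (by omega)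
  rw [h1, h2]

theorem SB_Mr (q k : ℤ) (p : Pl) : Mr q p ∈ SB q k ↔ p ∈ SB q (3 * q + 2 - k) := by
  show (_ ∨ _) ↔ (_ ∨ _)
  rw [arm_Mr, arm_Mr, show 6 * q + 3 - k = 3 * q + 2 - k + (3 * q + 1) by ring,
    show 6 * q + 3 - (k + (3 * q + 1)) = 3 * q + 2 - k by ring]
  exact or_comm

theorem SX_Mr (q : ℤ) (p : Pl) : Mr q p ∈ SX q ↔ p ∈ SX q := by
  show (_ ∧ _ ∧ _) ↔ (_ ∧ _ ∧ _)
  rw [SA_Mr]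
  have h1 : (∃ a, gp q a (Mr q p) < 3 / 5) ↔ ∃ a, gp q a p < 3 / 5 := by
    constructor
    · rintro ⟨a, h⟩; rw [gp_Mr] at h; exact ⟨_, h⟩
    · rintro ⟨a, h⟩; refine ⟨6 * q + 2 - a, ?_⟩; rwa [gp_Mr, sub_sub_cancel]
  have h2 : notcone q (Mr q p) ↔ notcone q p := by
    unfold notcone
    rw [gp_Mr, gp_Mr, gp_Mr, gp_of_mod (a := 6 * q + 2 - 1) (b := 1) p (by omega),
      gp_of_mod (a := 6 * q + 2 - 0) (b := 2) p (by omega),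
      gp_of_mod (a := 6 * q + 2 - 2) (b := 0) p (by omega), abs_sub_comm]
  rw [h1, h2]

theorem near_neg (z : ℝ) : near (-z) ↔ near z := by
  constructor
  · rintro ⟨i, h⟩
    refine ⟨-i, ?_⟩
    rw [abs_le] at *; push_cast; constructor <;> linarith
  · rintro ⟨i, h⟩
    refine ⟨-i, ?_⟩
    rw [abs_le] at *; push_cast; constructor <;> linarith

theorem SK_Mr_aux (q : ℤ) (p : Pl) (h : p ∈ SK q) : Mr q p ∈ SK q := by
  rcases h with h | ⟨a, h1, h2, h3, h4⟩
  · left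
    intro a
    rw [Y_Mr, near_neg, gp_Mr]
    exact ⟨(h _).1, (h _).2⟩
  · right
    refine ⟨6 * q + 2 - a, ?_⟩
    rw [Y_Mr, Y_Mr, near_neg, near_neg, gp_Mr, sub_sub_cancel,
      show 6 * q + 3 - (6 * q + 2 - a) = a + 1 by ring,
      show 6 * q + 3 - (6 * q + 2 - a + 1) = a by ring]
    exact ⟨h2, h1, h3, h4⟩

theorem SK_Mr (q : ℤ) (p : Pl) : Mr q p ∈ SK q ↔ p ∈ SK q :=
  ⟨fun h => by have := SK_Mr_aux q _ h; rwa [Mr_Mr] at this, SK_Mr_aux q p⟩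

def SC (S : Set Pl) : Prop := ∃ b ∈ S, StarConvex ℝ b S

theorem SC_Mr (q : ℤ) {S T : Set Pl} (h : ∀ p, Mr q p ∈ S ↔ p ∈ T) (hS : SC S) : SC T := by
  obtain ⟨b, hb, hs⟩ := hS
  refine ⟨Mr q b, (h _).1 (by rwa [Mr_Mr]), ?_⟩
  intro p hp s t h1 h2 h3
  rw [← h, Mr_comb _ _ _ _ _ h3, Mr_Mr]
  exact hs ((h _).2 hp) h1 h2 h3

theorem SC.contr {S : Set Pl} (h : SC S) : ContractibleSpace S := by
  obtain ⟨b, hb, hs⟩ := h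
  exact hs.contractibleSpace ⟨b, hb⟩

theorem SC.nonempty {S : Set Pl} (h : SC S) : S.Nonempty := by
  obtain ⟨b, hb, hs⟩ := h
  exact ⟨b, hb⟩

theorem SC_union {S T U : Set Pl} (b : Pl) (hU : ∀ p, p ∈ U ↔ p ∈ S ∨ p ∈ T) (hS : Convex ℝ S)
    (hT : Convex ℝ T) (hbS : b ∈ S) (hbT : b ∈ T) : SC U := by
  obtain rfl : U = S ∪ T := Set.ext hU
  exact ⟨b, Or.inl hbS, contr_union b hS hT hbS hbT⟩

/-! ### Single sets -/

theorem mem_armv {q k : ℤ} {p : Pl} : p ∈ arm q (k + (3 * q + 1)) ↔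
    p ∈ SA q ∧ |Y q (k + 1 + 3 * q) p| < 11 / 50 ∧ cut q (k + (3 * q + 1)) < gp q (k + 2) p := by
  show (_ ∧ _ ∧ _) ↔ _
  rw [show k + (3 * q + 1) = k + 1 + 3 * q by ring, show k + 1 + 3 * q + 1 = k + 2 + 3 * q by ring, gp_add3m]

theorem pt_chart (q k : ℤ) (s t : ℝ) : ∃ p, Y q k p = s ∧ Y q (k + 1 + 3 * q) p = t :=
  ⟨Pt q k s (t + q), Y_Pt _ _ _ _, Y_Pt3 _ _ _ _ _⟩

theorem SB_one (q : ℤ) (hq : 40 ≤ q) {p : Pl} : p ∈ SB q 1 ↔ p ∈ arm q (1 + (3 * q + 1)) := by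
  have hqr : (40 : ℝ) ≤ q := by exact_mod_cast hq
  constructor
  · rintro (h | h)
    · obtain ⟨hA, hx, hc⟩ := h
      obtain ⟨e1, e2, e3, e4, e5⟩ := chart q 1 q p
      obtain ⟨g0, g1, g2⟩ := (SA_iff q 1 p).1 hA
      rw [show cut q 1 = 3 / 5 by unfold cut; rw [if_neg (by omega)]] at hc
      rw [abs_lt] at hx
      push_cast at *
      rw [mem_armv]
      rw [show cut q (1 + (3 * q + 1)) = 3 / 5 by unfold cut; rw [if_neg (by omega)], abs_lt]
      refine ⟨hA, ⟨?_, ?_⟩, ?_⟩ <;> linarith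
    · exact h
  · exact Or.inr

theorem SB_SC_aux {q k : ℤ} (hq : 40 ≤ q) (k1 : 1 ≤ k) (k2 : k ≤ 3 * q) : SC (SB q k) := by
  have hqr : (40 : ℝ) ≤ q := by exact_mod_cast hq
  have k2' : (k : ℝ) ≤ 3 * q := by exact_mod_cast k2
  have hcut : ∀ x, cut q x ≤ 3 / 5 := by
    intro x; rcases cut_cases q x with ⟨-, h⟩ | ⟨-, -, h⟩ <;> rw [h] <;> norm_num
  by_cases hk : k = 1
  · subst hk
    obtain ⟨p, hp, -, -⟩ := pair_point (q := q) (a := 1) (m := q) (1 / 10) (1 / 20)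
      (by norm_num [abs_of_pos]) (by norm_num [abs_of_pos]) (by linarith) (by push_cast; linarith)
      (by push_cast; linarith)
      (by push_cast; linarith [hcut 1]) (by push_cast; linarith [hcut (1 + 1 + 3 * q)])
    have : SB q 1 = arm q (1 + (3 * q + 1)) := Set.ext fun p => SB_one q hq
    rw [this]
    rw [show (1 : ℤ) + 1 + 3 * q = 1 + (3 * q + 1) by ring] at hp
    exact ⟨p, hp.2, (arm_convex _ _).starConvex hp.2⟩
  · have k1' : (2 : ℝ) ≤ k := by exact_mod_cast (by omega : 2 ≤ k)
    obtain ⟨p, hp, -, -⟩ := pair_point (q := q) (a := k) (m := q) (1 / 50) (-(1 / 50))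
      (by norm_num [abs_of_pos]) (by norm_num [abs_of_pos]) (by linarith) (by linarith) (by linarith)
      (by linarith [hcut k]) (by linarith [hcut (k + 1 + 3 * q)])
    rw [show k + 1 + 3 * q = k + (3 * q + 1) by ring] at hp
    exact SC_union p (fun _ => Iff.rfl) (arm_convex _ _) (arm_convex _ _) hp.1 hp.2

theorem SB_SC {q k : ℤ} (hq : 40 ≤ q) (hk : InR q k) : SC (SB q k) := by
  by_cases h : k ≤ 3 * q
  · exact SB_SC_aux hq hk.l h
  · have h1 := hk.u
    refine SC_Mr q (S := SB q 1) (fun p => ?_) (SB_SC_aux hq le_rfl (by omega))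
    rw [SB_Mr, show 3 * q + 2 - 1 = k by omega]

set_option linter.unusedVariables false
set_option linter.unusedTactic false
set_option linter.unnecessarySeqFocus false

/-! ### Intersections of `X` with single sets -/

theorem lchart (q k : ℤ) (p : Pl) :
    Y q (k + 1) p = Y q (k + 1 + 3 * q) p + q ∧
    Y q (k + 2) p = 2 * q + 1 / 2 - k - Y q k p - Y q (k + 1 + 3 * q) p ∧
    gp q k p = Y q k p - Y q (k + 1 + 3 * q) p ∧
    gp q (k + 1) p = k - 1 / 2 + Y q k p + 2 * Y q (k + 1 + 3 * q) p ∧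
    gp q (k + 2) p = 3 * q + 3 / 2 - k - 2 * Y q k p - Y q (k + 1 + 3 * q) p := by
  obtain ⟨e1, e2, e3, e4, e5⟩ := chart q k q p
  refine ⟨e1, ?_, ?_, ?_, ?_⟩ <;> linarith

theorem near_q {q k : ℤ} {p : Pl} : near (Y q (k + 1) p) ↔ near (Y q (k + 1 + 3 * q) p) := by
  rw [Y_add3m, near_add]

theorem XK {q k : ℤ} {p : Pl} (hA : p ∈ SA q) (h0 : gp q k p < 3 / 5) (h1 : 3 / 5 < gp q (k + 1) p)
    (h2 : 3 / 5 < gp q (k + 2) p) (hx : |Y q k p| < 11 / 50 ∨ |Y q (k + 1 + 3 * q) p| < 11 / 50) :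
    p ∉ SK q ↔ - (39 / 50) < Y q (k + 1 + 3 * q) p ∧ Y q k p < 39 / 50 := by
  obtain ⟨e1, e2, e3, e4, e5⟩ := lchart q k p
  obtain ⟨g0, -, -⟩ := (SA_iff q k p).1 hA
  rw [SK_iff q k, near_q]
  set u := Y q k p
  set v := Y q (k + 1 + 3 * q) p
  have key : near u → near v → 1 / 2 ≤ gp q k p → ¬ (- (39 / 50) < v ∧ u < 39 / 50) := by
    rintro nu nv hg ⟨a1, a2⟩
    rcases hx with hx | hx <;> rw [abs_lt] at hx
    · have := near_int nv (-1) (by rw [abs_lt]; push_cast; constructor <;> linarith)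
      rw [abs_le] at this; push_cast at this; linarith
    · have := near_int nu 1 (by rw [abs_lt]; push_cast; constructor <;> linarith)
      rw [abs_le] at this; push_cast at this; linarith
  constructor
  · intro h
    by_contra hc
    apply h
    right; left
    have : v ≤ - (39 / 50) ∨ 39 / 50 ≤ u := by
      by_contra h3; push Not at h3; exact hc h3
    rcases hx with hx | hx <;> rw [abs_lt] at hx
    · have hv : v ≤ - (39 / 50) := by rcases this with h | h <;> linarith
      refine ⟨near_of 0 ?_ ?_, near_of (-1) ?_ ?_, ?_, ?_⟩ <;> push_cast <;> linarith
    · have hv : 39 / 50 ≤ u := by rcases this with h | h <;> linarith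
      refine ⟨near_of 1 ?_ ?_, near_of 0 ?_ ?_, ?_, ?_⟩ <;> push_cast <;> linarith
  · intro hr h
    rcases h with ⟨a, b, -, c, -⟩ | ⟨a, b, c, -⟩ | ⟨-, -, -, h⟩ | ⟨-, -, -, h⟩
    · exact key a b c hr
    · exact key a b c hr
    · linarith
    · linarith

theorem SC_X_gen {q k : ℤ} (hq : 40 ≤ q) (k1 : 3 ≤ k) (k2 : k ≤ 3 * q) (C : Set Pl)
    (cC : Convex ℝ C) (hC : ∀ p ∈ SB q k, (p ∈ SX q ↔ gp q k p < 3 / 5 ∧ p ∈ C))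
    (hG : ∀ p ∈ SB q k, p ∈ SX q → 3 / 5 < gp q (k + 1) p ∧ 3 / 5 < gp q (k + 2) p)
    (hs : ∀ p, Y q k p = 1 / 50 → Y q (k + 1 + 3 * q) p = - (1 / 50) → p ∈ C) :
    SC (SX q ∩ SB q k) ∧ SC ((SX q ∩ SB q k) \ SK q) := by
  have hqr : (40 : ℝ) ≤ q := by exact_mod_cast hq
  have k2' : (k : ℝ) ≤ 3 * q := by exact_mod_cast k2
  have hcut : ∀ x, cut q x ≤ 3 / 5 := by
    intro x; rcases cut_cases q x with ⟨-, h⟩ | ⟨-, -, h⟩ <;> rw [h] <;> norm_num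
  have k1' : (2 : ℝ) ≤ k := by exact_mod_cast (by omega : 2 ≤ k)
  obtain ⟨b, hb, bu, bv⟩ := pair_point (q := q) (a := k) (m := q) (1 / 50) (-(1 / 50))
    (by norm_num [abs_of_pos]) (by norm_num [abs_of_pos]) (by linarith) (by linarith) (by linarith)
    (by linarith [hcut k]) (by linarith [hcut (k + 1 + 3 * q)])
  rw [show k + 1 + 3 * q = k + (3 * q + 1) by ring] at hb
  have bC := hs b bu bv
  obtain ⟨-, -, e3, -, -⟩ := lchart q k b
  have bg : gp q k b < 3 / 5 := by rw [e3, bu, bv]; norm_num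
  have c0 : Convex ℝ {p | gp q k p < 3 / 5} := (gp_aff q k).lt (Aff.const _)
  have c1 : Convex ℝ {p | - (39 / 50) < Y q (k + 1 + 3 * q) p} := (Aff.const _).lt (Y_aff _ _)
  have c2 : Convex ℝ {p | Y q k p < 39 / 50} := (Y_aff _ _).lt (Aff.const _)
  constructor
  · refine SC_union b (S := arm q k ∩ ({p | gp q k p < 3 / 5} ∩ C))
      (T := arm q (k + (3 * q + 1)) ∩ ({p | gp q k p < 3 / 5} ∩ C)) (fun p => ?_)
      ((arm_convex _ _).inter (c0.inter cC)) ((arm_convex _ _).inter (c0.inter cC))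
      ⟨hb.1, bg, bC⟩ ⟨hb.2, bg, bC⟩
    constructor
    · rintro ⟨h1, h2⟩
      have h3 := (hC p h2).1 h1
      rcases h2 with h2 | h2
      · exact Or.inl ⟨h2, h3⟩
      · exact Or.inr ⟨h2, h3⟩
    · rintro (⟨h1, h2⟩ | ⟨h1, h2⟩)
      · exact ⟨(hC p (Or.inl h1)).2 h2, Or.inl h1⟩
      · exact ⟨(hC p (Or.inr h1)).2 h2, Or.inr h1⟩
  · have hK : ∀ p ∈ SB q k, p ∈ SX q → (p ∉ SK q ↔
        - (39 / 50) < Y q (k + 1 + 3 * q) p ∧ Y q k p < 39 / 50) := by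
      intro p hp hX
      have h3 := (hC p hp).1 hX
      have h4 := hG p hp hX
      refine XK hX.1 h3.1 h4.1 h4.2 ?_
      rcases hp with h | h
      · exact Or.inl h.2.1
      · exact Or.inr (mem_armv.1 h).2.1
    refine SC_union b (S := arm q k ∩ (({p | gp q k p < 3 / 5} ∩ C) ∩
        ({p | - (39 / 50) < Y q (k + 1 + 3 * q) p} ∩ {p | Y q k p < 39 / 50})))
      (T := arm q (k + (3 * q + 1)) ∩ (({p | gp q k p < 3 / 5} ∩ C) ∩
        ({p | - (39 / 50) < Y q (k + 1 + 3 * q) p} ∩ {p | Y q k p < 39 / 50}))) (fun p => ?_)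
      ((arm_convex _ _).inter ((c0.inter cC).inter (c1.inter c2)))
      ((arm_convex _ _).inter ((c0.inter cC).inter (c1.inter c2)))
      ⟨hb.1, ⟨bg, bC⟩, ?_, ?_⟩ ⟨hb.2, ⟨bg, bC⟩, ?_, ?_⟩
    · constructor
      · rintro ⟨⟨h1, h2⟩, h4⟩
        have h3 := (hC p h2).1 h1
        have h5 := (hK p h2 h1).1 h4
        rcases h2 with h2 | h2
        · exact Or.inl ⟨h2, h3, h5⟩
        · exact Or.inr ⟨h2, h3, h5⟩
      · rintro (⟨h1, h2, h3⟩ | ⟨h1, h2, h3⟩)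
        · have h4 := (hC p (Or.inl h1)).2 h2
          exact ⟨⟨h4, Or.inl h1⟩, (hK p (Or.inl h1) h4).2 h3⟩
        · have h4 := (hC p (Or.inr h1)).2 h2
          exact ⟨⟨h4, Or.inr h1⟩, (hK p (Or.inr h1) h4).2 h3⟩
    all_goals
      simp only [Set.mem_ofPred_eq, bu, bv]
      norm_num

theorem SC_X_zero {q k : ℤ} (hq : 40 ≤ q) (k1 : 3 ≤ k) (k2 : k ≤ 3 * q) (hk : k % 3 = 0) :
    SC (SX q ∩ SB q k) ∧ SC ((SX q ∩ SB q k) \ SK q) := by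
  have hqr : (40 : ℝ) ≤ q := by exact_mod_cast hq
  have k1' : (3 : ℝ) ≤ k := by exact_mod_cast k1
  have k2' : (k : ℝ) ≤ 3 * q := by exact_mod_cast k2
  have m0 : ∀ p, gp q 0 p = gp q k p := fun p => gp_of_mod p (by omega)
  have m1 : ∀ p, gp q 1 p = gp q (k + 1) p := fun p => gp_of_mod p (by omega)
  have m2 : ∀ p, gp q 2 p = gp q (k + 2) p := fun p => gp_of_mod p (by omega)
  have hcu : cut q k = 3 / 5 := by unfold cut; rw [if_neg (by omega)]
  -- main analysis
  have main : ∀ p ∈ SB q k, p ∈ SX q → gp q k p < 3 / 5 ∧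
      0 ≤ gp q (k + 2) p - gp q k p ∧ 3 / 5 < gp q (k + 1) p ∧ 3 / 5 < gp q (k + 2) p := by
    intro p hp hX
    obtain ⟨e1, e2, e3, e4, e5⟩ := lchart q k p
    obtain ⟨hA, hex, hn⟩ := hX
    obtain ⟨g0, g1, g2⟩ := (SA_iff q k p).1 hA
    rw [ex_gp_iff q k] at hex
    rcases hp with hp | hp
    · obtain ⟨-, hx, hc⟩ := hp
      rw [hcu] at hc
      rw [abs_lt] at hx
      have h2 : 3 / 5 < gp q (k + 2) p := by linarith
      refine ⟨?_, by linarith, hc, h2⟩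
      rcases hex with h | h | h <;> linarith
    · obtain ⟨-, hx, hc⟩ := mem_armv.1 hp
      rw [abs_lt] at hx
      have h1 : 3 / 5 < gp q (k + 1) p := by linarith
      have hk3 : k = 3 * q ∨ k + 3 ≤ 3 * q := by omega
      rcases hk3 with hk3 | hk3
      · have hkr : (k : ℝ) = 3 * q := by exact_mod_cast hk3
        have h2 : 3 / 5 < gp q (k + 2) p := by
          by_contra hcon
          push Not at hcon
          refine incone hq ?_ ?_ hn
          · rw [m0, m2, abs_le]; constructor <;> linarith
          · rw [m1]; linarith
        have h0 : gp q k p < 3 / 5 := by rcases hex with h | h | h <;> linarith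
        refine ⟨h0, ?_, h1, h2⟩
        by_contra hcon
        push Not at hcon
        refine incone hq ?_ ?_ hn
        · rw [m0, m2, abs_le]; constructor <;> linarith
        · rw [m1]; linarith
      · have hkr : (k : ℝ) + 3 ≤ 3 * q := by exact_mod_cast hk3
        have hcv : cut q (k + (3 * q + 1)) = 3 / 5 := by unfold cut; rw [if_neg (by omega)]
        rw [hcv] at hc
        have h0 : gp q k p < 3 / 5 := by rcases hex with h | h | h <;> linarith
        exact ⟨h0, by linarith, h1, hc⟩
  refine SC_X_gen hq k1 k2
    {p | 13 / 10 * (3 * gp q (k + 1) p - (3 * q + 1)) < (2 * (3 * q + 1)) * (gp q (k + 2) p - gp q k p)}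
    (((((gp_aff q (k + 1)).mul 3).sub (Aff.const _)).mul _).lt (((gp_aff _ _).sub (gp_aff _ _)).mul _))
    ?_ (fun p hp hX => (main p hp hX).2.2) ?_
  · intro p hp
    constructor
    · intro hX
      have h := main p hp hX
      refine ⟨h.1, ?_⟩
      have hn := hX.2.2
      unfold notcone at hn
      rw [m0, m1, m2, abs_sub_comm, abs_of_nonneg h.2.1] at hn
      exact hn
    · rintro ⟨h1, h2⟩
      have hA : p ∈ SA q := by
        rcases hp with h | h
        · exact h.1
        · exact h.1
      refine ⟨hA, ⟨k, h1⟩, ?_⟩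
      unfold notcone
      rw [m0, m1, m2, abs_sub_comm]
      refine lt_of_lt_of_le h2 (mul_le_mul_of_nonneg_left (le_abs_self _) (by linarith))
  · intro p hu hv
    obtain ⟨e1, e2, e3, e4, e5⟩ := lchart q k p
    have h1 : gp q (k + 1) p ≤ 3 * q + 1 := by rw [e4, hu, hv]; linarith
    have h2 : 13 / 10 < gp q (k + 2) p - gp q k p := by rw [e3, e5, hu, hv]; linarith
    have := mul_lt_mul_of_pos_left h2 (by linarith : (0 : ℝ) < 2 * (3 * q + 1))
    simp only [Set.mem_ofPred_eq]
    linarith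

theorem SC_X_one {q k : ℤ} (hq : 40 ≤ q) (k1 : 4 ≤ k) (k2 : k ≤ 3 * q - 2) (hk : k % 3 = 1) :
    SC (SX q ∩ SB q k) ∧ SC ((SX q ∩ SB q k) \ SK q) := by
  have hqr : (40 : ℝ) ≤ q := by exact_mod_cast hq
  have k1' : (4 : ℝ) ≤ k := by exact_mod_cast k1
  have k2' : (k : ℝ) ≤ 3 * q - 2 := by exact_mod_cast k2
  have m0 : ∀ p, gp q 1 p = gp q k p := fun p => gp_of_mod p (by omega)
  have hcu : cut q k = 3 / 5 := by unfold cut; rw [if_neg (by omega)]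
  have hcv : cut q (k + (3 * q + 1)) = 3 / 5 := by unfold cut; rw [if_neg (by omega)]
  have main : ∀ p ∈ SB q k, 3 / 5 < gp q (k + 1) p ∧ 3 / 5 < gp q (k + 2) p := by
    intro p hp
    obtain ⟨e1, e2, e3, e4, e5⟩ := lchart q k p
    rcases hp with hp | hp
    · obtain ⟨hA, hx, hc⟩ := hp
      obtain ⟨g0, g1, g2⟩ := (SA_iff q k p).1 hA
      rw [hcu] at hc
      rw [abs_lt] at hx
      exact ⟨hc, by linarith⟩
    · obtain ⟨hA, hx, hc⟩ := mem_armv.1 hp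
      obtain ⟨g0, g1, g2⟩ := (SA_iff q k p).1 hA
      rw [hcv] at hc
      rw [abs_lt] at hx
      exact ⟨by linarith, hc⟩
  refine SC_X_gen hq (by omega) (by omega) Set.univ convex_univ ?_ (fun p hp _ => main p hp)
    (fun _ _ _ => trivial)
  intro p hp
  have h := main p hp
  constructor
  · rintro ⟨hA, hex, hn⟩
    rw [ex_gp_iff q k] at hex
    refine ⟨?_, trivial⟩
    rcases hex with h | h | h <;> linarith
  · rintro ⟨h1, -⟩
    have hA : p ∈ SA q := by
      rcases hp with h | h
      · exact h.1
      · exact h.1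
    refine ⟨hA, ⟨k, h1⟩, notcone_of_small hq ?_⟩
    rw [m0]; linarith

theorem SC_X_first {q : ℤ} (hq : 40 ≤ q) :
    SC (SX q ∩ SB q 1) ∧ SC ((SX q ∩ SB q 1) \ SK q) := by
  have hqr : (40 : ℝ) ≤ q := by exact_mod_cast hq
  have hcv : cut q (1 + (3 * q + 1)) = 3 / 5 := by unfold cut; rw [if_neg (by omega)]
  have hB : ∀ p, p ∈ SB q 1 ↔ p ∈ arm q (1 + (3 * q + 1)) := fun p => SB_one q hq
  have hX : ∀ p ∈ arm q (1 + (3 * q + 1)), (p ∈ SX q ↔ gp q 1 p < 3 / 5 ∨ gp q (1 + 1) p < 3 / 5) := by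
    intro p hp
    obtain ⟨e1, e2, e3, e4, e5⟩ := lchart q 1 p
    obtain ⟨hA, hx, hc⟩ := mem_armv.1 hp
    rw [abs_lt] at hx
    rw [hcv] at hc
    simp only [Int.cast_one] at e4 e5
    constructor
    · rintro ⟨-, hex, -⟩
      rw [ex_gp_iff q 1] at hex
      rcases hex with h | h | h
      · exact Or.inl h
      · exact Or.inr h
      · linarith
    · rintro (h | h)
      · exact ⟨hA, ⟨_, h⟩, notcone_of_small hq (by linarith)⟩
      · exact ⟨hA, ⟨_, h⟩, notcone_of_small hq (by
          rw [e4] at h; rw [e3]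
          generalize Y q (1 + 1 + 3 * q) p = v at *
          linarith)⟩
  have hK : ∀ p ∈ arm q (1 + (3 * q + 1)), (gp q 1 p < 3 / 5 ∨ gp q (1 + 1) p < 3 / 5) → (p ∉ SK q ↔
      (gp q 1 p < 3 / 5 ∧ Y q 1 p < 39 / 50) ∨
      (gp q (1 + 1) p < 3 / 5 ∧ Y q 1 p + Y q (1 + 1 + 3 * q) p < 7 / 25)) := by
    intro p hp hor
    obtain ⟨e1, e2, e3, e4, e5⟩ := lchart q 1 p
    obtain ⟨hA, hx, hc⟩ := mem_armv.1 hp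
    obtain ⟨g0, g1, g2⟩ := (SA_iff q 1 p).1 hA
    rw [abs_lt] at hx
    rw [hcv] at hc
    rw [SK_iff q 1, near_q]
    set u := Y q 1 p
    set v := Y q (1 + 1 + 3 * q) p
    simp only [Int.cast_one] at e2 e4 e5
    have key : near u → 1 / 2 ≤ gp q 1 p → 39 / 50 ≤ u := by
      intro nu hg
      by_contra hcon
      push Not at hcon
      have := near_int nu 0 (by rw [abs_lt]; push_cast; constructor <;> linarith)
      rw [abs_le] at this; push_cast at this; linarith
    constructor
    · intro h
      by_contra hcon
      push Not at hcon
      apply h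
      rcases hor with ho | ho
      · have h1 := hcon.1 ho
        right; left
        refine ⟨near_of 1 ?_ ?_, near_of 0 ?_ ?_, ?_, ?_⟩ <;> push_cast <;> linarith
      · have h1 := hcon.2 ho
        right; right; left
        refine ⟨near_of 0 ?_ ?_, near_of (2 * q - 1) ?_ ?_, ?_, ?_⟩ <;> push_cast <;> linarith
    · rintro hr (⟨a, b, -, c, -⟩ | ⟨a, b, c, -⟩ | ⟨-, a, b, c⟩ | ⟨-, -, -, h⟩)
      · have := key a c
        rcases hr with ⟨h1, h2⟩ | ⟨h1, h2⟩ <;> linarith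
      · have := key a c
        rcases hr with ⟨h1, h2⟩ | ⟨h1, h2⟩ <;> linarith
      · have := near_half a (2 * q - 1)
        push_cast at this
        rcases this with h | h <;> rcases hr with ⟨h1, h2⟩ | ⟨h1, h2⟩ <;> linarith
      · linarith
  obtain ⟨b, bu, bv⟩ := pt_chart q 1 (1 / 20) 0
  obtain ⟨e1, e2, e3, e4, e5⟩ := lchart q 1 b
  simp only [Int.cast_one] at e4 e5
  rw [bu, bv] at e3 e4 e5
  have hb : b ∈ arm q (1 + (3 * q + 1)) := by
    rw [mem_armv, SA_iff q 1, hcv, bv, e3, e4, e5, abs_zero]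
    refine ⟨⟨?_, ?_, ?_⟩, ?_, ?_⟩ <;> linarith
  have c0 : Convex ℝ {p | gp q 1 p < 3 / 5} := (gp_aff q _).lt (Aff.const _)
  have c1 : Convex ℝ {p | gp q (1 + 1) p < 3 / 5} := (gp_aff q _).lt (Aff.const _)
  have c2 : Convex ℝ {p | Y q 1 p < 39 / 50} := (Y_aff _ _).lt (Aff.const _)
  have c3 : Convex ℝ {p | Y q 1 p + Y q (1 + 1 + 3 * q) p < 7 / 25} :=
    ((Y_aff _ _).add (Y_aff _ _)).lt (Aff.const _)
  constructor
  · refine SC_union b (S := arm q (1 + (3 * q + 1)) ∩ {p | gp q 1 p < 3 / 5})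
      (T := arm q (1 + (3 * q + 1)) ∩ {p | gp q (1 + 1) p < 3 / 5}) (fun p => ?_)
      ((arm_convex _ _).inter c0) ((arm_convex _ _).inter c1)
      ⟨hb, ?_⟩ ⟨hb, ?_⟩
    · constructor
      · rintro ⟨h1, h2⟩
        rw [hB] at h2
        rcases (hX p h2).1 h1 with h3 | h3
        · exact Or.inl ⟨h2, h3⟩
        · exact Or.inr ⟨h2, h3⟩
      · rintro (⟨h1, h2⟩ | ⟨h1, h2⟩)
        · exact ⟨(hX p h1).2 (Or.inl h2), (hB p).2 h1⟩
        · exact ⟨(hX p h1).2 (Or.inr h2), (hB p).2 h1⟩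
    · simp only [Set.mem_ofPred_eq]; rw [e3]; norm_num
    · simp only [Set.mem_ofPred_eq]; rw [e4]; norm_num
  · refine SC_union b (S := arm q (1 + (3 * q + 1)) ∩ ({p | gp q 1 p < 3 / 5} ∩ {p | Y q 1 p < 39 / 50}))
      (T := arm q (1 + (3 * q + 1)) ∩ ({p | gp q (1 + 1) p < 3 / 5} ∩
        {p | Y q 1 p + Y q (1 + 1 + 3 * q) p < 7 / 25})) (fun p => ?_)
      ((arm_convex _ _).inter (c0.inter c2)) ((arm_convex _ _).inter (c1.inter c3))
      ⟨hb, ?_, ?_⟩ ⟨hb, ?_, ?_⟩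
    · constructor
      · rintro ⟨⟨h1, h2⟩, h5⟩
        rw [hB] at h2
        have h4 := (hX p h2).1 h1
        rcases (hK p h2 h4).1 h5 with h3 | h3
        · exact Or.inl ⟨h2, h3⟩
        · exact Or.inr ⟨h2, h3⟩
      · rintro (⟨h1, h2⟩ | ⟨h1, h2⟩)
        · exact ⟨⟨(hX p h1).2 (Or.inl h2.1), (hB p).2 h1⟩, (hK p h1 (Or.inl h2.1)).2 (Or.inl h2)⟩
        · exact ⟨⟨(hX p h1).2 (Or.inr h2.1), (hB p).2 h1⟩, (hK p h1 (Or.inr h2.1)).2 (Or.inr h2)⟩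
    · simp only [Set.mem_ofPred_eq]; rw [e3]; norm_num
    · simp only [Set.mem_ofPred_eq]; rw [bu]; norm_num
    · simp only [Set.mem_ofPred_eq]; rw [e4]; norm_num
    · simp only [Set.mem_ofPred_eq]; rw [bu, bv]; norm_num

theorem SC_X_Mr {q j k : ℤ} (hk : k = 3 * q + 2 - j)
    (h : SC (SX q ∩ SB q j) ∧ SC ((SX q ∩ SB q j) \ SK q)) :
    SC (SX q ∩ SB q k) ∧ SC ((SX q ∩ SB q k) \ SK q) := by
  subst hk
  refine ⟨SC_Mr q (fun p => ?_) h.1, SC_Mr q (fun p => ?_) h.2⟩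
  · show (_ ∧ _) ↔ (_ ∧ _)
    rw [SX_Mr, SB_Mr]
  · show ((_ ∧ _) ∧ ¬ _) ↔ ((_ ∧ _) ∧ ¬ _)
    rw [SX_Mr, SB_Mr, SK_Mr]

theorem SC_X {q k : ℤ} (hq : 40 ≤ q) (hk : InR q k) :
    SC (SX q ∩ SB q k) ∧ SC ((SX q ∩ SB q k) \ SK q) := by
  have h1 := hk.l
  have h2 := hk.u
  have h3 : k % 3 = 0 ∨ k % 3 = 1 ∨ k % 3 = 2 := by omega
  rcases h3 with h | h | h
  · exact SC_X_zero hq (by omega) (by omega) h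
  · by_cases k1 : k = 1
    · subst k1; exact SC_X_first hq
    · by_cases k2 : k = 3 * q + 1
      · exact SC_X_Mr (j := 1) (by omega) (SC_X_first hq)
      · exact SC_X_one hq (by omega) (by omega) h
  · exact SC_X_Mr (j := 3 * q + 2 - k) (by omega) (SC_X_zero hq (by omega) (by omega) (by omega))

set_option linter.unusedVariables false
set_option linter.unusedTactic false
set_option linter.unnecessarySeqFocus false

/-! ### `B_k \ K` is contractible -/

theorem cut_v {q k : ℤ} (hq : 40 ≤ q) (k2 : k ≤ 3 * q) :
    (k = 3 * q ∧ cut q (k + (3 * q + 1)) = 0) ∨ (k + 1 ≤ 3 * q ∧ 1 ≤ q ∧ (cut q (k + (3 * q + 1)) = 3 / 5 ∨ k < 1)) := by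
  by_cases h : k = 3 * q
  · left; refine ⟨h, ?_⟩; unfold cut; rw [if_pos (by omega)]
  · right; refine ⟨by omega, by omega, ?_⟩
    by_cases h2 : k < 1
    · exact Or.inr h2
    · left; unfold cut; rw [if_neg (by omega)]

/-- near and half-near facts -/
theorem near_t {q k i : ℤ} {p : Pl} (h : near (Y q (k + 2) p)) :
    7 / 25 ≤ Y q k p - i + Y q (k + 1 + 3 * q) p ∨ Y q k p - i + Y q (k + 1 + 3 * q) p ≤ - (7 / 25) := by
  obtain ⟨-, e2, -, -, -⟩ := lchart q k p
  have := near_half h (2 * q - k - i)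
  push_cast at this
  rcases this with h | h
  · left; linarith
  · right; linarith

theorem retr_out {q k : ℤ} {p : Pl} (hq : 40 ≤ q) (k1 : 1 ≤ k) (k2 : k ≤ 3 * q)
    (hp : p ∈ arm q (k + (3 * q + 1)))
    (h : Y q k p < 2 / 5 ∨ Y q (k + 1 + 3 * q) p = 0) : p ∉ SK q := by
  have hqr : (40 : ℝ) ≤ q := by exact_mod_cast hq
  have k1' : (1 : ℝ) ≤ k := by exact_mod_cast k1
  obtain ⟨e1, e2, e3, e4, e5⟩ := lchart q k p
  obtain ⟨hA, hx, hc⟩ := mem_armv.1 hp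
  obtain ⟨g0, g1, g2⟩ := (SA_iff q k p).1 hA
  rw [abs_lt] at hx
  have ht := fun i h => near_t (q := q) (k := k) (p := p) (i := i) h
  rw [SK_iff q k, near_q]
  set u := Y q k p
  set v := Y q (k + 1 + 3 * q) p
  have key : near u → 1 / 2 ≤ gp q k p → 39 / 50 ≤ u := by
    intro nu hg
    by_contra hcon
    push Not at hcon
    have := near_int nu 0 (by rw [abs_lt]; push_cast; constructor <;> linarith)
    rw [abs_le] at this; push_cast at this; linarith
  rintro (⟨a, b, c, d, -⟩ | ⟨a, b, c, d⟩ | ⟨-, a, b, c⟩ | ⟨-, a, b, c⟩)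
  · have h1 := key a d
    rcases h with h | h
    · linarith
    · obtain ⟨i, hi⟩ := a
      rw [abs_le] at hi
      rcases ht i c with h3 | h3 <;> linarith
  · have h1 := key a c
    rcases h with h | h <;> linarith
  · have hk : k = 1 := by
      by_contra hcon
      have : (2 : ℝ) ≤ k := by exact_mod_cast (by omega : 2 ≤ k)
      linarith
    have hkr : (k : ℝ) = 1 := by exact_mod_cast hk
    have := ht 0 a
    push_cast at this
    rcases h with h | h <;> rcases this with h3 | h3 <;> linarith
  · rcases cut_v hq k2 with ⟨h1, h2⟩ | ⟨-, -, h2 | h2⟩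
    · have hkr : (k : ℝ) = 3 * q := by exact_mod_cast h1
      have := near_int a 0 (by rw [abs_lt]; push_cast; constructor <;> linarith)
      rw [abs_le] at this; push_cast at this; linarith
    · linarith
    · omega

theorem retr_seg {q k : ℤ} {p p' : Pl} (hq : 40 ≤ q) (k1 : 1 ≤ k) (k2 : k ≤ 3 * q)
    (hp : p ∈ arm q (k + (3 * q + 1))) {τ : ℝ} (hpos : τ ≠ 0 → 1 / 4 < Y q k p)
    (hv' : Y q (k + 1 + 3 * q) p' = Y q (k + 1 + 3 * q) p - τ)
    (h : (0 ≤ Y q (k + 1 + 3 * q) p ∧ 0 ≤ τ ∧ τ ≤ Y q (k + 1 + 3 * q) p ∧ Y q k p' = Y q k p) ∨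
      (Y q (k + 1 + 3 * q) p < 0 ∧ τ ≤ 0 ∧ Y q (k + 1 + 3 * q) p ≤ τ ∧ Y q k p' = Y q k p + τ)) :
    p' ∈ arm q (k + (3 * q + 1)) ∧ (p' ∈ SK q → p ∈ SK q) := by
  have hqr : (40 : ℝ) ≤ q := by exact_mod_cast hq
  have k1' : (1 : ℝ) ≤ k := by exact_mod_cast k1
  by_cases h0 : τ = 0
  · have : p' = p := by
      rw [← Pt_Y q k p, ← Pt_Y q k p', (lchart q k p).1, (lchart q k p').1, hv']
      rcases h with h | h
      · rw [h.2.2.2, h0]; simp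
      · rw [h.2.2.2, h0]; simp
    rw [this]; exact ⟨hp, id⟩
  have hpos := hpos h0
  obtain ⟨e1, e2, e3, e4, e5⟩ := lchart q k p
  obtain ⟨e1', e2', e3', e4', e5'⟩ := lchart q k p'
  obtain ⟨hA, hx, hc⟩ := mem_armv.1 hp
  obtain ⟨g0, g1, g2⟩ := (SA_iff q k p).1 hA
  rw [abs_lt] at hx
  have ht := fun i h => near_t (q := q) (k := k) (p := p') (i := i) h
  have hcc : (k = 3 * q) ∨ 3 / 5 < gp q (k + 2) p := by
    rcases cut_v hq k2 with ⟨h1, h2⟩ | ⟨-, -, h2 | h2⟩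
    · exact Or.inl h1
    · right; linarith
    · omega
  rw [mem_armv, SA_iff q k, abs_lt]
  rw [SK_iff q k, SK_iff q k, near_q, near_q]
  have htt : ∀ j : ℤ, (j : ℝ) - 11 / 50 ≤ Y q (k + 2) p → Y q (k + 2) p ≤ j + 11 / 50 →
    near (Y q (k + 2) p) := fun j => near_of j
  set u := Y q k p
  set v := Y q (k + 1 + 3 * q) p
  set u' := Y q k p'
  set v' := Y q (k + 1 + 3 * q) p'
  constructor
  · rcases h with ⟨h1, h2, h3, h4⟩ | ⟨h1, h2, h3, h4⟩
    · refine ⟨⟨?_, ?_, ?_⟩, ⟨?_, ?_⟩, ?_⟩ <;> linarith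
    · refine ⟨⟨?_, ?_, ?_⟩, ⟨?_, ?_⟩, ?_⟩ <;> linarith
  have hv2 : - (11 / 50) < v' ∧ v' < 11 / 50 := by
    rcases h with ⟨h1, h2, h3, h4⟩ | ⟨h1, h2, h3, h4⟩ <;> constructor <;> linarith
  have key : near u' → 1 / 2 ≤ gp q k p' → 39 / 50 ≤ u' := by
    intro nu hg
    by_contra hcon
    push Not at hcon
    have := near_int nu 0 (by rw [abs_lt]; push_cast; constructor <;> linarith)
    rw [abs_le] at this; push_cast at this; linarith
  have nv : near v := near_of 0 (by push_cast; linarith) (by push_cast; linarith)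
  rintro (⟨a, b, c, d, e, f⟩ | ⟨a, b, c, d⟩ | ⟨-, a, b, c⟩ | ⟨-, a, b, c⟩)
  · have hu := key a d
    left
    obtain ⟨i, hi⟩ := a
    rw [abs_le] at hi
    have hti := ht i c
    have hG2 : 1 / 2 ≤ gp q (k + 2) p := by
      rcases hcc with hk | hk
      · exfalso
        have hkr : (k : ℝ) = 3 * q := by exact_mod_cast hk
        rcases h with ⟨h1, h2, h3, h4⟩ | ⟨h1, h2, h3, h4⟩ <;> linarith
      · linarith
    rcases h with ⟨h1, h2, h3, h4⟩ | ⟨h1, h2, h3, h4⟩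
    · rcases hti with hti | hti
      · refine ⟨near_of i ?_ ?_, nv, htt (2 * q - k - i) ?_ ?_, ?_, ?_, hG2⟩ <;> push_cast <;> linarith
      · linarith
    · rcases hti with hti | hti
      · linarith
      · have : near (Y q (k + 2) p) := by
          have : Y q (k + 2) p = Y q (k + 2) p' := by linarith
          rw [this]; exact c
        refine ⟨near_of i ?_ ?_, nv, this, ?_, ?_, hG2⟩ <;> push_cast <;> linarith
  · have hu := key a c
    rcases h with ⟨h1, h2, h3, h4⟩ | ⟨h1, h2, h3, h4⟩
    · right; left
      refine ⟨by rw [← h4]; exact a, nv, ?_, ?_⟩ <;> linarith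
    · linarith
  · have hk : k = 1 := by
      by_contra hcon
      have : (2 : ℝ) ≤ k := by exact_mod_cast (by omega : 2 ≤ k)
      rcases h with ⟨h1, h2, h3, h4⟩ | ⟨h1, h2, h3, h4⟩ <;> linarith
    have hkr : (k : ℝ) = 1 := by exact_mod_cast hk
    have := ht 0 a
    push_cast at this
    rcases h with ⟨h1, h2, h3, h4⟩ | ⟨h1, h2, h3, h4⟩
    · linarith
    · right; right; left
      have ht2 : near (Y q (k + 2) p) := by
        have : Y q (k + 2) p = Y q (k + 2) p' := by linarith
        rw [this]; exact a
      rcases this with h5 | h5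
      · refine ⟨nv, ht2, ?_, ?_⟩ <;> linarith
      · linarith
  · exfalso
    rcases hcc with hk | hk
    · have hkr : (k : ℝ) = 3 * q := by exact_mod_cast hk
      have hu2 : |u' - (0 : ℤ)| < 39 / 50 := by
        rw [abs_lt]; push_cast
        rcases h with ⟨h1, h2, h3, h4⟩ | ⟨h1, h2, h3, h4⟩ <;> constructor <;> linarith
      have := near_int a 0 hu2
      rw [abs_le] at this; push_cast at this
      rcases h with ⟨h1, h2, h3, h4⟩ | ⟨h1, h2, h3, h4⟩ <;> linarith
    · rcases h with ⟨h1, h2, h3, h4⟩ | ⟨h1, h2, h3, h4⟩ <;> linarith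

noncomputable def rho (s : ℝ) : ℝ := max 0 (min 1 ((s - 1 / 4) * (20 / 3)))

theorem rho_nonneg (s : ℝ) : 0 ≤ rho s := le_max_left _ _
theorem rho_le (s : ℝ) : rho s ≤ 1 := max_le zero_le_one (min_le_left _ _)
theorem rho_zero {s : ℝ} (h : s ≤ 1 / 4) : rho s = 0 := by
  unfold rho
  apply max_eq_left
  exact (min_le_right _ _).trans (by linarith)
theorem rho_one {s : ℝ} (h : 2 / 5 ≤ s) : rho s = 1 := by
  unfold rho
  rw [min_eq_left (by linarith), max_eq_right zero_le_one]
theorem rho_cont : Continuous rho := by unfold rho; fun_prop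

noncomputable def rfun (q k : ℤ) (p : Pl) : Pl :=
  Pt q k (Y q k p + rho (Y q k p) * min (Y q (k + 1 + 3 * q) p) 0
      - rho (- Y q (k + 1 + 3 * q) p) * Y q k p)
    (Y q (k + 1 + 3 * q) p - rho (Y q k p) * Y q (k + 1 + 3 * q) p
      + rho (- Y q (k + 1 + 3 * q) p) * max (Y q k p) 0 + q)

theorem rfun_u (q k : ℤ) (p : Pl) : Y q k (rfun q k p) =
    Y q k p + rho (Y q k p) * min (Y q (k + 1 + 3 * q) p) 0
      - rho (- Y q (k + 1 + 3 * q) p) * Y q k p := Y_Pt _ _ _ _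

theorem rfun_v (q k : ℤ) (p : Pl) : Y q (k + 1 + 3 * q) (rfun q k p) =
    Y q (k + 1 + 3 * q) p - rho (Y q k p) * Y q (k + 1 + 3 * q) p
      + rho (- Y q (k + 1 + 3 * q) p) * max (Y q k p) 0 := Y_Pt3 _ _ _ _ _

theorem rfun_cont (q k : ℤ) : Continuous (rfun q k) := by
  have h1 := Y_cont q k
  have h2 := Y_cont q (k + 1 + 3 * q)
  have h3 := rho_cont
  exact (Pt_cont q k).comp (f := fun p => (Y q k p + rho (Y q k p) * min (Y q (k + 1 + 3 * q) p) 0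
      - rho (- Y q (k + 1 + 3 * q) p) * Y q k p,
    Y q (k + 1 + 3 * q) p - rho (Y q k p) * Y q (k + 1 + 3 * q) p
      + rho (- Y q (k + 1 + 3 * q) p) * max (Y q k p) 0 + q)) (by fun_prop)

theorem rfun_Mr (q k : ℤ) (p : Pl) : rfun q k (Mr q p) = Mr q (rfun q (3 * q + 2 - k) p) := by
  have a1 : ∀ p, Y q k (Mr q p) = - Y q (3 * q + 2 - k + 1 + 3 * q) p := by
    intro p; rw [Y_Mr]; congr 2; ring
  have a2 : ∀ p, Y q (k + 1 + 3 * q) (Mr q p) = - Y q (3 * q + 2 - k) p := by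
    intro p; rw [Y_Mr]; congr 2; ring
  have hu : Y q k (rfun q k (Mr q p)) = Y q k (Mr q (rfun q (3 * q + 2 - k) p)) := by
    rw [rfun_u, a1, a1, a2, rfun_v, neg_neg, min_comm, ← neg_zero (G := ℝ), min_neg_neg, max_comm,
      neg_zero]
    ring
  have hv : Y q (k + 1 + 3 * q) (rfun q k (Mr q p)) = Y q (k + 1 + 3 * q) (Mr q (rfun q (3 * q + 2 - k) p)) := by
    rw [rfun_v, a1, a2, a2, rfun_u, neg_neg, max_comm, ← neg_zero (G := ℝ), max_neg_neg, min_comm,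
      neg_zero]
    ring
  rw [← Pt_Y q k (rfun q k (Mr q p)), ← Pt_Y q k (Mr q (rfun q (3 * q + 2 - k) p)),
    (lchart q k (rfun q k (Mr q p))).1, (lchart q k (Mr q (rfun q (3 * q + 2 - k) p))).1, hu, hv]

theorem armv_seg {q k : ℤ} {p : Pl} (hq : 40 ≤ q) (k1 : 1 ≤ k) (k2 : k ≤ 3 * q)
    (hp : p ∈ arm q (k + (3 * q + 1))) (s : ℝ) (s0 : 0 ≤ s) (s1 : s ≤ 1) :
    p + s • (rfun q k p - p) ∈ arm q (k + (3 * q + 1)) ∧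
    (p + s • (rfun q k p - p) ∈ SK q → p ∈ SK q) := by
  have hx := (mem_armv.1 hp).2.1
  rw [abs_lt] at hx
  have r0 : rho (- Y q (k + 1 + 3 * q) p) = 0 := rho_zero (by linarith)
  have hr0 := rho_nonneg (Y q k p)
  have hr1 := rho_le (Y q k p)
  have hs0 : 0 ≤ s * rho (Y q k p) := mul_nonneg s0 hr0
  have hs1 : s * rho (Y q k p) ≤ 1 := by nlinarith
  refine retr_seg hq k1 k2 hp (τ := s * rho (Y q k p) * Y q (k + 1 + 3 * q) p) ?_ ?_ ?_
  · intro h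
    by_contra hcon
    push Not at hcon
    exact h (by rw [rho_zero hcon]; ring)
  · rw [Y_seg, rfun_v, r0]; ring
  · rw [Y_seg, rfun_u, r0]
    rcases le_or_gt 0 (Y q (k + 1 + 3 * q) p) with h | h
    · left
      refine ⟨h, mul_nonneg hs0 h, ?_, ?_⟩
      · nlinarith
      · rw [min_eq_right h]; ring
    · right
      refine ⟨h, by nlinarith, by nlinarith, ?_⟩
      rw [min_eq_left h.le]; ring

theorem armv_out {q k : ℤ} {p : Pl} (hq : 40 ≤ q) (k1 : 1 ≤ k) (k2 : k ≤ 3 * q)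
    (hp : p ∈ arm q (k + (3 * q + 1))) : rfun q k p ∈ arm q (k + (3 * q + 1)) ∧ rfun q k p ∉ SK q := by
  have h := (armv_seg hq k1 k2 hp 1 zero_le_one le_rfl).1
  have e : p + (1 : ℝ) • (rfun q k p - p) = rfun q k p := by rw [one_smul]; abel
  rw [e] at h
  refine ⟨h, retr_out hq k1 k2 h ?_⟩
  have hx := (mem_armv.1 hp).2.1
  rw [abs_lt] at hx
  have r0 : rho (- Y q (k + 1 + 3 * q) p) = 0 := rho_zero (by linarith)
  rw [rfun_u, rfun_v, r0]
  rcases lt_or_ge (Y q k p) (2 / 5) with h1 | h1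
  · left
    have := mul_nonneg (rho_nonneg (Y q k p)) (neg_nonneg.2 (min_le_right (Y q (k + 1 + 3 * q) p) 0))
    linarith
  · right
    rw [rho_one h1]; ring

theorem Mr_seg (q : ℤ) (p p' : Pl) (s : ℝ) : Mr q (p + s • (p' - p)) = Mr q p + s • (Mr q p' - Mr q p) := by
  have : ∀ p p' : Pl, p + s • (p' - p) = (1 - s) • p + s • p' := by
    intro p p'
    rw [smul_sub, sub_smul, one_smul]; abel
  rw [this, this, Mr_comb _ _ _ _ _ (by ring)]

theorem armu_seg {q k : ℤ} {p : Pl} (hq : 40 ≤ q) (k1 : 2 ≤ k) (k2 : k ≤ 3 * q + 1)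
    (hp : p ∈ arm q k) (s : ℝ) (s0 : 0 ≤ s) (s1 : s ≤ 1) :
    p + s • (rfun q k p - p) ∈ arm q k ∧
    (p + s • (rfun q k p - p) ∈ SK q → p ∈ SK q) := by
  have hp' : Mr q p ∈ arm q (3 * q + 2 - k + (3 * q + 1)) := by
    rw [arm_Mr, show 6 * q + 3 - (3 * q + 2 - k + (3 * q + 1)) = k by ring]; exact hp
  have h := armv_seg hq (by omega) (by omega) hp' s s0 s1
  rwa [rfun_Mr, sub_sub_cancel, ← Mr_seg, arm_Mr, SK_Mr, SK_Mr,
    show 6 * q + 3 - (3 * q + 2 - k + (3 * q + 1)) = k by ring] at h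

theorem armu_out {q k : ℤ} {p : Pl} (hq : 40 ≤ q) (k1 : 2 ≤ k) (k2 : k ≤ 3 * q + 1)
    (hp : p ∈ arm q k) : rfun q k p ∈ arm q k ∧ rfun q k p ∉ SK q := by
  have hp' : Mr q p ∈ arm q (3 * q + 2 - k + (3 * q + 1)) := by
    rw [arm_Mr, show 6 * q + 3 - (3 * q + 2 - k + (3 * q + 1)) = k by ring]; exact hp
  have h := armv_out hq (by omega) (by omega) hp'
  rwa [rfun_Mr, sub_sub_cancel, arm_Mr, SK_Mr,
    show 6 * q + 3 - (3 * q + 2 - k + (3 * q + 1)) = k by ring] at h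

theorem SB_last (q : ℤ) (hq : 40 ≤ q) {p : Pl} : p ∈ SB q (3 * q + 1) ↔ p ∈ arm q (3 * q + 1) := by
  have h := SB_one q hq (p := Mr q p)
  rwa [SB_Mr, arm_Mr, show 3 * q + 2 - 1 = 3 * q + 1 by ring,
    show 6 * q + 3 - (1 + (3 * q + 1)) = 3 * q + 1 by ring] at h

theorem SB_K_contr {q k : ℤ} (hq : 40 ≤ q) (hk : InR q k) : ContractibleSpace ↥(SB q k \ SK q) := by
  have h1 := hk.l
  have h2 := hk.u
  have hm : ∀ p ∈ SB q k, (rfun q k p ∈ SB q k ∧ rfun q k p ∉ SK q) ∧ ∀ s : ℝ, 0 ≤ s → s ≤ 1 →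
      (p + s • (rfun q k p - p) ∈ SB q k ∧ (p + s • (rfun q k p - p) ∈ SK q → p ∈ SK q)) := by
    intro p hp
    have hv : k ≤ 3 * q → p ∈ arm q (k + (3 * q + 1)) → _ := fun h3 h4 =>
      (⟨⟨Or.inr (armv_out hq h1 h3 h4).1, (armv_out hq h1 h3 h4).2⟩, fun s s0 s1 =>
        ⟨Or.inr (armv_seg hq h1 h3 h4 s s0 s1).1, (armv_seg hq h1 h3 h4 s s0 s1).2⟩⟩ :
      (rfun q k p ∈ SB q k ∧ rfun q k p ∉ SK q) ∧ ∀ s : ℝ, 0 ≤ s → s ≤ 1 →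
      (p + s • (rfun q k p - p) ∈ SB q k ∧ (p + s • (rfun q k p - p) ∈ SK q → p ∈ SK q)))
    have hu : 2 ≤ k → p ∈ arm q k → _ := fun h3 h4 =>
      (⟨⟨Or.inl (armu_out hq h3 h2 h4).1, (armu_out hq h3 h2 h4).2⟩, fun s s0 s1 =>
        ⟨Or.inl (armu_seg hq h3 h2 h4 s s0 s1).1, (armu_seg hq h3 h2 h4 s s0 s1).2⟩⟩ :
      (rfun q k p ∈ SB q k ∧ rfun q k p ∉ SK q) ∧ ∀ s : ℝ, 0 ≤ s → s ≤ 1 →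
      (p + s • (rfun q k p - p) ∈ SB q k ∧ (p + s • (rfun q k p - p) ∈ SK q → p ∈ SK q)))
    by_cases k1 : k = 1
    · have := (SB_one q hq (p := p)).1 (k1 ▸ hp)
      exact hv (by omega) (k1 ▸ this)
    · by_cases k2 : k = 3 * q + 1
      · have := (SB_last q hq (p := p)).1 (k2 ▸ hp)
        exact hu (by omega) (by rw [k2]; exact this)
      · rcases hp with hp | hp
        · exact hu (by omega) hp
        · exact hv (by omega) hp
  refine contr_of_retr (Z := SB q k) Set.sdiff_subset (SB_SC hq hk).contr (rfun q k)
    (rfun_cont q k).continuousOn (fun p hp => (hm p hp).1) ?_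
  intro p hp s s0 s1
  have := (hm p hp.1).2 s s0 s1
  exact ⟨this.1, fun h => hp.2 (this.2 h)⟩

set_option linter.unusedVariables false
set_option linter.unusedTactic false
set_option linter.unnecessarySeqFocus false

/-! ### `X` and `X \ K` are contractible -/

theorem notch_info {q b : ℤ} {p : Pl} (hA : p ∈ SA q) (hx : near (Y q b p)) (hy : near (Y q (b + 1) p))
    (h1 : 1 / 2 ≤ gp q b p) (h2 : gp q b p ≤ 3 / 5) :
    ∃ j : ℤ, (j : ℝ) - 11 / 50 ≤ Y q b p ∧ Y q (b + 1) p ≤ j + q - 1 + 11 / 50 ∧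
      16 / 25 ≤ gp q (b + 1) p ∧ 16 / 25 ≤ gp q (b + 2) p := by
  obtain ⟨e1, e2, e3, e4, e5⟩ := chart q b 0 p
  rw [show b + 1 + 3 * 0 = b + 1 by ring, Int.cast_zero] at *
  obtain ⟨g0, g1, g2⟩ := (SA_iff q b p).1 hA
  obtain ⟨j, hj⟩ := hx
  obtain ⟨i, hi⟩ := hy
  rw [abs_le] at hj hi
  have hij : i = j + q - 1 := by
    have a1 : (i : ℝ) < j + q := by linarith
    have a2 : (j : ℝ) + q - 2 < i := by linarith
    have b1 : i < j + q := by exact_mod_cast a1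
    have b2 : j + q - 2 < i := by exact_mod_cast a2
    omega
  have hr : (i : ℝ) = j + q - 1 := by exact_mod_cast hij
  refine ⟨j, by linarith, by linarith, ?_, ?_⟩
  · have a1 : (-1 : ℝ) < b - 2 * q - 1 + j + 2 * i := by linarith
    have b1 : -1 < b - 2 * q - 1 + j + 2 * i := by exact_mod_cast a1
    have b2 : 0 ≤ b - 2 * q - 1 + j + 2 * i := by omega
    have a2 : (0 : ℝ) ≤ b - 2 * q - 1 + j + 2 * i := by exact_mod_cast b2
    linarith
  · have a1 : (-1 : ℝ) < 4 * q + 1 - b - 2 * j - i := by linarith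
    have b1 : -1 < 4 * q + 1 - b - 2 * j - i := by exact_mod_cast a1
    have b2 : 0 ≤ 4 * q + 1 - b - 2 * j - i := by omega
    have a2 : (0 : ℝ) ≤ 4 * q + 1 - b - 2 * j - i := by exact_mod_cast b2
    linarith

theorem SK_notch {q : ℤ} {p : Pl} (hK : p ∈ SK q) (h : ∃ a, gp q a p < 3 / 5) :
    ∃ b, near (Y q b p) ∧ near (Y q (b + 1) p) ∧ 1 / 2 ≤ gp q b p ∧ gp q b p ≤ 3 / 5 := by
  rcases hK with hK | hK
  · obtain ⟨a, ha⟩ := h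
    exact ⟨a, (hK a).1, (hK (a + 1)).1, (hK a).2, ha.le⟩
  · exact hK

theorem rad_K {q : ℤ} {p p' : Pl} {l : ℝ} (hq : 40 ≤ q) (hl : 1 ≤ l)
    (hg : ∀ a, gp q a p' - (q + 1 / 3) = l * (gp q a p - (q + 1 / 3)))
    (hA' : p' ∈ SA q) (he : ∃ a, gp q a p < 3 / 5) (he' : ∃ a, gp q a p' < 3 / 5)
    (hK : p' ∈ SK q) : p ∈ SK q := by
  have hqr : (40 : ℝ) ≤ q := by exact_mod_cast hq
  obtain ⟨b, hx, hy, h1, h2⟩ := SK_notch hK he'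
  obtain ⟨j, j1, j2, n1, n2⟩ := notch_info hA' hx hy h1 h2
  have d0 := hg b
  have d1 := hg (b + 1)
  have d2 := hg (b + 2)
  have m0 : gp q b p < q + 1 / 3 := by
    by_contra hcon; push Not at hcon
    have := mul_nonneg (by linarith : 0 ≤ l) (sub_nonneg.2 hcon); linarith
  have m1 : gp q b p < gp q (b + 1) p := by
    by_contra hcon; push Not at hcon
    have := mul_nonneg (by linarith : 0 ≤ l) (sub_nonneg.2 hcon); linarith
  have m2 : gp q b p < gp q (b + 2) p := by
    by_contra hcon; push Not at hcon
    have := mul_nonneg (by linarith : 0 ≤ l) (sub_nonneg.2 hcon); linarith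
  have l0 := mul_nonneg (sub_nonneg.2 hl) (sub_nonneg.2 m0.le)
  have l1 := mul_nonneg (sub_nonneg.2 hl) (sub_nonneg.2 m1.le)
  have l2 := mul_nonneg (sub_nonneg.2 hl) (sub_nonneg.2 m2.le)
  have hb : gp q b p < 3 / 5 := by
    rw [ex_gp_iff q b] at he
    rcases he with h | h | h <;> linarith
  obtain ⟨e1, e2, e3, e4, e5⟩ := chart q b 0 p
  obtain ⟨e1', e2', e3', e4', e5'⟩ := chart q b 0 p'
  rw [show b + 1 + 3 * 0 = b + 1 by ring, Int.cast_zero] at *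
  have hxx : Y q b p' ≤ Y q b p := by linarith
  have hyy : Y q (b + 1) p ≤ Y q (b + 1) p' := by linarith
  right
  refine ⟨b, near_of j ?_ ?_, near_of (j + q - 1) ?_ ?_, ?_, ?_⟩ <;> push_cast <;> linarith

theorem notcone_scale {q : ℤ} {p p' : Pl} {l : ℝ} (hl : 1 ≤ l)
    (hg : ∀ a, gp q a p' - (q + 1 / 3) = l * (gp q a p - (q + 1 / 3))) (h : notcone q p) :
    notcone q p' := by
  unfold notcone at *
  have e1 : 3 * gp q 1 p' - (3 * q + 1) = l * (3 * gp q 1 p - (3 * q + 1)) := by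
    have := hg 1; linarith
  have e2 : gp q 0 p' - gp q 2 p' = l * (gp q 0 p - gp q 2 p) := by
    have := hg 0; have := hg 2; linarith
  rw [e1, e2, abs_mul, abs_of_nonneg (by linarith : 0 ≤ l)]
  have := mul_lt_mul_of_pos_left h (by linarith : 0 < l)
  linarith

noncomputable def mg (q : ℤ) (p : Pl) : ℝ := min (gp q 0 p) (min (gp q 1 p) (gp q 2 p))

theorem mg_cont (q : ℤ) : Continuous (mg q) :=
  (gp_cont q 0).min ((gp_cont q 1).min (gp_cont q 2))

theorem mg_le (q a : ℤ) (p : Pl) : mg q p ≤ gp q a p := by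
  have h3 : a % 3 = 0 ∨ a % 3 = 1 ∨ a % 3 = 2 := by omega
  rw [gp_mod q a]
  unfold mg
  rcases h3 with h | h | h <;> rw [h]
  · exact min_le_left _ _
  · exact (min_le_right _ _).trans (min_le_left _ _)
  · exact (min_le_right _ _).trans (min_le_right _ _)

theorem mg_ex (q : ℤ) (p : Pl) : ∃ a, gp q a p = mg q p := by
  unfold mg
  rcases min_choice (gp q 0 p) (min (gp q 1 p) (gp q 2 p)) with h | h
  · exact ⟨0, h.symm⟩
  · rw [h]
    rcases min_choice (gp q 1 p) (gp q 2 p) with h | h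
    · exact ⟨1, h.symm⟩
    · exact ⟨2, h.symm⟩

/-- the centre -/
noncomputable def ctr (q : ℤ) : Pl := Pt q 0 (q + 1 / 2) (q + 1 / 6)

theorem gp_ctr (q a : ℤ) : gp q a (ctr q) = q + 1 / 3 := by
  obtain ⟨e1, e2, e3, e4, e5⟩ := chart q 0 0 (ctr q)
  have h0 : Y q 0 (ctr q) = q + 1 / 2 := Y_Pt _ _ _ _
  have h1 : Y q (0 + 1) (ctr q) = q + 1 / 6 := Y_Pt1 _ _ _ _
  rw [show (0 : ℤ) + 1 + 3 * 0 = 0 + 1 by ring, h0, h1, Int.cast_zero] at e3 e4 e5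
  have h3 : a % 3 = 0 ∨ a % 3 = 1 ∨ a % 3 = 2 := by omega
  rcases h3 with h | h | h
  · rw [gp_of_mod (b := 0) _ (by omega), e3]; ring
  · rw [gp_of_mod (b := 0 + 1) _ (by omega), e4]; ring
  · rw [gp_of_mod (b := 0 + 2) _ (by omega), e5]; ring

noncomputable def fac (q : ℤ) (p : Pl) : ℝ :=
  max (q + 1 / 3 - mg q p) (q + 1 / 3 - 3 / 10) / (q + 1 / 3 - mg q p)

noncomputable def rad (q : ℤ) (p : Pl) : Pl := (1 - fac q p) • ctr q + fac q p • p

theorem D_pos {q : ℤ} {p : Pl} (h : notcone q p) : 0 < q + 1 / 3 - mg q p := by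
  by_contra hcon
  push Not at hcon
  have h0 := mg_le q 0 p
  have h1 := mg_le q 1 p
  have h2 := mg_le q 2 p
  have hs := gp_sum q 0 p
  rw [zero_add, zero_add] at hs
  have a0 : gp q 0 p = q + 1 / 3 := by linarith
  have a1 : gp q 1 p = q + 1 / 3 := by linarith
  have a2 : gp q 2 p = q + 1 / 3 := by linarith
  unfold notcone at h
  rw [a0, a1, a2, sub_self, abs_zero] at h
  linarith

theorem fac_ge {q : ℤ} {p : Pl} (h : notcone q p) : 1 ≤ fac q p := by
  unfold fac
  rw [le_div_iff₀ (D_pos h), one_mul]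
  exact le_max_left _ _

theorem gp_rad (q a : ℤ) (p : Pl) :
    gp q a (rad q p) - (q + 1 / 3) = fac q p * (gp q a p - (q + 1 / 3)) := by
  unfold rad
  rw [gp_comb _ _ _ _ _ _ (by ring), gp_ctr]; ring

theorem rad_seg (q a : ℤ) (p : Pl) (s : ℝ) :
    gp q a (p + s • (rad q p - p)) - (q + 1 / 3) =
      (1 + s * (fac q p - 1)) * (gp q a p - (q + 1 / 3)) := by
  have h := gp_rad q a p
  have : gp q a (p + s • (rad q p - p)) = (1 - s) * gp q a p + s * gp q a (rad q p) := by
    rw [← gp_comb _ _ _ _ _ _ (by ring)]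
    congr 1
    rw [smul_sub, sub_smul, one_smul]; abel
  rw [this]
  linear_combination s * h

theorem rad_min {q : ℤ} {p : Pl} (h : notcone q p) : mg q (rad q p) = min (mg q p) (3 / 10) := by
  have hD := D_pos h
  have hf := fac_ge h
  have hfD : fac q p * (q + 1 / 3 - mg q p) = max (q + 1 / 3 - mg q p) (q + 1 / 3 - 3 / 10) := by
    unfold fac; exact div_mul_cancel₀ _ hD.ne'
  have hmin : (q : ℝ) + 1 / 3 - max (q + 1 / 3 - mg q p) (q + 1 / 3 - 3 / 10) = min (mg q p) (3 / 10) := by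
    rcases le_total (mg q p) (3 / 10) with h | h
    · rw [min_eq_left h, max_eq_left (by linarith)]; ring
    · rw [min_eq_right h, max_eq_right (by linarith)]; ring
  apply le_antisymm
  · obtain ⟨a, ha⟩ := mg_ex q p
    have h1 := mg_le q a (rad q p)
    have h2 := gp_rad q a p
    rw [ha] at h2
    linarith
  · obtain ⟨a, ha⟩ := mg_ex q (rad q p)
    have h2 := gp_rad q a p
    have h1 := mul_le_mul_of_nonneg_left (mg_le q a p) (by linarith : 0 ≤ fac q p)
    linarith

theorem SA_mg {q : ℤ} {p : Pl} : p ∈ SA q ↔ 0 < mg q p := by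
  constructor
  · intro h
    obtain ⟨a, ha⟩ := mg_ex q p
    rw [← ha]; exact h a
  · intro h a
    exact h.trans_le (mg_le q a p)

theorem ex_mg {q : ℤ} {p : Pl} : (∃ a, gp q a p < 3 / 5) ↔ mg q p < 3 / 5 := by
  constructor
  · rintro ⟨a, ha⟩
    exact (mg_le q a p).trans_lt ha
  · intro h
    obtain ⟨a, ha⟩ := mg_ex q p
    exact ⟨a, by rw [ha]; exact h⟩

theorem rad_mem {q : ℤ} {p : Pl} (hA : p ∈ SA q) (h : notcone q p) :
    rad q p ∈ SX q ∧ rad q p ∉ SK q := by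
  have hm := rad_min h
  have h1 : rad q p ∈ SA q := by
    rw [SA_mg, hm]; exact lt_min (SA_mg.1 hA) (by norm_num)
  have h2 : mg q (rad q p) ≤ 3 / 10 := by rw [hm]; exact min_le_right _ _
  have h3 : ∃ a, gp q a (rad q p) < 3 / 5 := ex_mg.2 (by linarith)
  refine ⟨⟨h1, h3, notcone_scale (fac_ge h) (fun a => gp_rad q a p) h⟩, ?_⟩
  intro hK
  obtain ⟨b, hx, hy, n1, n2⟩ := SK_notch hK h3
  obtain ⟨j, -, -, n3, n4⟩ := notch_info h1 hx hy n1 n2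
  obtain ⟨a, ha⟩ := mg_ex q (rad q p)
  have h5 := (exists3 (P := fun a => gp q a (rad q p) ≤ 3 / 10) (fun a => by simp only [gp_add3]) b).1
    ⟨a, by rw [ha]; exact h2⟩
  rcases h5 with h | h | h <;> linarith

theorem rad_seg_mem {q : ℤ} {p : Pl} (hq : 40 ≤ q) (hX : p ∈ SX q) (s : ℝ) (s0 : 0 ≤ s) (s1 : s ≤ 1) :
    p + s • (rad q p - p) ∈ SX q ∧ (p + s • (rad q p - p) ∈ SK q → p ∈ SK q) := by
  obtain ⟨hA, he, hn⟩ := hX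
  have hf := fac_ge hn
  have hl : 1 ≤ 1 + s * (fac q p - 1) := by
    have := mul_nonneg s0 (sub_nonneg.2 hf); linarith
  have hg := fun a => rad_seg q a p s
  have hA' : p + s • (rad q p - p) ∈ SA q := by
    have h1 := (rad_mem hA hn).1.1
    have e : p + s • (rad q p - p) = (1 - s) • p + s • rad q p := by
      rw [smul_sub, sub_smul, one_smul]; abel
    rw [e]
    exact SA_convex q hA h1 (by linarith) s0 (by ring)
  have hqr : (40 : ℝ) ≤ q := by exact_mod_cast hq
  have he' : ∃ a, gp q a (p + s • (rad q p - p)) < 3 / 5 := by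
    obtain ⟨a, ha⟩ := he
    refine ⟨a, ?_⟩
    have h1 := hg a
    have h2 := mul_nonneg (sub_nonneg.2 hl) (by linarith : 0 ≤ (q : ℝ) + 1 / 3 - gp q a p)
    linarith
  exact ⟨⟨hA', he', notcone_scale hl hg hn⟩, rad_K hq hl hg hA' he he'⟩

theorem Z_SC {q : ℤ} (hq : 40 ≤ q) : SC (SA q ∩ {p | notcone q p}) := by
  have hqr : (40 : ℝ) ≤ q := by exact_mod_cast hq
  obtain ⟨z, hu, hv⟩ : ∃ z, Y q 0 z = (q : ℝ) + 1 / 2 ∧ Y q (0 + 1) z = (q : ℝ) / 2 + 1 / 2 :=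
    ⟨Pt q 0 _ _, Y_Pt _ _ _ _, Y_Pt1 _ _ _ _⟩
  obtain ⟨e1, e2, e3, e4, e5⟩ := chart q 0 0 z
  rw [show (0 : ℤ) + 1 + 3 * 0 = 0 + 1 by ring, hu, hv, Int.cast_zero] at e3 e4 e5
  have hz : z ∈ SA q := by
    rw [SA_iff q 0, e3, e4, e5]
    refine ⟨?_, ?_, ?_⟩ <;> linarith
  rw [zero_add] at e4 e5
  have z02 : gp q 0 z - gp q 2 z = 0 := by rw [e3, e5]; ring
  have z1 : gp q 1 z = 1 := by rw [e4]; ring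
  refine ⟨z, ⟨hz, ?_⟩, ?_⟩
  · show notcone q z
    exact notcone_of_small hq (by rw [z1]; norm_num)
  · rintro p ⟨hA, hn⟩ s t s0 t0 hst
    refine ⟨SA_convex q hz hA s0 t0 hst, ?_⟩
    show notcone q _
    have hn : notcone q p := hn
    unfold notcone at *
    rw [gp_comb _ _ _ _ _ _ hst, gp_comb _ _ _ _ _ _ hst, gp_comb _ _ _ _ _ _ hst]
    have e : s * gp q 0 z + t * gp q 0 p - (s * gp q 2 z + t * gp q 2 p) = t * (gp q 0 p - gp q 2 p) := by
      linear_combination s * z02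
    rw [e, abs_mul, abs_of_nonneg t0, z1]
    obtain rfl : s = 1 - t := by linarith
    rcases t0.eq_or_lt with rfl | t0
    · norm_num; linarith
    · have := mul_lt_mul_of_pos_left hn t0
      have := mul_nonneg s0 (by linarith : (0 : ℝ) ≤ 3 * q - 2)
      linarith

theorem rad_cont (q : ℤ) : ContinuousOn (rad q) (SA q ∩ {p | notcone q p}) := by
  have h1 : ContinuousOn (fac q) (SA q ∩ {p | notcone q p}) := by
    unfold fac
    have hm := (mg_cont q)
    refine ContinuousOn.div (by fun_prop) (by fun_prop) ?_
    rintro p ⟨-, hn⟩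
    exact (D_pos hn).ne'
  unfold rad
  exact ((continuousOn_const.sub h1).smul continuousOn_const).add (h1.smul continuousOn_id)

theorem SX_contr {q : ℤ} (hq : 40 ≤ q) : ContractibleSpace ↥(SX q) :=
  contr_of_retr (Z := SA q ∩ {p | notcone q p}) (fun p hp => ⟨hp.1, hp.2.2⟩) (Z_SC hq).contr (rad q)
    (rad_cont q) (fun p hp => (rad_mem hp.1 hp.2).1) (fun p hp s s0 s1 => (rad_seg_mem hq hp s s0 s1).1)

theorem SX_K_contr {q : ℤ} (hq : 40 ≤ q) : ContractibleSpace ↥(SX q \ SK q) :=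
  contr_of_retr (Z := SA q ∩ {p | notcone q p}) (fun p hp => ⟨hp.1.1, hp.1.2.2⟩) (Z_SC hq).contr (rad q)
    (rad_cont q) (fun p hp => rad_mem hp.1 hp.2)
    (fun p hp s s0 s1 => ⟨(rad_seg_mem hq hp.1 s s0 s1).1, fun h => hp.2 ((rad_seg_mem hq hp.1 s s0 s1).2 h)⟩)

set_option linter.unusedVariables false
set_option linter.unusedTactic false
set_option linter.unnecessarySeqFocus false

/-! ### The family -/

def S0 (q : ℤ) : Set Pl := {p | (p ∈ SX q ∨ ∃ k, InR q k ∧ p ∈ SB q k) ∧ p ∉ SK q}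

noncomputable def G (q z : ℤ) : Set Pl := if z = 0 then S0 q else if z = 3 * q + 2 then SX q else SB q z

theorem G_zero (q : ℤ) : G q 0 = S0 q := by simp [G]

theorem G_last {q : ℤ} (hq : 40 ≤ q) : G q (3 * q + 2) = SX q := by
  unfold G; rw [if_neg (by omega), if_pos rfl]

theorem G_mid {q z : ℤ} (hz : InR q z) : G q z = SB q z := by
  obtain ⟨h1, h2⟩ := hz
  unfold G; rw [if_neg (by omega), if_neg (by omega)]

theorem S0_open (q : ℤ) : IsOpen (S0 q) := by
  have : S0 q = (SX q ∪ ⋃ k ∈ {k | InR q k}, SB q k) ∩ (SK q)ᶜ := by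
    ext p; simp [S0]
  rw [this]
  exact ((SX_open q).union (isOpen_biUnion fun k _ => SB_open q k)).inter (SK_closed q).isOpen_compl

theorem G_open (q z : ℤ) : IsOpen (G q z) := by
  unfold G
  split_ifs
  · exact S0_open q
  · exact SX_open q
  · exact SB_open q z

theorem pc_of_contr {S : Set Pl} (h : ContractibleSpace S) : IsPathConnected S :=
  isPathConnected_iff_pathConnectedSpace.2 inferInstance

theorem S0_pc {q : ℤ} (hq : 40 ≤ q) : IsPathConnected (S0 q) := by
  have hX := pc_of_contr (SX_K_contr hq)
  have hXs : SX q \ SK q ⊆ S0 q := fun p hp => ⟨Or.inl hp.1, hp.2⟩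
  obtain ⟨x, hx, hxj⟩ := hX
  refine ⟨x, hXs hx, ?_⟩
  rintro y ⟨h | ⟨k, hk, h⟩, hK⟩
  · exact (hxj ⟨h, hK⟩).mono hXs
  · obtain ⟨z, hz⟩ := (SC_X hq hk).2.nonempty
    have h1 : JoinedIn (S0 q) x z := (hxj ⟨hz.1.1, hz.2⟩).mono hXs
    have hB := pc_of_contr (SB_K_contr hq hk)
    have h2 : JoinedIn (SB q k \ SK q) z y := hB.joinedIn z ⟨hz.1.2, hz.2⟩ y ⟨h, hK⟩
    exact h1.trans (h2.mono fun p hp => ⟨Or.inr ⟨k, hk, hp.1⟩, hp.2⟩)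

theorem contr_of_conv {S : Set Pl} (h : Convex ℝ S) (hn : S.Nonempty) : ContractibleSpace S :=
  h.contractibleSpace hn

theorem zcases {q z : ℤ} (h0 : 0 ≤ z) (h1 : z ≤ 3 * q + 2) : z = 0 ∨ InR q z ∨ z = 3 * q + 2 := by
  by_cases a : z = 0
  · exact Or.inl a
  · by_cases b : z = 3 * q + 2
    · exact Or.inr (Or.inr b)
    · exact Or.inr (Or.inl ⟨by omega, by omega⟩)

theorem inR_lt {q z : ℤ} (hz : InR q z) : 0 < z ∧ z < 3 * q + 2 := ⟨by have := hz.l; omega, by have := hz.u; omega⟩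

theorem S0_SB {q j : ℤ} (hj : InR q j) : S0 q ∩ SB q j = SB q j \ SK q := by
  ext p
  constructor
  · rintro ⟨h, h'⟩
    exact ⟨h', h.2⟩
  · rintro ⟨h, h'⟩
    exact ⟨⟨Or.inr ⟨j, hj, h⟩, h'⟩, h⟩

theorem S0_SX (q : ℤ) : S0 q ∩ SX q = SX q \ SK q := by
  ext p
  constructor
  · rintro ⟨h, h'⟩
    exact ⟨h', h.2⟩
  · rintro ⟨h, h'⟩
    exact ⟨⟨Or.inl h, h'⟩, h⟩

theorem single_contr {q a : ℤ} (hq : 40 ≤ q) (ha : 0 < a) (ha' : a ≤ 3 * q + 2) :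
    ContractibleSpace (G q a) := by
  rcases zcases ha.le ha' with h | h | h
  · omega
  · rw [G_mid h]; exact (SB_SC hq h).contr
  · rw [h, G_last hq]; exact SX_contr hq

theorem two_contr {q a b : ℤ} (hq : 40 ≤ q) (ha : 0 ≤ a) (hab : a < b) (hb : b ≤ 3 * q + 2)
    (hn : (G q a ∩ G q b).Nonempty) : ContractibleSpace ↥(G q a ∩ G q b) := by
  rcases zcases (q := q) ha (by omega) with h | h | h
  · subst h
    rcases zcases (by omega) hb with h' | h' | h'
    · omega
    · rw [G_zero, G_mid h', S0_SB h']
      exact SB_K_contr hq h'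
    · rw [G_zero, h', G_last hq, S0_SX]
      exact SX_K_contr hq
  · rcases zcases (by omega) hb with h' | h' | h'
    · omega
    · rw [G_mid h, G_mid h'] at *
      exact contr_of_conv (pair_convex hq h.l h.u h'.l h'.u hab.ne) hn
    · rw [G_mid h, h', G_last hq, Set.inter_comm]
      exact (SC_X hq h).1.contr
  · omega

theorem three_eq_0BX {q b : ℤ} (hb : InR q b) : S0 q ∩ SB q b ∩ SX q = (SX q ∩ SB q b) \ SK q := by
  rw [S0_SB hb]; ext p; simp only [Set.mem_inter_iff, Set.mem_sdiff]; tauto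

theorem three_eq_0BB {q b c : ℤ} (hb : InR q b) : S0 q ∩ SB q b ∩ SB q c = (SB q b ∩ SB q c) \ SK q := by
  rw [S0_SB hb]; ext p; simp only [Set.mem_inter_iff, Set.mem_sdiff]; tauto

theorem three_contr {q a b c : ℤ} (hq : 40 ≤ q) (ha : 0 ≤ a) (hab : a < b) (hbc : b < c) (hc : c ≤ 3 * q + 2)
    (hn : (G q a ∩ G q b ∩ G q c).Nonempty) : ContractibleSpace ↥(G q a ∩ G q b ∩ G q c) := by
  have hb : InR q b := ⟨by omega, by omega⟩
  rcases zcases (q := q) ha (by omega) with h | h | h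
  · subst h
    rcases zcases (by omega) hc with h' | h' | h'
    · omega
    · rw [G_zero, G_mid hb, G_mid h', three_eq_0BB hb] at *
      exact contr_of_conv (pairK_convex hq hb.l hb.u h'.l h'.u hbc.ne) hn
    · rw [G_zero, h', G_last hq, G_mid hb, three_eq_0BX hb]
      exact (SC_X hq hb).2.contr
  · rcases zcases (by omega) hc with h' | h' | h'
    · omega
    · rw [G_mid h, G_mid h', G_mid hb] at *
      exact contr_of_conv (triple_convex hq h hb h' hab.ne (hab.trans hbc).ne hbc.ne) hn
    · subst h'
      rw [G_mid h, G_last hq, G_mid hb] at *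
      exact contr_of_conv (Xpair_convex hq h.l h.u hb.l hb.u hab.ne) hn
  · omega

theorem four_empty {q a b c d : ℤ} {p : Pl} (hq : 40 ≤ q) (ha : 0 ≤ a) (hab : a < b) (hbc : b < c) (hcd : c < d)
    (hd : d ≤ 3 * q + 2) (h1 : p ∈ G q a) (h2 : p ∈ G q b) (h3 : p ∈ G q c) (h4 : p ∈ G q d) : False := by
  have hb : InR q b := ⟨by omega, by omega⟩
  have hc : InR q c := ⟨by omega, by omega⟩
  rw [G_mid hb] at h2
  rw [G_mid hc] at h3
  rcases zcases (q := q) ha (by omega) with h | h | h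
  · subst h
    rw [G_zero] at h1
    rcases zcases (by omega) hd with h' | h' | h'
    · omega
    · rw [G_mid h'] at h4
      exact h1.2 (triple_mem hq hb hc h' hbc.ne (hbc.trans hcd).ne hcd.ne h2 h3 h4).2.1
    · rw [h', G_last hq] at h4
      exact h1.2 (Xpair_sub_K hq hb.l hb.u hc.l hc.u hbc.ne ⟨h2, h3⟩ h4)
  · rw [G_mid h] at h1
    rcases zcases (by omega) hd with h' | h' | h'
    · omega
    · rw [G_mid h'] at h4
      have hm : StrictMono ![a, b, c, d] := by
        rw [Fin.strictMono_iff_lt_succ]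
        intro i
        fin_cases i
        · exact hab
        · exact hbc
        · exact hcd
      refine mult_le_three hq ![a, b, c, d] ?_ hm.injective (p := p) ?_
      · intro i
        fin_cases i
        exacts [h, hb, hc, h']
      · intro i
        fin_cases i
        exacts [h1, h2, h3, h4]
    · rw [h', G_last hq] at h4
      exact (triple_mem hq h hb hc hab.ne (hab.trans hbc).ne hbc.ne h1 h2 h3).2.2 h4
  · omega

/-! ### Sorting small finsets -/

theorem sorted_range (σ : Finset ℤ) (k : ℕ) (h : σ.card = k) : ∃ e : Fin k → ℤ, StrictMono e ∧ ∀ z, z ∈ σ ↔ ∃ i, e i = z := by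
  refine ⟨σ.orderEmbOfFin h, (σ.orderEmbOfFin h).strictMono, fun z => ?_⟩
  have := Finset.range_orderEmbOfFin σ h
  rw [← Finset.mem_coe, ← this]; rfl

theorem sorted_two {σ : Finset ℤ} (h : σ.card = 2) : ∃ a b, a < b ∧ σ = {a, b} := by
  obtain ⟨e, he, hs⟩ := sorted_range σ 2 h
  refine ⟨e 0, e 1, he (by decide), ?_⟩
  ext z; rw [hs, Fin.exists_fin_two]; simp [eq_comm]

theorem sorted_three {σ : Finset ℤ} (h : σ.card = 3) : ∃ a b c, a < b ∧ b < c ∧ σ = {a, b, c} := by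
  obtain ⟨e, he, hs⟩ := sorted_range σ 3 h
  refine ⟨e 0, e 1, e 2, he (by decide), he (by decide), ?_⟩
  ext z; rw [hs, Fin.exists_fin_succ, Fin.exists_fin_two]; simp [eq_comm]

theorem sorted_four {σ : Finset ℤ} (h : 4 ≤ σ.card) : ∃ a b c d, a < b ∧ b < c ∧ c < d ∧ a ∈ σ ∧ b ∈ σ ∧ c ∈ σ ∧ d ∈ σ := by
  obtain ⟨τ, hτ, h4⟩ := Finset.exists_subset_card_eq h
  obtain ⟨e, he, hs⟩ := sorted_range τ 4 h4
  have hm : ∀ i, e i ∈ σ := fun i => hτ ((hs _).2 ⟨i, rfl⟩)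
  exact ⟨e 0, e 1, e 2, e 3, he (by decide), he (by decide), he (by decide), hm _, hm _, hm _, hm _⟩

/-- intersection over a finite set of integer labels -/
def GI (q : ℤ) (σ : Finset ℤ) : Set Pl := ⋂ z ∈ σ, G q z

theorem GI_one (q a : ℤ) : GI q {a} = G q a := by simp [GI]

theorem GI_two (q a b : ℤ) : GI q {a, b} = G q a ∩ G q b := by simp [GI]

theorem GI_three (q a b c : ℤ) : GI q {a, b, c} = G q a ∩ G q b ∩ G q c := by
  simp [GI, Set.inter_assoc]

theorem GI_four {q : ℤ} (hq : 40 ≤ q) {σ : Finset ℤ} (hs : σ ⊆ Finset.Icc 0 (3 * q + 2)) (h : 4 ≤ σ.card) :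
    GI q σ = ∅ := by
  obtain ⟨a, b, c, d, hab, hbc, hcd, ha, hb, hc, hd⟩ := sorted_four h
  rw [Set.eq_empty_iff_forall_notMem]
  intro p hp
  have hp' : ∀ z ∈ σ, p ∈ G q z := by simpa [GI] using hp
  exact four_empty hq (Finset.mem_Icc.1 (hs ha)).1 hab hbc hcd (Finset.mem_Icc.1 (hs hd)).2
    (hp' a ha) (hp' b hb) (hp' c hc) (hp' d hd)

theorem GI_contr {q : ℤ} (hq : 40 ≤ q) {σ : Finset ℤ} (hs : σ ⊆ Finset.Icc 0 (3 * q + 2))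
    (h : σ.card = 2 ∨ σ.card = 3) (hn : (GI q σ).Nonempty) : ContractibleSpace ↥(GI q σ) := by
  rcases h with h | h
  · obtain ⟨a, b, hab, rfl⟩ := sorted_two h
    have ha := Finset.mem_Icc.1 (hs (show a ∈ _ by simp))
    have hb := Finset.mem_Icc.1 (hs (show b ∈ _ by simp))
    rw [GI_two] at *
    exact two_contr hq ha.1 hab hb.2 hn
  · obtain ⟨a, b, c, hab, hbc, rfl⟩ := sorted_three h
    have ha := Finset.mem_Icc.1 (hs (show a ∈ _ by simp))
    have hb := Finset.mem_Icc.1 (hs (show c ∈ _ by simp))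
    rw [GI_three] at *
    exact three_contr hq ha.1 hab hbc hb.2 hn

theorem GI_pc {q : ℤ} (hq : 40 ≤ q) {σ : Finset ℤ} (hs : σ ⊆ Finset.Icc 0 (3 * q + 2)) (h0 : σ.Nonempty) :
    GI q σ = ∅ ∨ IsPathConnected (GI q σ) := by
  rcases Set.eq_empty_or_nonempty (GI q σ) with h | h
  · exact Or.inl h
  right
  have hc : σ.card = 1 ∨ (σ.card = 2 ∨ σ.card = 3) ∨ 4 ≤ σ.card := by
    have := h0.card_pos; omega
  rcases hc with hc | hc | hc
  · obtain ⟨a, rfl⟩ := Finset.card_eq_one.1 hc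
    rw [GI_one]
    have ha := Finset.mem_Icc.1 (hs (show a ∈ _ by simp))
    rcases ha.1.eq_or_lt with h' | h'
    · rw [← h', G_zero]; exact S0_pc hq
    · exact pc_of_contr (single_contr hq h' ha.2)
  · exact pc_of_contr (GI_contr hq hs hc h)
  · rw [GI_four hq hs hc] at h
    exact absurd h Set.not_nonempty_empty

set_option linter.unusedVariables false
set_option linter.unusedTactic false
set_option linter.unnecessarySeqFocus false

/-! ### Counting -/

open Classical in
noncomputable def cnt {α : Type} (P : Finset α → Prop) (k : ℕ) (s : Finset α) : ℕ :=
  ((s.powersetCard k).filter P).card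

theorem cnt_insert {α : Type} (P : Finset α → Prop) (k : ℕ) (s : Finset α) [DecidableEq α] (a : α) (ha : a ∉ s) :
    cnt P (k + 1) (insert a s) = cnt P (k + 1) s + cnt (fun σ => P (insert a σ)) k s := by
  classical
  unfold cnt
  rw [Finset.powersetCard_succ_insert ha, Finset.filter_union, Finset.card_union_of_disjoint]
  · congr 1
    rw [Finset.filter_image, Finset.card_image_of_injOn]
    intro x hx y hy hxy
    have h1 : a ∉ x := fun h => ha ((Finset.mem_powersetCard.1 (Finset.mem_filter.1 hx).1).1 h)
    have h2 : a ∉ y := fun h => ha ((Finset.mem_powersetCard.1 (Finset.mem_filter.1 hy).1).1 h)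
    have : (insert a x).erase a = (insert a y).erase a := by
      exact congrArg (fun w => Finset.erase w a) hxy
    rwa [Finset.erase_insert h1, Finset.erase_insert h2] at this
  · rw [Finset.disjoint_left]
    intro x hx hy
    have h1 : a ∉ x := fun h => ha ((Finset.mem_powersetCard.1 (Finset.mem_filter.1 hx).1).1 h)
    obtain ⟨y, -, rfl⟩ := Finset.mem_image.1 (Finset.mem_filter.1 hy).1
    exact h1 (Finset.mem_insert_self _ _)

theorem cnt_map {α β : Type} (P : Finset β → Prop) (k : ℕ) (s : Finset α) (e : α ↪ β) :
    cnt P k (s.map e) = cnt (fun σ => P (σ.map e)) k s := by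
  classical
  unfold cnt
  rw [Finset.powersetCard_map, Finset.filter_map, Finset.card_map]
  rfl

theorem cnt_congr {α : Type} {P P' : Finset α → Prop} {k : ℕ} {s : Finset α}
    (h : ∀ σ ⊆ s, σ.card = k → (P σ ↔ P' σ)) : cnt P k s = cnt P' k s := by
  classical
  unfold cnt
  congr 1
  apply Finset.filter_congr
  intro σ hσ
  exact h σ (Finset.mem_powersetCard.1 hσ).1 (Finset.mem_powersetCard.1 hσ).2

theorem cnt_all {α : Type} {P : Finset α → Prop} {k : ℕ} {s : Finset α}
    (h : ∀ σ ⊆ s, σ.card = k → P σ) : cnt P k s = s.card.choose k := by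
  classical
  unfold cnt
  rw [Finset.filter_true_of_mem, Finset.card_powersetCard]
  intro σ hσ
  exact h σ (Finset.mem_powersetCard.1 hσ).1 (Finset.mem_powersetCard.1 hσ).2

theorem cnt_or {α : Type} {P P' : Finset α → Prop} {k : ℕ} {s : Finset α}
    (h : ∀ σ, P σ → P' σ → False) : cnt (fun σ => P σ ∨ P' σ) k s = cnt P k s + cnt P' k s := by
  classical
  unfold cnt
  rw [← Finset.card_union_of_disjoint]
  · congr 1
    ext σ
    simp only [Finset.mem_filter, Finset.mem_union]
    tauto
  · rw [Finset.disjoint_left]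
    intro x hx hy
    exact h x (Finset.mem_filter.1 hx).2 (Finset.mem_filter.1 hy).2

/-! residue counts -/

theorem cnt_shift {m : ℕ} [NeZero m] (t : ZMod m) (r : ZMod m) :
    cnt (fun σ : Finset (ZMod m) => ∑ x ∈ σ, x = r) 3 Finset.univ =
      cnt (fun σ : Finset (ZMod m) => ∑ x ∈ σ, x = r - 3 * t) 3 Finset.univ := by
  have h := cnt_map (fun σ : Finset (ZMod m) => ∑ x ∈ σ, x = r) 3 Finset.univ (Equiv.addRight t).toEmbedding
  rw [Finset.map_univ_equiv] at h
  rw [h]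
  apply cnt_congr
  intro σ _ hσ
  simp only [Finset.sum_map, Equiv.coe_toEmbedding, Equiv.coe_addRight, Finset.sum_add_distrib, Finset.sum_const,
    hσ]
  rw [eq_sub_iff_add_eq]
  simp

theorem cnt_res {m : ℕ} [NeZero m] (u : ZMod m) (hu : 3 * u = 1) (r : ZMod m) :
    m * cnt (fun σ : Finset (ZMod m) => ∑ x ∈ σ, x = r) 3 Finset.univ = m.choose 3 := by
  classical
  have hall : ∀ s : ZMod m, cnt (fun σ : Finset (ZMod m) => ∑ x ∈ σ, x = s) 3 Finset.univ =
      cnt (fun σ : Finset (ZMod m) => ∑ x ∈ σ, x = r) 3 Finset.univ := by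
    intro s
    have h := cnt_shift (u * (s - r)) s
    rwa [show s - 3 * (u * (s - r)) = r by linear_combination (r - s) * hu] at h
  have h1 : (Finset.powersetCard 3 (Finset.univ : Finset (ZMod m))).card =
      ∑ s ∈ (Finset.univ : Finset (ZMod m)), ((Finset.powersetCard 3 (Finset.univ : Finset (ZMod m))).filter
        (fun σ => ∑ x ∈ σ, x = s)).card :=
    Finset.card_eq_sum_card_fiberwise (fun _ _ => Finset.mem_coe.2 (Finset.mem_univ _))
  rw [Finset.card_powersetCard, Finset.card_univ, ZMod.card] at h1
  rw [h1]
  have h2 : ∀ s ∈ (Finset.univ : Finset (ZMod m)), ((Finset.powersetCard 3 (Finset.univ : Finset (ZMod m))).filter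
        (fun σ => ∑ x ∈ σ, x = s)).card = cnt (fun σ : Finset (ZMod m) => ∑ x ∈ σ, x = r) 3 Finset.univ := by
    intro s _
    rw [← hall s]
    unfold cnt
    congr
  rw [Finset.sum_congr rfl h2, Finset.sum_const, Finset.card_univ, ZMod.card, smul_eq_mul]

/-- the embedding of residues as `1, …, m` -/
def emb (m : ℕ) [NeZero m] : ZMod m ↪ ℤ where
  toFun x := (x.val : ℤ) + 1
  inj' x y h := by
    have : x.val = y.val := by
      have : (x.val : ℤ) + 1 = y.val + 1 := h
      omega
    exact ZMod.val_injective m this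

theorem emb_apply (m : ℕ) [NeZero m] (x : ZMod m) : emb m x = (x.val : ℤ) + 1 := rfl

theorem emb_univ (m : ℕ) [NeZero m] : (Finset.univ : Finset (ZMod m)).map (emb m) = Finset.Icc 1 (m : ℤ) := by
  ext z
  simp only [Finset.mem_map, Finset.mem_univ, true_and, Finset.mem_Icc]
  constructor
  · rintro ⟨x, rfl⟩
    have := ZMod.val_lt x
    rw [emb_apply]
    omega
  · rintro ⟨h1, h2⟩
    refine ⟨((z - 1).toNat : ZMod m), ?_⟩
    rw [emb_apply]
    rw [ZMod.val_natCast_of_lt (by omega)]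
    omega

theorem emb_cast (m : ℕ) [NeZero m] (x : ZMod m) : ((emb m x : ℤ) : ZMod m) = x + 1 := by
  simp [emb_apply]

theorem cnt_B {Q : ℕ} (hQ : 40 ≤ Q) :
    (3 * Q + 1) * cnt (fun σ : Finset ℤ => (3 * (Q : ℤ) + 1) ∣ ∑ x ∈ σ, x ∨ (3 * (Q : ℤ) + 1) ∣ ∑ x ∈ σ, x - 3) 3
      (Finset.Icc 1 (3 * (Q : ℤ) + 1)) = 2 * (3 * Q + 1).choose 3 := by
  set m := 3 * Q + 1 with hm
  have hmz : (m : ℤ) = 3 * (Q : ℤ) + 1 := by simp [hm]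
  have : NeZero m := ⟨by omega⟩
  have h0 : (3 : ZMod m) * Q + 1 = 0 := by
    have h : ((3 * Q + 1 : ℕ) : ZMod m) = 0 := ZMod.natCast_self m
    push_cast at h
    exact h
  have h3 : (3 : ZMod m) ≠ 0 := by
    intro h
    have : ((3 : ℕ) : ZMod m) = 0 := by exact_mod_cast h
    rw [ZMod.natCast_eq_zero_iff] at this
    have := Nat.le_of_dvd (by norm_num) this
    omega
  rw [← hmz, ← emb_univ, cnt_map]
  have key : ∀ σ : Finset (ZMod m), σ.card = 3 →
      (((∑ x ∈ σ.map (emb m), x : ℤ)) : ZMod m) = ∑ x ∈ σ, x + 3 := by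
    intro σ hσ
    rw [Finset.sum_map]
    push_cast
    rw [Finset.sum_congr rfl fun x _ => emb_cast m x, Finset.sum_add_distrib]
    simp [hσ]
  rw [cnt_congr (P' := fun σ : Finset (ZMod m) => ∑ x ∈ σ, x = -3 ∨ ∑ x ∈ σ, x = 0), cnt_or, mul_add,
    cnt_res (-(Q : ZMod m)) (by linear_combination -h0), cnt_res (-(Q : ZMod m)) (by linear_combination -h0)]
  · ring
  · intro σ h1 h2
    rw [h1, neg_eq_zero] at h2
    exact h3 h2
  · intro σ _ hσ
    rw [← ZMod.intCast_zmod_eq_zero_iff_dvd, ← ZMod.intCast_zmod_eq_zero_iff_dvd, Int.cast_sub, key σ hσ]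
    rw [eq_neg_iff_add_eq_zero]
    simp

set_option linter.unusedVariables false
set_option linter.unusedTactic false
set_option linter.unnecessarySeqFocus false

theorem pair_eq_sorted {a b c d : ℤ} (hab : a < b) (hcd : c < d) (h : ({a, b} : Finset ℤ) = {c, d}) :
    a = c ∧ b = d := by
  have h1 : a ∈ ({c, d} : Finset ℤ) := by rw [← h]; simp
  have h2 : b ∈ ({c, d} : Finset ℤ) := by rw [← h]; simp
  have h3 : c ∈ ({a, b} : Finset ℤ) := by rw [h]; simp
  simp only [Finset.mem_insert, Finset.mem_singleton] at h1 h2 h3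
  omega

theorem GI_Xpair {q j k : ℤ} (hq : 40 ≤ q) (hj : InR q j) (hk : InR q k) (hjk : j < k) :
    (GI q (insert (3 * q + 2) {j, k})).Nonempty ↔ (k = j + 3 ∨ (k = j + 3 * q - 2 ∧ j ≠ 2)) := by
  rw [← Xpair_nonempty_iff' hq hj hk hjk, GI_three, G_mid hj, G_mid hk, G_last hq, Set.inter_assoc, Set.inter_comm]

theorem cnt_X {Q : ℕ} (hQ : 40 ≤ Q) :
    cnt (fun τ => (GI Q (insert (3 * (Q : ℤ) + 2) τ)).Nonempty) 2 (Finset.Icc 1 (3 * (Q : ℤ) + 1)) = 3 * Q := by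
  classical
  set q : ℤ := (Q : ℤ) with hqd
  have hq : 40 ≤ q := by omega
  unfold cnt
  have hE : (Finset.powersetCard 2 (Finset.Icc 1 (3 * q + 1))).filter
      (fun τ => (GI q (insert (3 * q + 2) τ)).Nonempty) =
      (Finset.Icc 1 (3 * q - 2)).image (fun j : ℤ => ({j, j + 3} : Finset ℤ)) ∪
        {({1, 3 * q - 1} : Finset ℤ), ({3, 3 * q + 1} : Finset ℤ)} := by
    ext τ
    simp only [Finset.mem_filter, Finset.mem_powersetCard, Finset.mem_union, Finset.mem_image, Finset.mem_Icc,
      Finset.mem_insert, Finset.mem_singleton]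
    constructor
    · rintro ⟨⟨hs, hc⟩, hn⟩
      obtain ⟨j, k, hjk, rfl⟩ := sorted_two hc
      have h1 := Finset.mem_Icc.1 (hs (show j ∈ _ by simp))
      have h2 := Finset.mem_Icc.1 (hs (show k ∈ _ by simp))
      rw [GI_Xpair hq ⟨h1.1, h1.2⟩ ⟨h2.1, h2.2⟩ hjk] at hn
      rcases hn with h | ⟨h, h'⟩
      · left
        exact ⟨j, ⟨h1.1, by omega⟩, by rw [h]⟩
      · right
        have : j = 1 ∨ j = 3 := by omega
        rcases this with rfl | rfl
        · left
          rw [show k = 3 * q - 1 by omega]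
        · right
          rw [show k = 3 * q + 1 by omega]
    · have hA : ∀ j k : ℤ, 1 ≤ j → k ≤ 3 * q + 1 → j < k → (k = j + 3 ∨ (k = j + 3 * q - 2 ∧ j ≠ 2)) →
          ((({j, k} : Finset ℤ) ⊆ Finset.Icc 1 (3 * q + 1) ∧ ({j, k} : Finset ℤ).card = 2) ∧
            (GI q (insert (3 * q + 2) {j, k})).Nonempty) := by
        intro j k h1 h2 h3 h
        refine ⟨⟨?_, Finset.card_pair h3.ne⟩, (GI_Xpair hq ⟨h1, by omega⟩ ⟨by omega, h2⟩ h3).2 h⟩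
        intro z hz
        simp only [Finset.mem_insert, Finset.mem_singleton] at hz
        rw [Finset.mem_Icc]
        omega
      rintro (⟨j, ⟨h1, h2⟩, rfl⟩ | rfl | rfl)
      · exact hA j (j + 3) h1 (by omega) (by omega) (Or.inl rfl)
      · exact hA _ _ (by omega) (by omega) (by omega) (Or.inr ⟨by omega, by omega⟩)
      · exact hA _ _ (by omega) (by omega) (by omega) (Or.inr ⟨by omega, by omega⟩)
  have hcard : ((Finset.Icc 1 (3 * q - 2)).image (fun j : ℤ => ({j, j + 3} : Finset ℤ)) ∪
        {({1, 3 * q - 1} : Finset ℤ), ({3, 3 * q + 1} : Finset ℤ)}).card = 3 * Q := by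
    rw [Finset.card_union_of_disjoint, Finset.card_image_of_injective, Finset.card_pair, Int.card_Icc]
    · omega
    · intro h
      have := pair_eq_sorted (by omega) (by omega) h
      omega
    · intro a b h
      exact (pair_eq_sorted (by omega) (by omega) h).1
    · rw [Finset.disjoint_left]
      intro τ h1 h2
      obtain ⟨j, -, rfl⟩ := Finset.mem_image.1 h1
      simp only [Finset.mem_insert, Finset.mem_singleton] at h2
      rcases h2 with h2 | h2
      · have := pair_eq_sorted (by omega) (by omega) h2
        omega
      · have := pair_eq_sorted (by omega) (by omega) h2
        omega
  rw [← hcard, ← hE]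

theorem cnt_zero {Q : ℕ} (hQ : 40 ≤ Q) :
    cnt (fun τ => (GI Q (insert 0 τ)).Nonempty) 2 (insert (3 * (Q : ℤ) + 2) (Finset.Icc 1 (3 * (Q : ℤ) + 1))) =
      (3 * Q + 2).choose 2 := by
  set q : ℤ := (Q : ℤ) with hqd
  have hq : 40 ≤ q := by omega
  have hI : insert (3 * q + 2) (Finset.Icc 1 (3 * q + 1)) = Finset.Icc 1 (3 * q + 2) := by
    ext z
    simp only [Finset.mem_insert, Finset.mem_Icc]
    omega
  rw [hI, cnt_all, Int.card_Icc]
  · congr 1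
    omega
  · intro σ hs hc
    obtain ⟨j, k, hjk, rfl⟩ := sorted_two hc
    have h1 := Finset.mem_Icc.1 (hs (show j ∈ _ by simp))
    have h2 := Finset.mem_Icc.1 (hs (show k ∈ _ by simp))
    have hj : InR q j := ⟨h1.1, by omega⟩
    rw [GI_three, G_zero, G_mid hj]
    rcases zcases (by omega) h2.2 with h | h | h
    · omega
    · rw [G_mid h, three_eq_0BB hj]
      exact pairK_nonempty hq hj.l hj.u h.l h.u hjk.ne
    · rw [h, G_last hq, three_eq_0BX hj]
      exact (SC_X hq hj).2.nonempty

theorem cnt_total {Q : ℕ} (hQ : 40 ≤ Q) :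
    (3 * Q + 1) * cnt (fun τ => (GI Q τ).Nonempty) 3 (Finset.Icc 0 (3 * (Q : ℤ) + 2)) =
      (3 * Q + 1) * ((3 * Q + 2).choose 2 + 3 * Q) + 2 * (3 * Q + 1).choose 3 := by
  have hq : 40 ≤ (Q : ℤ) := by omega
  have hI : Finset.Icc 0 (3 * (Q : ℤ) + 2) =
      insert 0 (insert (3 * (Q : ℤ) + 2) (Finset.Icc 1 (3 * (Q : ℤ) + 1))) := by
    ext z
    simp only [Finset.mem_insert, Finset.mem_Icc]
    omega
  rw [hI, cnt_insert, cnt_zero hQ, cnt_insert, cnt_X hQ, ← cnt_B hQ]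
  · rw [cnt_congr (P := fun τ => (GI Q τ).Nonempty) (P' := fun σ : Finset ℤ =>
      (3 * (Q : ℤ) + 1) ∣ ∑ x ∈ σ, x ∨ (3 * (Q : ℤ) + 1) ∣ ∑ x ∈ σ, x - 3)]
    · ring
    · intro σ hs hc
      obtain ⟨i, j, k, hij, hjk, rfl⟩ := sorted_three hc
      have h1 := Finset.mem_Icc.1 (hs (show i ∈ _ by simp))
      have h2 := Finset.mem_Icc.1 (hs (show k ∈ _ by simp))
      have a1 : InR Q i := ⟨h1.1, h1.2⟩
      have a2 : InR Q j := ⟨by omega, by omega⟩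
      have a3 : InR Q k := ⟨h2.1, h2.2⟩
      have hsum : ∑ x ∈ ({i, j, k} : Finset ℤ), x = i + j + k := by
        rw [Finset.sum_insert, Finset.sum_pair hjk.ne]
        · ring
        · simp only [Finset.mem_insert, Finset.mem_singleton]
          omega
      rw [GI_three, G_mid a1, G_mid a2, G_mid a3,
        triple_nonempty_iff hq a1 a2 a3 hij.ne (hij.trans hjk).ne hjk.ne, hsum]
  · simp only [Finset.mem_Icc]
    omega
  · simp only [Finset.mem_insert, Finset.mem_Icc]
    omega

/-- the embedding of the index type into the integers -/
def fe (N : ℕ) : Fin N ↪ ℤ where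
  toFun i := (i : ℕ)
  inj' i j h := by
    have : ((i : ℕ) : ℤ) = (j : ℕ) := h
    exact Fin.ext (by omega)

theorem fe_apply (N : ℕ) (i : Fin N) : fe N i = ((i : ℕ) : ℤ) := rfl

theorem fe_univ (Q : ℕ) : (Finset.univ : Finset (Fin (3 * Q + 3))).map (fe _) = Finset.Icc 0 (3 * (Q : ℤ) + 2) := by
  ext z
  simp only [Finset.mem_map, Finset.mem_univ, true_and, Finset.mem_Icc, fe_apply]
  constructor
  · rintro ⟨x, rfl⟩
    omega
  · rintro ⟨h1, h2⟩
    exact ⟨⟨z.toNat, by omega⟩, by simp [h1]⟩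

noncomputable def Bf (Q : ℕ) (i : Fin (3 * Q + 3)) : Set Pl := G Q (fe _ i)

theorem Bf_inter (Q : ℕ) (σ : Finset (Fin (3 * Q + 3))) : (⋂ i ∈ σ, Bf Q i) = GI Q (σ.map (fe _)) := by
  simp [GI, Bf]

theorem fe_sub (Q : ℕ) (σ : Finset (Fin (3 * Q + 3))) : σ.map (fe _) ⊆ Finset.Icc 0 (3 * (Q : ℤ) + 2) := by
  rw [← fe_univ]
  exact Finset.map_subset_map.2 (Finset.subset_univ _)

theorem card_three (Q : ℕ) : Nat.card {σ : Finset (Fin (3 * Q + 3)) // σ.card = 3 ∧ (⋂ i ∈ σ, Bf Q i).Nonempty} =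
    cnt (fun τ => (GI Q τ).Nonempty) 3 (Finset.Icc 0 (3 * (Q : ℤ) + 2)) := by
  classical
  rw [← fe_univ, cnt_map, Nat.card_eq_fintype_card, Fintype.card_subtype]
  unfold cnt
  congr 1
  ext σ
  simp [Bf_inter]

theorem final_arith {Q c : ℕ} (hQ : 1 ≤ Q) (h : (3 * Q + 1) * c =
      (3 * Q + 1) * ((3 * Q + 2).choose 2 + 3 * Q) + 2 * (3 * Q + 1).choose 3) :
    (c : ℝ) = ((3 * Q + 3 - 1).choose 2 : ℝ) + (((3 * Q + 3 : ℕ) : ℝ) ^ 2 - 4 * ((3 * Q + 3 : ℕ) : ℝ) + 3) / 3 := by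
  rw [show 3 * Q + 3 - 1 = 3 * Q + 2 by omega]
  have e : 6 * (3 * Q + 1).choose 3 = (3 * Q + 1) * (3 * Q) * (3 * Q - 1) := by
    have := Nat.descFactorial_eq_factorial_mul_choose (3 * Q + 1) 3
    rw [show Nat.factorial 3 = 6 from rfl] at this
    rw [← this]
    simp [Nat.descFactorial]
    ring
  have e2 : (6 : ℝ) * ((3 * Q + 1).choose 3 : ℝ) = (3 * Q + 1) * (3 * Q) * (3 * Q - 1) := by
    have := congrArg (Nat.cast : ℕ → ℝ) e
    push_cast [Nat.cast_sub (show 1 ≤ 3 * Q by omega)] at this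
    exact this
  have h2 : ((3 : ℝ) * Q + 1) * c = (3 * Q + 1) * (((3 * Q + 2).choose 2 : ℝ) + 3 * Q) + 2 * ((3 * Q + 1).choose 3 : ℝ) := by
    exact_mod_cast h
  have hp : (3 : ℝ) * Q + 1 ≠ 0 := by positivity
  apply mul_left_cancel₀ hp
  rw [h2]
  push_cast
  linear_combination (1 / 3) * e2

/-- **Theorem (construction, sharp version).** For infinitely many `n` there is a family
`ℬ` of `n` open sets in `ℝ²` with all nonempty subfamily intersections path-connected,
`f_3(ℬ) = 0`, `f_2(ℬ) = C(n-1,2) + (n²-4n+3)/3`, all but one of the sets contractible,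
and all nonempty intersections of pairs and triples contractible. -/
theorem construction_lower_bound_sharp :
    ∀ N : ℕ, ∃ n : ℕ, N ≤ n ∧
      ∃ B : Fin n → Set (EuclideanSpace ℝ (Fin 2)),
        (∀ i, IsOpen (B i)) ∧
        (∀ σ : Finset (Fin n), σ.Nonempty →
          (⋂ i ∈ σ, B i) = ∅ ∨ IsPathConnected (⋂ i ∈ σ, B i)) ∧
        fNum B 3 = 0 ∧
        ((fNum B 2 : ℝ) = ((n - 1).choose 2 : ℝ) + ((n : ℝ) ^ 2 - 4 * n + 3) / 3) ∧
        (∃ i₀ : Fin n, ∀ i : Fin n, i ≠ i₀ → ContractibleSpace ↥(B i)) ∧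
        (∀ σ : Finset (Fin n), σ.card = 2 ∨ σ.card = 3 → (⋂ i ∈ σ, B i).Nonempty →
          ContractibleSpace ↥(⋂ i ∈ σ, B i)) := by
  intro N
  set Q : ℕ := max 40 N with hQd
  have hQ : 40 ≤ Q := le_max_left _ _
  have hN : N ≤ Q := le_max_right _ _
  have hq : 40 ≤ (Q : ℤ) := by omega
  refine ⟨3 * Q + 3, by omega, Bf Q, fun i => G_open _ _, ?_, ?_, ?_, ?_, ?_⟩
  · intro σ hσ
    rw [Bf_inter]
    exact GI_pc hq (fe_sub Q σ) (hσ.map)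
  · unfold fNum
    have : IsEmpty {σ : Finset (Fin (3 * Q + 3)) // σ.card = 3 + 1 ∧ (⋂ i ∈ σ, Bf Q i).Nonempty} := by
      refine ⟨?_⟩
      rintro ⟨σ, h1, h2⟩
      rw [Bf_inter, GI_four hq (fe_sub Q σ) (by rw [Finset.card_map]; omega)] at h2
      exact Set.not_nonempty_empty h2
    exact Nat.card_of_isEmpty
  · have h : fNum (Bf Q) 2 = cnt (fun τ => (GI Q τ).Nonempty) 3 (Finset.Icc 0 (3 * (Q : ℤ) + 2)) := card_three Q
    rw [h]
    exact final_arith (by omega) (cnt_total hQ)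
  · refine ⟨⟨0, by omega⟩, fun i hi => ?_⟩
    have h0 : (i : ℕ) ≠ 0 := fun h => hi (Fin.ext h)
    exact single_contr hq (by rw [fe_apply]; omega) (by rw [fe_apply]; omega)
  · intro σ hσ hn
    rw [Bf_inter] at *
    exact GI_contr hq (fe_sub Q σ) (by rwa [Finset.card_map]) hn
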